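/- Let 1 ≤ i₁, i₂ ≤ n²/2 and j₁, j₂ ∈ {0,1} with 2i₁−1 < n²−2i₂+1. Then: (c) if i₁ ≤ i₂, S_{2i₁,j₁}⊗S_{2i₂,j₂} ≅ ⊕_{l=0}^{2i₁−2} S_{n²+2i₁−2i₂−2l, \overline{j₁+j₂+l}} ⊕ ⊕_{l=0}^{n²/2−i₁−i₂} P_{n²−2i₁−2i₂+2−2l, \overline{j₁+j₂+l−1}}; (d) if i₁ > i₂, S_{2i₁,j₁}⊗S_{2i₂,j₂} ≅ ⊕_{l=0}^{2i₂−2} S_{n²−2i₁+2i₂−2l, \overline{j₁+j₂+l}} ⊕ ⊕_{l=0}^{n²/2−i₁−i₂} P_{n²−2i₁−2i₂+2−2l, \overline{j₁+j₂+l−1}}. -/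

import Mathlib

noncomputable section

open scoped TensorProduct

namespace QFL

/-- The defining relations of the quasi-Frobenius-Lusztig kernel `ũ_q(sl₂)`,
on the free algebra on four generators `K = ι 0`, `K̂ = ι 1`, `E = ι 2`, `F = ι 3`. -/
inductive Rel (k : Type) [Field k] (n : ℕ) (q : k) :
    FreeAlgebra k (Fin 4) → FreeAlgebra k (Fin 4) → Prop
  | Kord : Rel k n q (FreeAlgebra.ι k (0 : Fin 4) ^ n) 1
  | Khord : Rel k n q (FreeAlgebra.ι k (1 : Fin 4) ^ n)
      ((FreeAlgebra.ι k (0 : Fin 4) ^ (n - 1)) ^ 2)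
  | KKh : Rel k n q (FreeAlgebra.ι k (0 : Fin 4) * FreeAlgebra.ι k (1 : Fin 4))
      (FreeAlgebra.ι k (1 : Fin 4) * FreeAlgebra.ι k (0 : Fin 4))
  | KE : Rel k n q
      (FreeAlgebra.ι k (0 : Fin 4) * FreeAlgebra.ι k (2 : Fin 4) *
        FreeAlgebra.ι k (0 : Fin 4) ^ (n - 1))
      (q ^ n • FreeAlgebra.ι k (2 : Fin 4))
  | KF : Rel k n q
      (FreeAlgebra.ι k (0 : Fin 4) * FreeAlgebra.ι k (3 : Fin 4) *
        FreeAlgebra.ι k (0 : Fin 4) ^ (n - 1))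
      ((q ^ n)⁻¹ • FreeAlgebra.ι k (3 : Fin 4))
  | KhE : Rel k n q
      (FreeAlgebra.ι k (1 : Fin 4) * FreeAlgebra.ι k (2 : Fin 4) *
        FreeAlgebra.ι k (1 : Fin 4) ^ (n ^ 2 - 1))
      ((q ^ n * (q ^ 2)⁻¹) • FreeAlgebra.ι k (2 : Fin 4))
  | KhF : Rel k n q
      (FreeAlgebra.ι k (1 : Fin 4) * FreeAlgebra.ι k (3 : Fin 4) *
        FreeAlgebra.ι k (1 : Fin 4) ^ (n ^ 2 - 1))
      (((q ^ n)⁻¹ * q ^ 2) • FreeAlgebra.ι k (3 : Fin 4))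
  | Enil : Rel k n q (FreeAlgebra.ι k (2 : Fin 4) ^ n ^ 2) 0
  | Fnil : Rel k n q (FreeAlgebra.ι k (3 : Fin 4) ^ n ^ 2) 0
  | EF : Rel k n q
      (FreeAlgebra.ι k (3 : Fin 4) * FreeAlgebra.ι k (2 : Fin 4) -
        q⁻¹ • (FreeAlgebra.ι k (2 : Fin 4) * FreeAlgebra.ι k (3 : Fin 4)))
      (1 - FreeAlgebra.ι k (0 : Fin 4) ^ (n - 1) * FreeAlgebra.ι k (1 : Fin 4))

/-- The algebra `ũ_q(sl₂)` as the quotient of the free algebra by the defining relations. -/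
abbrev U (k : Type) [Field k] (n : ℕ) (q : k) := RingQuot (Rel k n q)

variable (k : Type) [Field k] (n : ℕ) (q : k)

def K : U k n q := RingQuot.mkAlgHom k (Rel k n q) (FreeAlgebra.ι k (0 : Fin 4))
def Kh : U k n q := RingQuot.mkAlgHom k (Rel k n q) (FreeAlgebra.ι k (1 : Fin 4))
def E : U k n q := RingQuot.mkAlgHom k (Rel k n q) (FreeAlgebra.ι k (2 : Fin 4))
def F : U k n q := RingQuot.mkAlgHom k (Rel k n q) (FreeAlgebra.ι k (3 : Fin 4))

/-- `K⁻¹ = K^(n-1)`. -/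
def Kinv : U k n q := K k n q ^ (n - 1)
/-- `K̂⁻¹ = K̂^(n²-1)`. -/
def Khinv : U k n q := Kh k n q ^ (n ^ 2 - 1)

/-- `φ_{2i} = (2/n²) Σ_{t<n²/2} q^{-2it} (K⁻¹K̂)^t`. -/
def phi (i : ℕ) : U k n q :=
  ((n ^ 2 : k)⁻¹ * 2) • ∑ t ∈ Finset.range (n ^ 2 / 2),
    (q⁻¹ ^ (2 * i * t)) • (Kinv k n q * Kh k n q) ^ t

/-- `𝟙₀ = (1/2)(1 + KK̂^(n/2))` and `𝟙₁ = (1/2)(1 - KK̂^(n/2))`. -/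
def oneJ (j : ℕ) : U k n q :=
  if j = 0 then (2 : k)⁻¹ • (1 + K k n q * Kh k n q ^ (n / 2))
  else (2 : k)⁻¹ • (1 - K k n q * Kh k n q ^ (n / 2))

/-- The idempotent `e_{2i,j} = φ_{2i} 𝟙_j`. -/
def eIdem (i j : ℕ) : U k n q := phi k n q i * oneJ k n q j

/-- `α_{2i,j} = F^(n²-1) e_{2i,j}`. -/
def alpha (i j : ℕ) : U k n q := F k n q ^ (n ^ 2 - 1) * eIdem k n q i j

/-- `β_{2i,j} = E^(2i-2) α_{2i,j}`. -/
def beta (i j : ℕ) : U k n q := E k n q ^ (2 * i - 2) * alpha k n q i j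

/-- The Gaussian number `s_q = 1 + q + ⋯ + q^(s-1)`. -/
def gauss (x : k) (s : ℕ) : k := ∑ t ∈ Finset.range s, x ^ t

/-- The span of the PBW-type monomials `F^a K^c K̂^d E^b` with `a ≤ n²-2`, `b ≤ n²-1`,
`c ≤ n-1`, `d ≤ n²-1`. -/
def pbw : Submodule k (U k n q) :=
  Submodule.span k {x | ∃ a b c d : ℕ, a ≤ n ^ 2 - 2 ∧ b ≤ n ^ 2 - 1 ∧ c ≤ n - 1 ∧
    d ≤ n ^ 2 - 1 ∧ x = F k n q ^ a * K k n q ^ c * Kh k n q ^ d * E k n q ^ b}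

/-- `γ_{2i,j}`: the unique element of the PBW span with `F·γ = β_{2i,j}`. -/
def gam (i j : ℕ) : U k n q :=
  @dite _ (∃! x, x ∈ pbw k n q ∧ F k n q * x = beta k n q i j)
    (Classical.propDecidable _) (fun h => h.choose) (fun _ => 0)

/-- The left ideal `P_{2i,j} = u·γ_{2i,j}`. -/
def P (i j : ℕ) : Submodule (U k n q) (U k n q) :=
  Submodule.span (U k n q) {gam k n q i j}

/-- `S_{2i,j} = Soc(P_{2i,j})`, the sum of all simple submodules of `P_{2i,j}`. -/
def S (i j : ℕ) : Submodule (U k n q) (U k n q) :=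
  sSup {N : Submodule (U k n q) (U k n q) | N ≤ P k n q i j ∧ IsSimpleModule (U k n q) N}

end QFL

namespace QFL

variable (k : Type) [Field k] (n : ℕ) (q : k)

/-- `1_r = (1/n) Σ_{t<n} q̄^{(n-r)t} K^t`. -/
def oneIdem (r : ℕ) : U k n q :=
  (n : k)⁻¹ • ∑ t ∈ Finset.range n, ((q ^ n) ^ ((n - r) * t)) • K k n q ^ t

/-- `♭ = Σ_{r<n} q^{-r} 1_r` (an invertible element of `u`). -/
def flat : U k n q := ∑ r ∈ Finset.range n, (q⁻¹ ^ r) • oneIdem k n q r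

/-- The property that `Δ` is the comultiplication of `ũ_q(sl₂)` (which exists and is the
unique algebra map with these values on the generators). -/
def IsComul (Δ : U k n q →ₐ[k] (U k n q ⊗[k] U k n q)) : Prop :=
  Δ (K k n q) = K k n q ⊗ₜ[k] K k n q ∧
  Δ (Kh k n q) = Kh k n q ⊗ₜ[k] Kh k n q ∧
  Δ (E k n q) = (E k n q ⊗ₜ[k] Ring.inverse (flat k n q)) +
    (Kinv k n q ⊗ₜ[k] (oneIdem k n q 0 * E k n q)) +
    ((1 : U k n q) ⊗ₜ[k] ((∑ r ∈ Finset.Icc 1 (n - 1), oneIdem k n q r) * E k n q)) ∧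
  Δ (F k n q) = (F k n q ⊗ₜ[k] flat k n q) +
    ((Kinv k n q * Kh k n q) ⊗ₜ[k]
      (F k n q * ∑ r ∈ Finset.Icc 1 (n - 1), oneIdem k n q r)) +
    (Kh k n q ⊗ₜ[k] (F k n q * oneIdem k n q 0))

instance (N : Submodule (U k n q) (U k n q)) : SMulCommClass (U k n q) k N := by
  constructor
  intro a b m
  ext
  show a • b • (m : U k n q) = b • a • (m : U k n q)
  rw [smul_comm]

/-- The `u`-module structure on `M ⊗[k] N` obtained from left `u`-modules `M`, `N` by letting
`u` act through the comultiplication `Δ`. -/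
def tensorModule (Δ : U k n q →ₐ[k] (U k n q ⊗[k] U k n q))
    (M N : Type) [AddCommGroup M] [Module k M] [Module (U k n q) M]
    [IsScalarTower k (U k n q) M] [SMulCommClass (U k n q) k M]
    [AddCommGroup N] [Module k N] [Module (U k n q) N]
    [IsScalarTower k (U k n q) N] [SMulCommClass (U k n q) k N] :
    Module (U k n q) (M ⊗[k] N) :=
  Module.compHom (M ⊗[k] N)
    ((Module.endTensorEndAlgHom (R := k) (S := k) (A := k) (M := M) (N := N)).comp
      ((Algebra.TensorProduct.map (Algebra.lsmul k k M) (Algebra.lsmul k k N)).comp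
        Δ)).toRingHom

end QFL


namespace QFL

/-- The standing hypotheses on `n` and `q`. -/
structure Good (k : Type) [Field k] (n : ℕ) (q : k) : Prop where
  pos : 0 < n
  four : 4 ∣ n
  prim : IsPrimitiveRoot q (n ^ 2)

section Basic

variable (k : Type) [Field k] (n : ℕ) (q : k)

/-- `g = K⁻¹K̂`. -/
def gg : U k n q := Kinv k n q * Kh k n q
/-- `h = K K̂^(n/2)`. -/
def hh : U k n q := K k n q * Kh k n q ^ (n / 2)

variable {k n q}

theorem rel_K : K k n q ^ n = 1 := by
  simpa [K, map_pow] using RingQuot.mkAlgHom_rel k (Rel.Kord (k := k) (n := n) (q := q))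

theorem rel_Kh : Kh k n q ^ n = Kinv k n q ^ 2 := by
  simpa [K, Kh, Kinv, map_pow] using RingQuot.mkAlgHom_rel k (Rel.Khord (k := k) (n := n) (q := q))

theorem rel_KKh : K k n q * Kh k n q = Kh k n q * K k n q := by
  simpa [K, Kh, map_mul] using RingQuot.mkAlgHom_rel k (Rel.KKh (k := k) (n := n) (q := q))

theorem comm_KKh : Commute (K k n q) (Kh k n q) := rel_KKh

theorem rel_KE0 : K k n q * E k n q * K k n q ^ (n - 1) = q ^ n • E k n q := by
  simpa [K, E, map_mul, map_pow] using RingQuot.mkAlgHom_rel k (Rel.KE (k := k) (n := n) (q := q))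

theorem rel_KF0 : K k n q * F k n q * K k n q ^ (n - 1) = (q ^ n)⁻¹ • F k n q := by
  simpa [K, F, map_mul, map_pow] using RingQuot.mkAlgHom_rel k (Rel.KF (k := k) (n := n) (q := q))

theorem rel_KhE0 : Kh k n q * E k n q * Kh k n q ^ (n ^ 2 - 1) = (q ^ n * (q ^ 2)⁻¹) • E k n q := by
  have := RingQuot.mkAlgHom_rel k (Rel.KhE (k := k) (n := n) (q := q))
  simpa only [Kh, E, map_mul, map_pow, map_smul] using this

theorem rel_KhF0 : Kh k n q * F k n q * Kh k n q ^ (n ^ 2 - 1) = ((q ^ n)⁻¹ * q ^ 2) • F k n q := by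
  have := RingQuot.mkAlgHom_rel k (Rel.KhF (k := k) (n := n) (q := q))
  simpa only [Kh, F, map_mul, map_pow, map_smul] using this

theorem rel_En : E k n q ^ n ^ 2 = 0 := by
  simpa [E, map_pow] using RingQuot.mkAlgHom_rel k (Rel.Enil (k := k) (n := n) (q := q))

theorem rel_Fn : F k n q ^ n ^ 2 = 0 := by
  simpa [F, map_pow] using RingQuot.mkAlgHom_rel k (Rel.Fnil (k := k) (n := n) (q := q))

theorem rel_FE : F k n q * E k n q = q⁻¹ • (E k n q * F k n q) + (1 - gg k n q) := by
  have := RingQuot.mkAlgHom_rel k (Rel.EF (k := k) (n := n) (q := q))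
  simp only [map_sub, map_mul, map_smul, map_one, map_pow] at this
  rw [gg, Kinv, K, Kh, F, E, ← this]
  abel

theorem pow_E_eq_zero {s : ℕ} (hs : n ^ 2 ≤ s) : E k n q ^ s = 0 := by
  rw [← Nat.add_sub_cancel' hs, pow_add, rel_En, zero_mul]

namespace Good

theorem q_ne (H : Good k n q) : q ≠ 0 := H.prim.ne_zero (by have := H.pos; positivity)

theorem four_le (H : Good k n q) : 4 ≤ n := Nat.le_of_dvd H.pos H.four

theorem sixteen (H : Good k n q) : 16 ∣ n ^ 2 := by
  obtain ⟨m, rfl⟩ := H.four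
  exact ⟨m ^ 2, by ring⟩

theorem sixteen_le (H : Good k n q) : 16 ≤ n ^ 2 := by
  have := H.four_le
  nlinarith

theorem q_pow_N (H : Good k n q) : q ^ n ^ 2 = 1 := H.prim.pow_eq_one

theorem q_pow_half (H : Good k n q) : q ^ (n ^ 2 / 2) = -1 := by
  have h1 : (q ^ (n ^ 2 / 2)) ^ 2 = 1 := by
    rw [← pow_mul, Nat.div_mul_cancel, H.q_pow_N]
    exact dvd_trans (by norm_num) H.sixteen
  have h2 : q ^ (n ^ 2 / 2) ≠ 1 := by
    apply H.prim.pow_ne_one_of_pos_of_lt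
    · have := H.sixteen_le; omega
    · have := H.sixteen_le; omega
  rcases sq_eq_one_iff.mp h1 with h | h
  · exact absurd h h2
  · exact h

theorem q_ne_one (H : Good k n q) : q ≠ 1 := by
  apply H.prim.ne_one
  have := H.sixteen_le; omega

theorem KKinv (H : Good k n q) : K k n q * Kinv k n q = 1 := by
  rw [Kinv, ← pow_succ', Nat.sub_add_cancel H.pos, rel_K]

theorem KinvK (H : Good k n q) : Kinv k n q * K k n q = 1 := by
  rw [Kinv, ← pow_succ, Nat.sub_add_cancel H.pos, rel_K]

theorem Kh_pow : Kh k n q ^ n ^ 2 = 1 := by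
  rw [sq, pow_mul, rel_Kh, Kinv, ← pow_mul, ← pow_mul,
    show (n - 1) * (2 * n) = n * ((n - 1) * 2) by ring, pow_mul, rel_K, one_pow]

theorem Kh_cancel (H : Good k n q) : Kh k n q ^ (n ^ 2 - 1) * Kh k n q = 1 := by
  rw [← pow_succ, Nat.sub_add_cancel (by have := H.sixteen_le; omega), Kh_pow]

theorem KE (H : Good k n q) : K k n q * E k n q = q ^ n • (E k n q * K k n q) := by
  have h := congrArg (· * K k n q) (rel_KE0 (k := k) (n := n) (q := q))
  have h2 := H.KinvK
  rw [Kinv] at h2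
  simpa only [mul_assoc, h2, mul_one, smul_mul_assoc] using h

theorem KF (H : Good k n q) : K k n q * F k n q = (q ^ n)⁻¹ • (F k n q * K k n q) := by
  have h := congrArg (· * K k n q) (rel_KF0 (k := k) (n := n) (q := q))
  have h2 := H.KinvK
  rw [Kinv] at h2
  simpa only [mul_assoc, h2, mul_one, smul_mul_assoc] using h

theorem KhE (H : Good k n q) : Kh k n q * E k n q = (q ^ n * (q ^ 2)⁻¹) • (E k n q * Kh k n q) := by
  have h := congrArg (· * Kh k n q) (rel_KhE0 (k := k) (n := n) (q := q))
  simpa only [mul_assoc, H.Kh_cancel, mul_one, smul_mul_assoc] using h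

theorem KhF (H : Good k n q) : Kh k n q * F k n q = ((q ^ n)⁻¹ * q ^ 2) • (F k n q * Kh k n q) := by
  have h := congrArg (· * Kh k n q) (rel_KhF0 (k := k) (n := n) (q := q))
  simpa only [mul_assoc, H.Kh_cancel, mul_one, smul_mul_assoc] using h

theorem qcomm_pow {A : Type} [Ring A] [Algebra k A] {x y : A} {c : k} (h : x * y = c • (y * x)) (m : ℕ) :
    x ^ m * y = c ^ m • (y * x ^ m) := by
  induction m with
  | zero => simp
  | succ m ih =>
    rw [pow_succ, mul_assoc, h, mul_smul_comm, ← mul_assoc, ih, smul_mul_assoc, smul_smul, mul_assoc,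
      pow_succ, mul_comm]

theorem qcomm_mul {A : Type} [Ring A] [Algebra k A] {x x' y : A} {c c' : k} (h : x * y = c • (y * x))
    (h' : x' * y = c' • (y * x')) : (x * x') * y = (c * c') • (y * (x * x')) := by
  rw [mul_assoc, h', mul_smul_comm, ← mul_assoc, h, smul_mul_assoc, smul_smul, mul_assoc, mul_comm]

theorem qn_pow (H : Good k n q) : (q ^ n) ^ (n - 1) = (q ^ n)⁻¹ := by
  have hq := H.q_ne
  apply eq_inv_of_mul_eq_one_left
  rw [← pow_succ, Nat.sub_add_cancel H.pos, ← pow_mul,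
    ← sq, H.q_pow_N]

theorem KinvE (H : Good k n q) : Kinv k n q * E k n q = (q ^ n)⁻¹ • (E k n q * Kinv k n q) := by
  rw [Kinv, qcomm_pow H.KE, H.qn_pow]

theorem KinvF (H : Good k n q) : Kinv k n q * F k n q = q ^ n • (F k n q * Kinv k n q) := by
  rw [Kinv, qcomm_pow H.KF, inv_pow, H.qn_pow, inv_inv]

theorem gE (H : Good k n q) : gg k n q * E k n q = (q⁻¹ ^ 2) • (E k n q * gg k n q) := by
  have hq := H.q_ne
  rw [gg, qcomm_mul H.KinvE H.KhE]
  congr 1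
  field_simp

theorem gF (H : Good k n q) : gg k n q * F k n q = (q ^ 2) • (F k n q * gg k n q) := by
  have hq := H.q_ne
  rw [gg, qcomm_mul H.KinvF H.KhF]
  congr 1
  field_simp

theorem half_scal (H : Good k n q) : q ^ n * (q ^ n * (q ^ 2)⁻¹) ^ (n / 2) = -1 := by
  have hq := H.q_ne
  obtain ⟨m, rfl⟩ := H.four
  have e : q ^ (8 * m ^ 2) = -1 := by
    rw [← H.q_pow_half]; congr 1
    rw [show (4 * m) ^ 2 = 2 * (8 * m ^ 2) by ring]; omega
  have : 4 * m / 2 = 2 * m := by omega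
  rw [this, mul_pow, inv_pow, ← pow_mul, ← pow_mul]
  rw [show 4 * m * (2 * m) = 8 * m ^ 2 by ring, e]
  field_simp
  ring

theorem hE (H : Good k n q) : hh k n q * E k n q = (-1 : k) • (E k n q * hh k n q) := by
  rw [hh, qcomm_mul H.KE (qcomm_pow H.KhE _), H.half_scal]

theorem hF (H : Good k n q) : hh k n q * F k n q = (-1 : k) • (F k n q * hh k n q) := by
  rw [hh, qcomm_mul H.KF (qcomm_pow H.KhF _)]
  congr 1
  have := congrArg (·⁻¹) H.half_scal
  rw [mul_inv, ← inv_pow (q ^ n * (q ^ 2)⁻¹), mul_inv (q ^ n), inv_inv] at this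
  rw [this]; norm_num

theorem comm_KinvKh : Commute (Kinv k n q) (Kh k n q) := comm_KKh.pow_left _

theorem comm_KKinv : Commute (K k n q) (Kinv k n q) := (Commute.refl _).pow_right _

theorem comm_gh : Commute (gg k n q) (hh k n q) := by
  unfold gg hh
  refine Commute.mul_right (Commute.mul_left comm_KKinv.symm comm_KKh.symm) ?_
  exact (Commute.mul_left comm_KinvKh (Commute.refl _)).pow_right _

theorem h_sq (H : Good k n q) : hh k n q ^ 2 = 1 := by
  rw [hh, Commute.mul_pow (comm_KKh.pow_right _), ← pow_mul,
    Nat.div_mul_cancel (dvd_trans (by norm_num) H.four), rel_Kh,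
    ← Commute.mul_pow comm_KKinv, H.KKinv, one_pow]

theorem g_pow (H : Good k n q) : gg k n q ^ (n ^ 2 / 2) = 1 := by
  have h2 : n ^ 2 / 2 = n * (n / 2) := by
    rw [sq, Nat.mul_div_assoc]; exact dvd_trans (by norm_num) H.four
  rw [gg, Commute.mul_pow comm_KinvKh, h2]
  nth_rewrite 2 [pow_mul]
  rw [rel_Kh, ← pow_mul, Nat.mul_div_cancel' (dvd_trans (by norm_num) H.four), ← pow_add, Kinv,
    ← pow_mul, mul_comm, show (n * (n / 2) + n) = n * (n / 2 + 1) by ring, mul_assoc, pow_mul, rel_K,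
    one_pow]

/-- `g^(n/2) K^(1+n/2) = h`. -/
theorem g_pow_mul_K (H : Good k n q) : gg k n q ^ (n / 2) * K k n q ^ (1 + n / 2) = hh k n q := by
  rw [gg, Commute.mul_pow comm_KinvKh, hh, add_comm, pow_succ, mul_assoc,
    ((comm_KKh.pow_pow (n / 2) (n / 2)).mul_left (comm_KKh.pow_right (n / 2))).symm.eq,
    mul_assoc, ← mul_assoc, ← Commute.mul_pow comm_KKinv.symm, H.KinvK, one_pow, one_mul]

theorem K_pow_sq (H : Good k n q) : (K k n q ^ (1 + n / 2)) ^ (1 + n / 2) = K k n q := by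
  obtain ⟨m, rfl⟩ := H.four
  have : 4 * m / 2 = 2 * m := by omega
  rw [this, ← pow_mul, show (1 + 2 * m) * (1 + 2 * m) = 4 * m * (1 + m) + 1 by ring, pow_succ, pow_mul,
    rel_K, one_pow, one_mul]

theorem g_mul_K (H : Good k n q) : gg k n q * K k n q = Kh k n q := by
  rw [gg, mul_assoc, comm_KKh.symm.eq, ← mul_assoc, H.KinvK, one_mul]

end Good

end Basic

section Mod

variable {k : Type} [Field k] {n : ℕ} {q : k}
variable {M : Type} [AddCommGroup M] [Module k M] [Module (U k n q) M]
  [IsScalarTower k (U k n q) M]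

/-- `x` is a weight vector: `g x = a x`, `h x = b x`. -/
def IsWt (n : ℕ) (q : k) [Module (U k n q) M] (a b : k) (x : M) : Prop :=
  gg k n q • x = a • x ∧ hh k n q • x = b • x

theorem pow_smul_eig {u : U k n q} {a : k} {x : M} (h : u • x = a • x) (m : ℕ) :
    u ^ m • x = a ^ m • x := by
  induction m with
  | zero => simp
  | succ m ih => rw [pow_succ, mul_smul, h, smul_comm, ih, smul_smul, pow_succ, mul_comm]

/-- the `K`-eigenvalue of a vector of weight `(a,b)` -/
def kap (n : ℕ) (a b : k) : k := ((a ^ (n / 2))⁻¹ * b) ^ (1 + n / 2)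

theorem Good.K_smul (H : Good k n q) {a b : k} {x : M} (ha : a ≠ 0) (hx : IsWt n q a b x) :
    K k n q • x = kap n a b • x := by
  have h1 : K k n q ^ (1 + n / 2) • x = ((a ^ (n / 2))⁻¹ * b) • x := by
    have hc : Commute (gg k n q ^ (n / 2)) (K k n q ^ (1 + n / 2)) := by
      apply Commute.pow_pow
      exact Commute.mul_left Good.comm_KKinv.symm comm_KKh.symm
    have h2 := hx.2
    rw [← H.g_pow_mul_K, hc.eq, mul_smul, pow_smul_eig hx.1, smul_comm] at h2
    rw [mul_smul, ← h2, smul_smul, inv_mul_cancel₀ (pow_ne_zero _ ha), one_smul]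
  have h3 := pow_smul_eig h1 (1 + n / 2)
  rwa [H.K_pow_sq] at h3

theorem Good.Kh_smul (H : Good k n q) {a b : k} {x : M} (ha : a ≠ 0) (hx : IsWt n q a b x) :
    Kh k n q • x = (a * kap n a b) • x := by
  rw [← H.g_mul_K, mul_smul, H.K_smul ha hx, smul_comm, hx.1, smul_smul, mul_comm]

theorem Good.wtE (H : Good k n q) {a b : k} {x : M} (hx : IsWt n q a b x) :
    IsWt n q (a * q⁻¹ ^ 2) (-b) (E k n q • x) := by
  constructor
  · rw [← mul_smul, H.gE, smul_assoc, mul_smul, hx.1, smul_comm (E k n q), smul_smul, mul_comm]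
  · rw [← mul_smul, H.hE, smul_assoc, mul_smul, hx.2, smul_comm (E k n q), smul_smul, neg_one_mul]

theorem Good.wtF (H : Good k n q) {a b : k} {x : M} (hx : IsWt n q a b x) :
    IsWt n q (a * q ^ 2) (-b) (F k n q • x) := by
  constructor
  · rw [← mul_smul, H.gF, smul_assoc, mul_smul, hx.1, smul_comm (F k n q), smul_smul, mul_comm]
  · rw [← mul_smul, H.hF, smul_assoc, mul_smul, hx.2, smul_comm (F k n q), smul_smul, neg_one_mul]

theorem Good.wtEpow (H : Good k n q) {a b : k} {x : M} (hx : IsWt n q a b x) (s : ℕ) :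
    IsWt n q (a * q⁻¹ ^ (2 * s)) ((-1) ^ s * b) (E k n q ^ s • x) := by
  induction s with
  | zero => simpa using hx
  | succ s ih =>
    rw [pow_succ' (E k n q), mul_smul]
    convert H.wtE ih using 1
    · ring
    · ring

theorem Good.wtFpow (H : Good k n q) {a b : k} {x : M} (hx : IsWt n q a b x) (s : ℕ) :
    IsWt n q (a * q ^ (2 * s)) ((-1) ^ s * b) (F k n q ^ s • x) := by
  induction s with
  | zero => simpa using hx
  | succ s ih =>
    rw [pow_succ' (F k n q), mul_smul]
    convert H.wtF ih using 1
    · ring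
    · ring

/-- The structure constant in `F E^s x = q^{-s} E^s F x + cc s a E^{s-1} x`. -/
def cc (q : k) (s : ℕ) (a : k) : k := (1 - q⁻¹)⁻¹ * ((1 - q⁻¹ ^ s) * (1 - q * q⁻¹ ^ s * a))

theorem cc_zero (a : k) : cc q 0 a = 0 := by simp [cc]

theorem Good.one_sub_ne (H : Good k n q) : (1 - q⁻¹) ≠ 0 := by
  have := H.q_ne_one
  intro h
  apply this
  have h2 : q⁻¹ = 1 := (sub_eq_zero.mp h).symm
  simpa using h2

theorem Good.cc_succ (H : Good k n q) (s : ℕ) (a : k) :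
    cc q (s + 1) a = q⁻¹ * cc q s a + (1 - q⁻¹ ^ (2 * s) * a) := by
  have h := H.one_sub_ne
  have hq := H.q_ne
  unfold cc
  have h3 : (1 - q⁻¹ ^ (2 * s) * a) = (1 - q⁻¹)⁻¹ * ((1 - q⁻¹) * (1 - q⁻¹ ^ (2 * s) * a)) := by
    rw [← mul_assoc, inv_mul_cancel₀ h, one_mul]
  rw [h3, mul_left_comm q⁻¹, ← mul_add]
  congr 1
  have h4 : q * q⁻¹ = 1 := mul_inv_cancel₀ hq
  rw [pow_succ, mul_comm 2 s, pow_mul]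
  generalize q⁻¹ ^ s = y
  generalize q⁻¹ = w at *
  linear_combination (-(1 - y * w) * y * a + (1 - y) * y * a) * h4

theorem Good.FE_pow (H : Good k n q) {a b : k} {x : M} (hx : IsWt n q a b x) (s : ℕ) :
    F k n q • E k n q ^ s • x
      = q⁻¹ ^ s • E k n q ^ s • F k n q • x + cc q s a • E k n q ^ (s - 1) • x := by
  induction s with
  | zero => simp [cc_zero]
  | succ s ih =>
    have e1 : F k n q • E k n q ^ (s + 1) • x = (F k n q * E k n q) • E k n q ^ s • x := by
      rw [pow_succ', mul_smul, mul_smul]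
    have e2 : cc q s a • E k n q • E k n q ^ (s - 1) • x = cc q s a • E k n q ^ s • x := by
      rcases s with _ | s
      · simp [cc_zero]
      · rw [← mul_smul (E k n q), ← pow_succ', Nat.add_sub_cancel]
    rw [e1, rel_FE, add_smul, smul_assoc, mul_smul, ih, sub_smul, one_smul, (H.wtEpow hx s).1,
      H.cc_succ, smul_add, smul_comm (E k n q) (q⁻¹ ^ s), smul_comm (E k n q) (cc q s a), e2,
      Nat.add_sub_cancel, pow_succ' (E k n q), mul_smul (E k n q)]
    generalize E k n q • E k n q ^ s • F k n q • x = y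
    generalize E k n q ^ s • x = z
    module

theorem Good.cc_eq_zero (H : Good k n q) {s : ℕ} {e : ℕ} :
    cc q s (q ^ e) = 0 ↔ n ^ 2 ∣ s ∨ (q ^ s = q ^ (e + 1)) := by
  have hq := H.q_ne
  unfold cc
  rw [mul_eq_zero, mul_eq_zero, inv_eq_zero, or_iff_right H.one_sub_ne]
  apply or_congr
  · rw [sub_eq_zero, eq_comm, inv_pow, inv_eq_one, H.prim.pow_eq_one_iff_dvd]
  · rw [sub_eq_zero]
    rw [inv_pow, pow_succ]
    have := pow_ne_zero s hq
    constructor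
    · intro h
      field_simp at h
      rw [h]; ring
    · intro h
      field_simp
      rw [h]; ring

/-- A `k`-subspace stable under the generators is stable under `u`. -/
theorem stable_of_gens (A : Submodule k M) (hK : ∀ x ∈ A, K k n q • x ∈ A)
    (hKh : ∀ x ∈ A, Kh k n q • x ∈ A) (hE : ∀ x ∈ A, E k n q • x ∈ A)
    (hF : ∀ x ∈ A, F k n q • x ∈ A) (u : U k n q) : ∀ x ∈ A, u • x ∈ A := by
  obtain ⟨y, rfl⟩ := RingQuot.mkAlgHom_surjective k (Rel k n q) u
  induction y using FreeAlgebra.induction with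
  | grade0 r =>
    intro x hx
    rw [AlgHom.commutes, algebraMap_smul]
    exact A.smul_mem r hx
  | grade1 i =>
    fin_cases i
    · exact hK
    · exact hKh
    · exact hE
    · exact hF
  | mul a b ha hb =>
    intro x hx
    rw [map_mul, mul_smul]
    exact ha _ (hb _ hx)
  | add a b ha hb =>
    intro x hx
    rw [map_add, add_smul]
    exact A.add_mem (ha _ hx) (hb _ hx)

variable {M' : Type} [AddCommGroup M'] [Module k M'] [Module (U k n q) M']
  [IsScalarTower k (U k n q) M']

/-- A `k`-linear map commuting with the generators is `u`-linear. -/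
theorem equivariant_of_gens (f : M →ₗ[k] M') (hK : ∀ x, f (K k n q • x) = K k n q • f x)
    (hKh : ∀ x, f (Kh k n q • x) = Kh k n q • f x)
    (hE : ∀ x, f (E k n q • x) = E k n q • f x)
    (hF : ∀ x, f (F k n q • x) = F k n q • f x) (u : U k n q) : ∀ x, f (u • x) = u • f x := by
  obtain ⟨y, rfl⟩ := RingQuot.mkAlgHom_surjective k (Rel k n q) u
  induction y using FreeAlgebra.induction with
  | grade0 r => intro x; simp
  | grade1 i =>
    fin_cases i
    · exact hK
    · exact hKh
    · exact hE
    · exact hF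
  | mul a b ha hb => intro x; rw [map_mul, mul_smul, ha, hb, mul_smul]
  | add a b ha hb => intro x; rw [map_add, add_smul, map_add, ha, hb, add_smul]

end Mod

end QFL


namespace QFL

section Rep

variable (k : Type) [Field k] (n : ℕ)

/-- The underlying space of the auxiliary (PBW) representation. -/
abbrev WW := (Fin (n ^ 2) × Fin (n ^ 2)) →₀ k

variable {k}

/-- The basis vector `F^a E^b w`. -/
def mm (a b : ℕ) : WW k n :=
  if h : a < n ^ 2 ∧ b < n ^ 2 then Finsupp.single (⟨a, h.1⟩, ⟨b, h.2⟩) 1 else 0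

theorem mm_zero_left {a : ℕ} (h : n ^ 2 ≤ a) (b : ℕ) : mm (k := k) n a b = 0 := by
  rw [mm, dif_neg]; omega

theorem mm_zero_right {b : ℕ} (h : n ^ 2 ≤ b) (a : ℕ) : mm (k := k) n a b = 0 := by
  rw [mm, dif_neg]; omega

theorem mm_eq (p : Fin (n ^ 2) × Fin (n ^ 2)) : mm (k := k) n p.1 p.2 = Finsupp.single p 1 := by
  rw [mm, dif_pos ⟨p.1.2, p.2.2⟩]

variable {n}

theorem ext_mm {X : Type} [AddCommGroup X] [Module k X] {f g : WW k n →ₗ[k] X}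
    (h : ∀ a b, f (mm n a b) = g (mm n a b)) : f = g := by
  apply Finsupp.lhom_ext'
  intro p
  ext
  simp only [LinearMap.comp_apply, Finsupp.lsingle_apply]
  rw [← mm_eq, h]

/-- The linear map with prescribed values on the basis. -/
def op {X : Type} [AddCommGroup X] [Module k X] (f : ℕ → ℕ → X) : WW k n →ₗ[k] X :=
  Finsupp.linearCombination k (fun p => f p.1 p.2)

theorem op_mm {X : Type} [AddCommGroup X] [Module k X] (f : ℕ → ℕ → X) {a b : ℕ} (ha : a < n ^ 2)
    (hb : b < n ^ 2) : op f (mm (k := k) n a b) = f a b := by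
  rw [mm, dif_pos ⟨ha, hb⟩, op, Finsupp.linearCombination_single, one_smul]

theorem op_mm' {X : Type} [AddCommGroup X] [Module k X] (f : ℕ → ℕ → X)
    (hf : ∀ a b, (n ^ 2 ≤ a ∨ n ^ 2 ≤ b) → f a b = 0) (a b : ℕ) :
    op f (mm (k := k) n a b) = f a b := by
  by_cases h : a < n ^ 2 ∧ b < n ^ 2
  · exact op_mm f h.1 h.2
  · have : n ^ 2 ≤ a ∨ n ^ 2 ≤ b := by omega
    rw [hf a b this, mm, dif_neg h, map_zero]

variable (n) (q : k)

def Fop : Module.End k (WW k n) := op (fun a b => mm n (a + 1) b)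

theorem Fop_mm (a b : ℕ) : Fop n (mm (k := k) n a b) = mm n (a + 1) b := by
  apply op_mm'
  rintro a b (h | h)
  · exact mm_zero_left n (by omega) _
  · exact mm_zero_right n h _

/-- diagonal operators -/
def Dop (x y z : k) : Module.End k (WW k n) := op (fun a b => (x * y ^ a * z ^ b) • mm n a b)

theorem Dop_mm (x y z : k) (a b : ℕ) : Dop n x y z (mm n a b) = (x * y ^ a * z ^ b) • mm n a b := by
  apply op_mm' (fun a b => (x * y ^ a * z ^ b) • mm n a b)
  rintro a b (h | h)
  · rw [mm_zero_left n (by omega) _, smul_zero]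
  · rw [mm_zero_right n h _, smul_zero]

theorem Dop_mul (x y z x' y' z' : k) :
    Dop n x y z * Dop n x' y' z' = Dop n (x * x') (y * y') (z * z') := by
  apply ext_mm
  intro a b
  rw [Module.End.mul_apply, Dop_mm, map_smul, Dop_mm, Dop_mm, smul_smul]
  congr 1
  ring

theorem Dop_one : Dop n (1 : k) 1 1 = 1 := by
  apply ext_mm
  intro a b
  rw [Dop_mm]; simp

theorem Dop_pow (x y z : k) (m : ℕ) : Dop n x y z ^ m = Dop n (x ^ m) (y ^ m) (z ^ m) := by
  induction m with
  | zero => simp [Dop_one]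
  | succ m ih => rw [pow_succ (Dop n x y z), ih, Dop_mul, pow_succ x, pow_succ y, pow_succ z]

/-- coefficient in `E m_{a,b} = q^a m_{a,b+1} + ec m_{a-1,b}` -/
def ec (lam : k) (a b : ℕ) : k :=
  q * (q - 1)⁻¹ * ((q ^ a - 1) * (lam * q⁻¹ ^ (2 * b) * q ^ a * q⁻¹ - 1))

def Eop (lam : k) : Module.End k (WW k n) :=
  op (fun a b => q ^ a • mm n a (b + 1) + ec q lam a b • mm n (a - 1) b)

variable {n} {q}

theorem ec_zero (lam : k) (b : ℕ) : ec q lam 0 b = 0 := by simp [ec]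

theorem ec_succ (H : Good k n q) (lam : k) (a b : ℕ) :
    ec q lam a b - q⁻¹ * ec q lam (a + 1) b = 1 - lam * q⁻¹ ^ (2 * b) * q ^ (2 * a) := by
  have hq := H.q_ne
  have h1 : q - 1 ≠ 0 := sub_ne_zero.mpr H.q_ne_one
  unfold ec
  rw [pow_succ, mul_comm 2 a, pow_mul q a 2]
  generalize q⁻¹ ^ (2 * b) = z
  generalize q ^ a = y
  field_simp
  ring

theorem Eop_mm (H : Good k n q) (lam : k) (a b : ℕ) :
    Eop n q lam (mm n a b) = q ^ a • mm n a (b + 1) + ec q lam a b • mm n (a - 1) b := by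
  apply op_mm' (fun a b => q ^ a • mm n a (b + 1) + ec q lam a b • mm n (a - 1) b)
  rintro a b (h | h)
  · rw [mm_zero_left n h, smul_zero, zero_add]
    rcases h.eq_or_lt with h | h
    · rw [← h, ec, H.q_pow_N, sub_self]; simp
    · rw [mm_zero_left n (by omega), smul_zero]
  · rw [mm_zero_right n h, mm_zero_right n (by omega)]; simp

theorem Dop_Fop (x y z : k) : Dop n x y z * Fop n = y • (Fop n * Dop n x y z) := by
  apply ext_mm
  intro a b
  rw [LinearMap.smul_apply, Module.End.mul_apply, Module.End.mul_apply, Fop_mm, Dop_mm, Dop_mm,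
    map_smul, Fop_mm, smul_smul]
  congr 1
  ring

theorem Dop_Eop (H : Good k n q) (lam x : k) {y z : k} (hyz : y * z = 1) :
    Dop n x y z * Eop n q lam = z • (Eop n q lam * Dop n x y z) := by
  apply ext_mm
  intro a b
  rw [LinearMap.smul_apply, Module.End.mul_apply, Module.End.mul_apply, Eop_mm H, map_add, map_smul,
    map_smul, Dop_mm, Dop_mm, Dop_mm, map_smul, Eop_mm H, smul_smul, smul_add, smul_add, smul_smul, smul_smul,
    smul_smul, smul_smul, smul_smul]
  congr 1
  · congr 1; ring
  · rcases a with _ | a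
    · simp [ec_zero]
    · rw [Nat.add_sub_cancel]
      congr 1
      linear_combination (- ec q lam (a + 1) b * x * y ^ a * z ^ b) * hyz

theorem Fop_Eop (H : Good k n q) (lam : k) : Fop n * Eop n q lam
    = q⁻¹ • (Eop n q lam * Fop n) + (1 - Dop n lam (q ^ 2) (q⁻¹ ^ 2)) := by
  have hq := H.q_ne
  apply ext_mm
  intro a b
  rw [LinearMap.add_apply, LinearMap.smul_apply, Module.End.mul_apply, Module.End.mul_apply,
    LinearMap.sub_apply, Eop_mm H, map_add, map_smul, map_smul, Dop_mm, Fop_mm, Fop_mm, Fop_mm, Eop_mm H,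
    Module.End.one_apply]
  have e := ec_succ H lam a b
  have e2 : ec q lam a b • mm (k := k) n (a - 1 + 1) b = ec q lam a b • mm n a b := by
    rcases a with _ | a
    · simp [ec_zero]
    · rfl
  have e3 : lam * (q ^ 2) ^ a * (q⁻¹ ^ 2) ^ b = 1 - (ec q lam a b - q⁻¹ * ec q lam (a + 1) b) := by
    rw [e, ← pow_mul, ← pow_mul]; ring
  have e4 : q⁻¹ * q ^ (a + 1) = q ^ a := by rw [pow_succ']; field_simp
  rw [e2, e3, smul_add, smul_smul, smul_smul, e4, Nat.add_sub_cancel]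
  module

/-- ring-level commutation -/
theorem ring_FE_pow {A : Type} [Ring A] [Algebra k A] (H : Good k n q) {e f g : A}
    (hfe : f * e = q⁻¹ • (e * f) + (1 - g)) (hge : g * e = q⁻¹ ^ 2 • (e * g)) (s : ℕ) :
    f * e ^ (s + 1) = q⁻¹ ^ (s + 1) • (e ^ (s + 1) * f)
      + ((1 - q⁻¹)⁻¹ * (1 - q⁻¹ ^ (s + 1))) • e ^ s
      - ((1 - q⁻¹)⁻¹ * (1 - q⁻¹ ^ (s + 1)) * q⁻¹ ^ s) • (e ^ s * g) := by
  have h1 := H.one_sub_ne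
  induction s with
  | zero => simp [hfe, inv_mul_cancel₀ h1]; abel
  | succ s ih =>
    have hq1 : g * e ^ (s + 1) = (q⁻¹ ^ (2 * (s + 1))) • (e ^ (s + 1) * g) := by
      rw [pow_mul]
      generalize q⁻¹ ^ 2 = c at hge
      generalize s + 1 = m
      induction m with
      | zero => simp
      | succ m ih =>
        rw [pow_succ, ← mul_assoc, ih, smul_mul_assoc, mul_assoc, hge, mul_smul_comm, smul_smul,
          mul_assoc, pow_succ]
    rw [pow_succ' e (s + 1), ← mul_assoc, hfe, add_mul, smul_mul_assoc, mul_assoc e f, ih, sub_mul,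
      one_mul, hq1, mul_sub, mul_add, mul_smul_comm, mul_smul_comm, mul_smul_comm, ← mul_assoc e,
      ← mul_assoc e (e ^ s), ← pow_succ' e, ← pow_succ' e]
    generalize e ^ (s + 1 + 1) * f = X
    generalize e ^ (s + 1) * g = Y
    generalize e ^ (s + 1) = Z
    have e1 : q⁻¹ * ((1 - q⁻¹)⁻¹ * (1 - q⁻¹ ^ (s + 1))) + 1
        = (1 - q⁻¹)⁻¹ * (1 - q⁻¹ ^ (s + 1 + 1)) := by
      clear * - h1
      generalize q⁻¹ = w at *
      field_simp
      ring
    have e2 : q⁻¹ * ((1 - q⁻¹)⁻¹ * (1 - q⁻¹ ^ (s + 1)) * q⁻¹ ^ s) + q⁻¹ ^ (2 * (s + 1))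
        = (1 - q⁻¹)⁻¹ * (1 - q⁻¹ ^ (s + 1 + 1)) * q⁻¹ ^ (s + 1) := by
      clear * - h1
      generalize q⁻¹ = w at *
      field_simp
      ring
    rw [← e2, ← e1]
    module

theorem Eop_pow_zero (H : Good k n q) (lam : k) : Eop n q lam ^ n ^ 2 = 0 := by
  have hq := H.q_ne
  have hc : Fop n * Eop n q lam ^ n ^ 2 = Eop n q lam ^ n ^ 2 * Fop n := by
    have hyz : q ^ 2 * q⁻¹ ^ 2 = 1 := by field_simp
    have := ring_FE_pow (A := Module.End k (WW k n)) H (Fop_Eop H lam) (Dop_Eop H lam lam hyz) (n ^ 2 - 1)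
    rw [Nat.sub_add_cancel (by have := H.sixteen_le; omega)] at this
    rw [this, inv_pow, H.q_pow_N]
    simp
  have h0 : ∀ s b, (Eop n q lam ^ s) (mm n 0 b) = mm n 0 (b + s) := by
    intro s
    induction s with
    | zero => intro b; simp
    | succ s ih =>
      intro b
      rw [pow_succ' (Eop n q lam), Module.End.mul_apply, ih, Eop_mm H, ec_zero]
      simp [add_assoc]
  apply ext_mm
  intro a b
  rw [LinearMap.zero_apply]
  induction a with
  | zero => rw [h0, mm_zero_right n (by omega)]
  | succ a ih =>
    rw [← Fop_mm, ← Module.End.mul_apply, ← hc, Module.End.mul_apply, ih, map_zero]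

theorem Fop_pow_mm (s a b : ℕ) : (Fop n ^ s) (mm (k := k) n a b) = mm n (a + s) b := by
  induction s with
  | zero => simp
  | succ s ih => rw [pow_succ' (Fop n), Module.End.mul_apply, ih, Fop_mm, add_assoc]

theorem conj_of_qcomm {A : Type} [Ring A] [Algebra k A] {x y : A} {c : k} {m : ℕ} (hm : 0 < m)
    (hx : x ^ m = 1) (h : x * y = c • (y * x)) : x * y * x ^ (m - 1) = c • y := by
  rw [h, smul_mul_assoc, mul_assoc, ← pow_succ', Nat.sub_add_cancel hm, hx, mul_one]

/-- The auxiliary representation. -/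
theorem exists_rep (H : Good k n q) (kp lam : k) (h1 : kp ^ n = 1)
    (h2 : (lam * kp) ^ n = (kp ^ (n - 1)) ^ 2) :
    ∃ ρ : U k n q →ₐ[k] Module.End k (WW k n),
      ρ (K k n q) = Dop n kp (q ^ n)⁻¹ (q ^ n) ∧
      ρ (Kh k n q) = Dop n (lam * kp) ((q ^ n)⁻¹ * q ^ 2) (q ^ n * (q ^ 2)⁻¹) ∧
      ρ (E k n q) = Eop n q lam ∧ ρ (F k n q) = Fop n := by
  have hq := H.q_ne
  have qnn : (q ^ n) ^ n = 1 := by rw [← pow_mul, ← sq, H.q_pow_N]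
  set A := Dop n kp (q ^ n)⁻¹ (q ^ n) with hA
  set B := Dop n (lam * kp) ((q ^ n)⁻¹ * q ^ 2) (q ^ n * (q ^ 2)⁻¹) with hB
  have hqn1 : (q ^ n) ^ (n - 1) = (q ^ n)⁻¹ := H.qn_pow
  have hA1 : A ^ n = 1 := by
    rw [hA, Dop_pow, h1, inv_pow, qnn, inv_one, Dop_one]
  have hB0 : B ^ n = (A ^ (n - 1)) ^ 2 := by
    rw [hA, hB, Dop_pow, Dop_pow, Dop_pow, h2]
    congr 1
    · rw [mul_pow, inv_pow, qnn, inv_pow, hqn1, inv_inv]; ring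
    · rw [mul_pow, qnn, hqn1]; ring
  have hB1 : B ^ n ^ 2 = 1 := by
    have e1 : B ^ n ^ 2 = (B ^ n) ^ n := (congrArg (B ^ ·) (sq n)).trans (pow_mul B n n)
    rw [e1, hB0, ← pow_mul, ← pow_mul,
    show (n - 1) * (2 * n) = n * ((n - 1) * 2) by ring, pow_mul, hA1, one_pow]
  have hN : 0 < n ^ 2 := by have := H.sixteen_le; omega
  have hz1 : (q ^ n)⁻¹ * q ^ n = 1 := by field_simp
  have hz2 : (q ^ n)⁻¹ * q ^ 2 * (q ^ n * (q ^ 2)⁻¹) = 1 := by field_simp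
  let f : FreeAlgebra k (Fin 4) →ₐ[k] Module.End k (WW k n) :=
    FreeAlgebra.lift k ![A, B, Eop n q lam, Fop n]
  have f0 : f (FreeAlgebra.ι k 0) = A := by simp [f]
  have f1 : f (FreeAlgebra.ι k 1) = B := by simp [f]
  have f2 : f (FreeAlgebra.ι k 2) = Eop n q lam := by simp [f]
  have f3 : f (FreeAlgebra.ι k 3) = Fop n := by simp [f]
  have hf : ∀ ⦃x y⦄, Rel k n q x y → f x = f y := by
    intro x y hxy
    cases hxy <;> simp only [map_mul, map_pow, map_sub, map_smul, map_one, map_zero, f0, f1, f2, f3]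
    · exact hA1
    · exact hB0
    · rw [hA, hB, Dop_mul, Dop_mul]
      congr 1 <;> ring
    · exact conj_of_qcomm (A := Module.End k (WW k n)) (x := A) H.pos hA1 (Dop_Eop H _ _ hz1)
    · exact conj_of_qcomm (A := Module.End k (WW k n)) (x := A) H.pos hA1 (Dop_Fop _ _ _)
    · exact conj_of_qcomm (A := Module.End k (WW k n)) (x := B) hN hB1 (Dop_Eop H _ _ hz2)
    · exact conj_of_qcomm (A := Module.End k (WW k n)) (x := B) hN hB1 (Dop_Fop _ _ _)
    · exact Eop_pow_zero H lam
    · apply ext_mm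
      intro a b
      rw [Fop_pow_mm, mm_zero_left n (by omega), LinearMap.zero_apply]
    · rw [Fop_Eop H]
      have e5 : ∀ X Y : Module.End k (WW k n), X + Y - X = Y := fun X Y => by abel
      refine (e5 _ _).trans ?_
      rw [hA, hB, Dop_pow, Dop_mul]
      congr 2
      · rw [mul_left_comm, ← pow_succ, Nat.sub_add_cancel H.pos, h1, mul_one]
      · rw [inv_pow, hqn1, inv_inv]; field_simp
      · rw [hqn1]; field_simp
  refine ⟨RingQuot.liftAlgHom k ⟨f, hf⟩, ?_, ?_, ?_, ?_⟩
  · rw [K, RingQuot.liftAlgHom_mkAlgHom_apply, f0]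
  · rw [Kh, RingQuot.liftAlgHom_mkAlgHom_apply, f1]
  · rw [E, RingQuot.liftAlgHom_mkAlgHom_apply, f2]
  · rw [F, RingQuot.liftAlgHom_mkAlgHom_apply, f3]

end Rep
end QFL


set_option linter.unusedSectionVars false
namespace QFL

section Idem

variable {k : Type} [Field k] [CharZero k] {n : ℕ} {q : k}

theorem Good.two_dvd (H : Good k n q) : 2 ∣ n ^ 2 := dvd_trans (by norm_num) H.sixteen

theorem Good.half_cast (H : Good k n q) : ((n : k) ^ 2)⁻¹ * 2 * ((n ^ 2 / 2 : ℕ) : k) = 1 := by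
  have h0 : ((n : k) ^ 2) ≠ 0 := by
    have := H.pos
    exact_mod_cast (by positivity : n ^ 2 ≠ 0)
  have h1 : (2 : k) * ((n ^ 2 / 2 : ℕ) : k) = (n : k) ^ 2 := by
    have := Nat.mul_div_cancel' H.two_dvd
    exact_mod_cast this
  rw [mul_assoc, h1, inv_mul_cancel₀ h0]

/-- normalized group-like element -/
theorem phi_eq (i : ℕ) : phi k n q i = ((n ^ 2 : k)⁻¹ * 2) •
    ∑ t ∈ Finset.range (n ^ 2 / 2), (q⁻¹ ^ (2 * i) • gg k n q) ^ t := by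
  unfold phi gg
  congr 1
  apply Finset.sum_congr rfl
  intro t _
  rw [smul_pow, ← pow_mul]

theorem Good.g_phi (H : Good k n q) (i : ℕ) :
    gg k n q * phi k n q i = q ^ (2 * i) • phi k n q i := by
  have hq := H.q_ne
  set y := q⁻¹ ^ (2 * i) • gg k n q with hy
  have hy1 : y ^ (n ^ 2 / 2) = 1 := by
    rw [hy, smul_pow, H.g_pow, ← pow_mul, show 2 * i * (n ^ 2 / 2) = 2 * (n ^ 2 / 2) * i by ring,
      Nat.mul_div_cancel' H.two_dvd, pow_mul, inv_pow, H.q_pow_N, inv_one, one_pow, one_smul]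
  have hg : gg k n q = q ^ (2 * i) • y := by
    rw [hy, smul_smul, inv_pow, mul_inv_cancel₀ (pow_ne_zero _ hq), one_smul]
  have h2 := mul_geom_sum y (n ^ 2 / 2)
  rw [hy1, sub_self, sub_mul, one_mul, sub_eq_zero] at h2
  rw [phi_eq, ← hy, hg, mul_smul_comm, smul_mul_assoc, h2, smul_comm]

theorem Good.h_oneJ (H : Good k n q) {j : ℕ} (hj : j ≤ 1) :
    hh k n q * oneJ k n q j = (-1 : k) ^ j • oneJ k n q j := by
  have h2 := H.h_sq
  rw [sq] at h2
  unfold oneJ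
  rw [← hh]
  interval_cases j
  · simp only [if_true, mul_smul_comm, mul_add, mul_one, h2, pow_zero, one_smul, add_comm]
  · simp only [one_ne_zero, if_false, mul_smul_comm, mul_sub, mul_one, h2, pow_one]
    rw [smul_comm]
    congr 1
    exact ((neg_one_smul k _).trans (neg_sub _ _)).symm

theorem comm_h_phi (i : ℕ) : Commute (hh k n q) (phi k n q i) := by
  rw [phi_eq]
  apply Commute.smul_right
  apply Commute.sum_right
  intro t _
  exact (Good.comm_gh.symm.smul_right _).pow_right _

theorem Good.wt_e (H : Good k n q) (i : ℕ) {j : ℕ} (hj : j ≤ 1) :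
    IsWt n q (q ^ (2 * i)) ((-1) ^ j) (eIdem k n q i j) := by
  constructor
  · rw [smul_eq_mul, eIdem, ← mul_assoc, H.g_phi, smul_mul_assoc]
  · rw [smul_eq_mul, eIdem, ← mul_assoc, (comm_h_phi i).eq, mul_assoc, H.h_oneJ hj, mul_smul_comm]

theorem Good.sum_phi (H : Good k n q) : ∑ i ∈ Finset.Icc 1 (n ^ 2 / 2), phi k n q i = 1 := by
  have hq := H.q_ne
  have hN := H.sixteen_le
  have e : ∀ t ∈ Finset.range (n ^ 2 / 2), ∑ i ∈ Finset.Icc 1 (n ^ 2 / 2),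
      ((n ^ 2 : k)⁻¹ * 2) • (q⁻¹ ^ (2 * i) • gg k n q) ^ t = if t = 0 then 1 else 0 := by
    intro t ht
    rw [Finset.mem_range] at ht
    split_ifs with h0
    · subst h0
      simp only [pow_zero, Finset.sum_const, Nat.card_Icc, Nat.add_sub_cancel]
      rw [← Nat.cast_smul_eq_nsmul k, smul_smul, mul_comm, H.half_cast, one_smul]
    · have e1 : ∀ i ∈ Finset.Icc 1 (n ^ 2 / 2), ((n ^ 2 : k)⁻¹ * 2) • (q⁻¹ ^ (2 * i) • gg k n q) ^ t
          = ((n ^ 2 : k)⁻¹ * 2 * (q⁻¹ ^ (2 * t)) ^ i) • gg k n q ^ t := by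
        intro i _
        rw [smul_pow, smul_smul, ← pow_mul, ← pow_mul]
        ring_nf
      rw [Finset.sum_congr rfl e1, ← Finset.sum_smul, ← Finset.mul_sum]
      have hz : (q⁻¹ ^ (2 * t)) ≠ 1 := by
        rw [inv_pow, ne_eq, inv_eq_one]
        intro h
        have := (H.prim.pow_eq_one_iff_dvd _).1 h
        have := Nat.le_of_dvd (by omega) this
        have := Nat.div_mul_cancel H.two_dvd
        omega
      have hz1 : (q⁻¹ ^ (2 * t)) ^ (n ^ 2 / 2) = 1 := by
        rw [← pow_mul, show 2 * t * (n ^ 2 / 2) = 2 * (n ^ 2 / 2) * t by ring,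
          Nat.mul_div_cancel' H.two_dvd, pow_mul, inv_pow, H.q_pow_N, inv_one, one_pow]
      have h2 := mul_geom_sum (q⁻¹ ^ (2 * t)) (n ^ 2 / 2)
      rw [hz1, sub_self, mul_eq_zero, or_iff_right (sub_ne_zero.mpr hz)] at h2
      have h3 : ∑ i ∈ Finset.Icc 1 (n ^ 2 / 2), (q⁻¹ ^ (2 * t)) ^ i = 0 := by
        have : Finset.Icc 1 (n ^ 2 / 2) = Finset.Ico 1 (n ^ 2 / 2 + 1) := by ext; simp
        rw [this, Finset.sum_Ico_eq_sum_range, Nat.add_sub_cancel]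
        simp only [pow_add, pow_one]
        rw [← Finset.mul_sum, h2, mul_zero]
      rw [h3, mul_zero, zero_smul]
  simp only [phi_eq, Finset.smul_sum]
  rw [Finset.sum_comm, Finset.sum_congr rfl e, Finset.sum_ite_eq', if_pos]
  rw [Finset.mem_range]; omega

theorem eq_zero_of_mul_e (H : Good k n q) {x : U k n q}
    (h : ∀ i j, 1 ≤ i → i ≤ n ^ 2 / 2 → j ≤ 1 → x * eIdem k n q i j = 0) : x = 0 := by
  have h1 : oneJ k n q 0 + oneJ k n q 1 = 1 := by
    unfold oneJ
    simp only [if_true, one_ne_zero, if_false]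
    rw [← smul_add]
    have : (1 + K k n q * Kh k n q ^ (n / 2)) + (1 - K k n q * Kh k n q ^ (n / 2)) = (2 : k) • 1 := by
      rw [two_smul]; abel
    rw [this, smul_smul, inv_mul_cancel₀ two_ne_zero, one_smul]
  have h2 : ∀ i ∈ Finset.Icc 1 (n ^ 2 / 2), x * phi k n q i = 0 := by
    intro i hi
    rw [Finset.mem_Icc] at hi
    rw [← mul_one (phi k n q i), ← h1, mul_add, mul_add]
    have := h i 0 hi.1 hi.2 (by omega)
    have h' := h i 1 hi.1 hi.2 (by omega)
    rw [eIdem] at this h'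
    rw [this, h', add_zero]
  rw [← mul_one x, ← H.sum_phi, Finset.mul_sum, Finset.sum_eq_zero h2]

theorem Good.e_smul (H : Good k n q) {M : Type} [AddCommGroup M] [Module k M] [Module (U k n q) M]
    [IsScalarTower k (U k n q) M] {i j : ℕ} (hj : j ≤ 1) {x : M}
    (hx : IsWt n q (q ^ (2 * i)) ((-1) ^ j) x) : eIdem k n q i j • x = x := by
  have hq := H.q_ne
  have h1 : oneJ k n q j • x = x := by
    unfold oneJ
    rw [← hh]
    have h2 := hx.2
    interval_cases j
    · simp only [if_true, smul_assoc, add_smul, one_smul, h2, pow_zero]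
      rw [← two_smul k, smul_smul, inv_mul_cancel₀ two_ne_zero, one_smul]
    · simp only [one_ne_zero, if_false, smul_assoc, sub_smul, one_smul, h2, pow_one, neg_smul, sub_neg_eq_add]
      rw [← two_smul k, smul_smul, inv_mul_cancel₀ two_ne_zero, one_smul]
  rw [eIdem, mul_smul, h1, phi_eq, smul_assoc, Finset.sum_smul]
  have : ∀ t ∈ Finset.range (n ^ 2 / 2), (q⁻¹ ^ (2 * i) • gg k n q) ^ t • x = x := by
    intro t _
    have h3 : (q⁻¹ ^ (2 * i) • gg k n q) • x = (1 : k) • x := by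
      rw [smul_assoc, hx.1, smul_smul, inv_pow, inv_mul_cancel₀ (pow_ne_zero _ hq)]
    rw [pow_smul_eig h3, one_pow, one_smul]
  rw [Finset.sum_congr rfl this, Finset.sum_const, Finset.card_range, ← Nat.cast_smul_eq_nsmul k, smul_smul,
    H.half_cast, one_smul]

end Idem
end QFL


set_option linter.unusedSectionVars false
namespace QFL

section PBW

variable {k : Type} [Field k] [CharZero k] {n : ℕ} {q : k}

theorem qcomm_pow_right {A : Type} [Ring A] [Algebra k A] {x y : A} {c : k} (h : x * y = c • (y * x))
    (m : ℕ) : x * y ^ m = c ^ m • (y ^ m * x) := by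
  induction m with
  | zero => simp
  | succ m ih =>
    rw [pow_succ, ← mul_assoc, ih, smul_mul_assoc, mul_assoc, h, mul_smul_comm, smul_smul, mul_assoc,
      pow_succ]

theorem qcomm_symm {A : Type} [Ring A] [Algebra k A] {x y : A} {c : k} (hc : c ≠ 0)
    (h : x * y = c • (y * x)) : y * x = c⁻¹ • (x * y) := by
  rw [h, smul_smul, inv_mul_cancel₀ hc, one_smul]

theorem mem_pbw (H : Good k n q) {a : ℕ} (ha : a ≤ n ^ 2 - 2) (c d b : ℕ) :
    F k n q ^ a * K k n q ^ c * Kh k n q ^ d * E k n q ^ b ∈ pbw k n q := by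
  have hN := H.sixteen_le
  by_cases hb : b ≤ n ^ 2 - 1
  · apply Submodule.subset_span
    refine ⟨a, b, c % n, d % (n ^ 2), ha, hb, ?_, ?_, ?_⟩
    · have := Nat.mod_lt c H.pos; omega
    · have := Nat.mod_lt d (by omega : 0 < n ^ 2); omega
    · have h1 : K k n q ^ (c % n) = K k n q ^ c := by
        conv_rhs => rw [← Nat.mod_add_div c n, pow_add, pow_mul, rel_K, one_pow, mul_one]
      have h2 : Kh k n q ^ (d % (n ^ 2)) = Kh k n q ^ d := by
        conv_rhs => rw [← Nat.mod_add_div d (n ^ 2), pow_add, pow_mul, Good.Kh_pow, one_pow, mul_one]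
      rw [h1, h2]
  · rw [pow_E_eq_zero (by omega), mul_zero]
    exact Submodule.zero_mem _

theorem pbw_induction {p : Submodule k (U k n q)}
    (h : ∀ a b c d, a ≤ n ^ 2 - 2 → F k n q ^ a * K k n q ^ c * Kh k n q ^ d * E k n q ^ b ∈ p) :
    pbw k n q ≤ p := by
  apply Submodule.span_le.mpr
  rintro x ⟨a, b, c, d, ha, -, -, -, rfl⟩
  exact h a b c d ha

theorem pbw_map (f : U k n q →ₗ[k] U k n q)
    (h : ∀ a b c d, a ≤ n ^ 2 - 2 →
      f (F k n q ^ a * K k n q ^ c * Kh k n q ^ d * E k n q ^ b) ∈ pbw k n q) {x : U k n q}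
    (hx : x ∈ pbw k n q) : f x ∈ pbw k n q :=
  pbw_induction (p := (pbw k n q).comap f) h hx

theorem pbw_mul_K (H : Good k n q) {x : U k n q} (hx : x ∈ pbw k n q) : x * K k n q ∈ pbw k n q := by
  refine pbw_map (LinearMap.mulRight k (K k n q)) ?_ hx
  intro a b c d ha
  have hq := H.q_ne
  rw [LinearMap.mulRight_apply, mul_assoc, Good.qcomm_pow (qcomm_symm (pow_ne_zero _ hq) H.KE), mul_smul_comm,
    ← mul_assoc, mul_assoc _ (Kh k n q ^ d), (comm_KKh.pow_right d).symm.eq, ← mul_assoc,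
    mul_assoc _ _ (K k n q), ← pow_succ]
  exact Submodule.smul_mem _ _ (mem_pbw H ha _ _ _)

theorem pbw_mul_Kh (H : Good k n q) {x : U k n q} (hx : x ∈ pbw k n q) : x * Kh k n q ∈ pbw k n q := by
  refine pbw_map (LinearMap.mulRight k (Kh k n q)) ?_ hx
  intro a b c d ha
  have hq := H.q_ne
  have hc : q ^ n * (q ^ 2)⁻¹ ≠ 0 := by positivity
  rw [LinearMap.mulRight_apply, mul_assoc, Good.qcomm_pow (qcomm_symm hc H.KhE), mul_smul_comm,
    ← mul_assoc, mul_assoc _ (Kh k n q ^ d), ← pow_succ]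
  exact Submodule.smul_mem _ _ (mem_pbw H ha _ _ _)

theorem K_mul_pbw (H : Good k n q) {x : U k n q} (hx : x ∈ pbw k n q) : K k n q * x ∈ pbw k n q := by
  refine pbw_map (LinearMap.mulLeft k (K k n q)) ?_ hx
  intro a b c d ha
  rw [LinearMap.mulLeft_apply, ← mul_assoc, ← mul_assoc, ← mul_assoc, qcomm_pow_right H.KF, smul_mul_assoc,
    smul_mul_assoc, smul_mul_assoc, mul_assoc _ (K k n q), ← pow_succ']
  exact Submodule.smul_mem _ _ (mem_pbw H ha _ _ _)

theorem Kh_mul_pbw (H : Good k n q) {x : U k n q} (hx : x ∈ pbw k n q) : Kh k n q * x ∈ pbw k n q := by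
  refine pbw_map (LinearMap.mulLeft k (Kh k n q)) ?_ hx
  intro a b c d ha
  rw [LinearMap.mulLeft_apply, ← mul_assoc, ← mul_assoc, ← mul_assoc, qcomm_pow_right H.KhF, smul_mul_assoc,
    smul_mul_assoc, smul_mul_assoc, mul_assoc _ (Kh k n q), (comm_KKh.pow_left c).symm.eq, ← mul_assoc,
    mul_assoc _ (Kh k n q), ← pow_succ']
  exact Submodule.smul_mem _ _ (mem_pbw H ha _ _ _)

theorem mul_pow_mem {x y : U k n q} (h : ∀ x ∈ pbw k n q, x * y ∈ pbw k n q) (hx : x ∈ pbw k n q) (m : ℕ) :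
    x * y ^ m ∈ pbw k n q := by
  induction m with
  | zero => simpa using hx
  | succ m ih => rw [pow_succ, ← mul_assoc]; exact h _ ih

theorem pow_mul_mem {x y : U k n q} (h : ∀ x ∈ pbw k n q, y * x ∈ pbw k n q) (hx : x ∈ pbw k n q) (m : ℕ) :
    y ^ m * x ∈ pbw k n q := by
  induction m with
  | zero => simpa using hx
  | succ m ih => rw [pow_succ', mul_assoc]; exact h _ ih

theorem g_mul_pbw (H : Good k n q) {x : U k n q} (hx : x ∈ pbw k n q) : gg k n q * x ∈ pbw k n q := by
  rw [gg, Kinv, mul_assoc]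
  exact pow_mul_mem (fun x => K_mul_pbw H) (Kh_mul_pbw H hx) _

theorem h_mul_pbw (H : Good k n q) {x : U k n q} (hx : x ∈ pbw k n q) : hh k n q * x ∈ pbw k n q := by
  rw [hh, mul_assoc]
  exact K_mul_pbw H (pow_mul_mem (fun x => Kh_mul_pbw H) hx _)

theorem pbw_mul_g (H : Good k n q) {x : U k n q} (hx : x ∈ pbw k n q) : x * gg k n q ∈ pbw k n q := by
  rw [gg, Kinv, ← mul_assoc]
  exact pbw_mul_Kh H (mul_pow_mem (fun x => pbw_mul_K H) hx _)

theorem pbw_mul_h (H : Good k n q) {x : U k n q} (hx : x ∈ pbw k n q) : x * hh k n q ∈ pbw k n q := by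
  rw [hh, ← mul_assoc]
  exact mul_pow_mem (fun x => pbw_mul_Kh H) (pbw_mul_K H hx) _

theorem pbw_mul_e (H : Good k n q) {x : U k n q} (hx : x ∈ pbw k n q) (i j : ℕ) :
    x * eIdem k n q i j ∈ pbw k n q := by
  rw [eIdem, ← mul_assoc]
  have h1 : x * phi k n q i ∈ pbw k n q := by
    unfold phi
    rw [mul_smul_comm, Finset.mul_sum]
    refine Submodule.smul_mem _ _ (Submodule.sum_mem _ ?_)
    intro t _
    rw [mul_smul_comm]
    exact Submodule.smul_mem _ _ (mul_pow_mem (fun x => pbw_mul_g H) hx _)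
  unfold oneJ
  split_ifs
  · rw [mul_smul_comm, mul_add, mul_one]
    exact Submodule.smul_mem _ _ (Submodule.add_mem _ h1 (pbw_mul_h H h1))
  · rw [mul_smul_comm, mul_sub, mul_one]
    exact Submodule.smul_mem _ _ (Submodule.sub_mem _ h1 (pbw_mul_h H h1))

variable (n q) in
/-- The comparison map from the auxiliary representation. -/
def theta (i j : ℕ) : WW k n →ₗ[k] U k n q :=
  op (fun a b => F k n q ^ a * (E k n q ^ b * eIdem k n q i j))

theorem theta_mm (i j a b : ℕ) :
    theta n q i j (mm n a b) = F k n q ^ a * (E k n q ^ b * eIdem k n q i j) := by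
  apply op_mm' (fun a b => F k n q ^ a * (E k n q ^ b * eIdem k n q i j))
  rintro a b (h | h)
  · rw [← Nat.add_sub_cancel' h, pow_add, rel_Fn, zero_mul, zero_mul]
  · rw [pow_E_eq_zero h, zero_mul, mul_zero]

theorem EF_pow_e (H : Good k n q) (i : ℕ) {j : ℕ} (hj : j ≤ 1) (a b : ℕ) :
    E k n q * (F k n q ^ a * (E k n q ^ b * eIdem k n q i j))
      = q ^ a • (F k n q ^ a * (E k n q ^ (b + 1) * eIdem k n q i j))
        + ec q (q ^ (2 * i)) a b • (F k n q ^ (a - 1) * (E k n q ^ b * eIdem k n q i j)) := by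
  have hq := H.q_ne
  induction a with
  | zero => simp [ec_zero, pow_succ', mul_assoc]
  | succ a ih =>
    have hEF : E k n q * F k n q = q • (F k n q * E k n q) - q • (1 - gg k n q) := by
      rw [rel_FE, smul_add, smul_smul, mul_inv_cancel₀ hq, one_smul, add_sub_cancel_right]
    have hw := (H.wtFpow (H.wtEpow (H.wt_e i hj) b) a).1
    simp only [smul_eq_mul] at hw
    have e2 : ec q (q ^ (2 * i)) a b • (F k n q ^ (a - 1 + 1) * (E k n q ^ b * eIdem k n q i j))
        = ec q (q ^ (2 * i)) a b • (F k n q ^ a * (E k n q ^ b * eIdem k n q i j)) := by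
      rcases a with _ | a
      · simp [ec_zero]
      · rfl
    have e3 : ec q (q ^ (2 * i)) (a + 1) b = q * ec q (q ^ (2 * i)) a b
        - q * (1 - q ^ (2 * i) * q⁻¹ ^ (2 * b) * q ^ (2 * a)) := by
      rw [← ec_succ H]
      field_simp
      ring
    rw [pow_succ' (F k n q) a, mul_assoc, ← mul_assoc (E k n q), hEF, sub_mul, smul_mul_assoc,
      smul_mul_assoc, sub_mul, one_mul, hw, mul_assoc, ih, mul_add, mul_smul_comm, mul_smul_comm,
      ← mul_assoc (F k n q), ← mul_assoc (F k n q), ← pow_succ', ← pow_succ', e2, e3,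
      Nat.add_sub_cancel]
    generalize F k n q ^ a * (E k n q ^ b * eIdem k n q i j) = X
    generalize F k n q ^ (a + 1) * (E k n q ^ (b + 1) * eIdem k n q i j) = Y
    rw [pow_succ' q a, smul_add, smul_smul, smul_smul, smul_sub, smul_smul]
    have e4 : ∀ x y : k, (x - y) • X = x • X - y • X := fun x y => sub_smul x y X
    rw [mul_sub, mul_one, e4, e4]
    abel

theorem Good.wt_pow_N2 (H : Good k n q) (i : ℕ) : (q ^ (2 * i)) ^ (n ^ 2 / 2) = 1 := by
  rw [← pow_mul, show 2 * i * (n ^ 2 / 2) = 2 * (n ^ 2 / 2) * i by ring,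
    Nat.mul_div_cancel' H.two_dvd, pow_mul, H.q_pow_N, one_pow]

theorem kap_facts (H : Good k n q) {a b : k} (ha0 : a ≠ 0) (ha : a ^ (n ^ 2 / 2) = 1) (hb : b ^ 2 = 1) :
    kap n a b ^ n = 1 ∧ (a * kap n a b) ^ n = (kap n a b ^ (n - 1)) ^ 2 ∧
    kap n a b * (a * kap n a b) ^ (n / 2) = b := by
  obtain ⟨m, hm⟩ := H.four
  have h1 : n / 2 = 2 * m := by omega
  have h2 : n ^ 2 / 2 = 8 * m ^ 2 := by rw [hm]; ring_nf; omega
  rw [h2] at ha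
  have hy : ∀ y, y = (a ^ (n / 2))⁻¹ * b → y ^ n = 1 := by
    rintro y rfl
    rw [mul_pow, inv_pow, ← pow_mul, h1, hm, show 2 * m * (4 * m) = 8 * m ^ 2 by ring, ha,
      show 4 * m = 2 * (2 * m) by ring, pow_mul, hb]
    simp
  unfold kap
  generalize hyd : (a ^ (n / 2))⁻¹ * b = y
  have hyn := hy y hyd.symm
  have hzn : (y ^ (1 + n / 2)) ^ n = 1 := by rw [← pow_mul, mul_comm, pow_mul, hyn, one_pow]
  have hzz : (y ^ (1 + n / 2)) ^ (1 + n / 2) = y := by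
    rw [h1, ← pow_mul, show (1 + 2 * m) * (1 + 2 * m) = 4 * m * (1 + m) + 1 by ring, ← hm, pow_succ, pow_mul,
      hyn, one_pow, one_mul]
  have hz0 : y ^ (1 + n / 2) ≠ 0 := by
    intro h; rw [h, zero_pow H.pos.ne'] at hzn; exact zero_ne_one hzn
  have hz2 : a ^ n * (y ^ (1 + n / 2)) ^ 2 = 1 := by
    have hy2 : a ^ n * y ^ 2 = 1 := by
      rw [← hyd, mul_pow, hb, inv_pow, ← pow_mul, h1, hm, show 2 * m * 2 = 4 * m by ring, mul_one,
        mul_inv_cancel₀ (pow_ne_zero _ ha0)]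
    have : (y ^ (1 + n / 2)) ^ 2 = y ^ 2 * y ^ n := by
      rw [← pow_mul, ← pow_add]; congr 1; omega
    rw [this, hyn, mul_one, hy2]
  refine ⟨hzn, ?_, ?_⟩
  · rw [mul_pow, hzn, mul_one]
    have : (y ^ (1 + n / 2)) ^ (n - 1) * y ^ (1 + n / 2) = 1 := by
      rw [← pow_succ, Nat.sub_add_cancel H.pos, hzn]
    have h3 := eq_inv_of_mul_eq_one_left this
    rw [h3, inv_pow]
    exact eq_inv_of_mul_eq_one_left hz2
  · rw [mul_pow, mul_left_comm, ← pow_succ', add_comm (n / 2) 1, hzz, ← hyd,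
      mul_inv_cancel_left₀ (pow_ne_zero _ ha0)]

theorem exists_rep_ij (H : Good k n q) (i : ℕ) {j : ℕ} (hj : j ≤ 1) :
    ∃ ρ : U k n q →ₐ[k] Module.End k (WW k n), ∃ x y z x' y' z' : k,
      ρ (K k n q) = Dop n x y z ∧ ρ (Kh k n q) = Dop n x' y' z' ∧
      ρ (E k n q) = Eop n q (q ^ (2 * i)) ∧ ρ (F k n q) = Fop n ∧
      (∀ u w, theta n q i j (ρ u w) = u * theta n q i j w) ∧
      ρ (eIdem k n q i j) (mm n 0 0) = mm n 0 0 := by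
  have hq := H.q_ne
  have ha0 : q ^ (2 * i) ≠ 0 := pow_ne_zero _ hq
  obtain ⟨f1, f2, f3⟩ := kap_facts H ha0 (H.wt_pow_N2 i) (b := (-1) ^ j)
    (by rw [← pow_mul, mul_comm, pow_mul]; simp)
  have hwt := H.wt_e i hj
  have hKe := H.K_smul ha0 hwt
  have hKhe := H.Kh_smul ha0 hwt
  rw [smul_eq_mul] at hKe hKhe
  generalize kap n (q ^ (2 * i)) ((-1) ^ j) = kp at *
  obtain ⟨ρ, r1, r2, r3, r4⟩ := exists_rep H kp (q ^ (2 * i)) f1 f2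
  refine ⟨ρ, _, _, _, _, _, _, r1, r2, r3, r4, ?_, ?_⟩
  · let : Module (U k n q) (WW k n) := Module.compHom _ ρ.toRingHom
    have hs : ∀ u w, ρ u w = u • w := fun u w => rfl
    have : IsScalarTower k (U k n q) (WW k n) := ⟨fun c u w => by
      rw [← hs, ← hs, map_smul, LinearMap.smul_apply]⟩
    have key : ∀ u, (∀ a b, theta n q i j (ρ u (mm n a b)) = u * theta n q i j (mm n a b)) →
        ∀ w, theta n q i j (u • w) = u • theta n q i j w := by
      intro u hu w
      have : theta n q i j ∘ₗ ρ u = LinearMap.mulLeft k u ∘ₗ theta n q i j := by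
        apply ext_mm
        intro a b
        rw [LinearMap.comp_apply, LinearMap.comp_apply, hu, LinearMap.mulLeft_apply]
      exact congrArg (fun f => f w) this
    intro u w
    rw [hs, ← smul_eq_mul]
    refine equivariant_of_gens (n := n) (q := q) (theta n q i j) ?_ ?_ ?_ ?_ u w
    · apply key
      intro a b
      rw [r1, Dop_mm, map_smul, theta_mm, ← mul_assoc (K k n q), qcomm_pow_right H.KF, smul_mul_assoc,
        mul_assoc (F k n q ^ a), ← mul_assoc (K k n q), qcomm_pow_right H.KE, smul_mul_assoc,
        mul_assoc (E k n q ^ b), hKe, mul_smul_comm,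
        mul_smul_comm, mul_smul_comm, smul_smul, smul_smul]
      congr 1
      ring
    · apply key
      intro a b
      rw [r2, Dop_mm, map_smul, theta_mm, ← mul_assoc (Kh k n q), qcomm_pow_right H.KhF, smul_mul_assoc,
        mul_assoc (F k n q ^ a), ← mul_assoc (Kh k n q), qcomm_pow_right H.KhE, smul_mul_assoc,
        mul_assoc (E k n q ^ b), hKhe, mul_smul_comm,
        mul_smul_comm, mul_smul_comm, smul_smul, smul_smul]
      congr 1
      ring
    · apply key
      intro a b
      rw [r3, Eop_mm H, map_add, map_smul, map_smul, theta_mm, theta_mm, theta_mm, EF_pow_e H i hj]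
    · apply key
      intro a b
      rw [r4, Fop_mm, theta_mm, theta_mm, pow_succ', mul_assoc]
  · let : Module (U k n q) (WW k n) := Module.compHom _ ρ.toRingHom
    have hs : ∀ u w, ρ u w = u • w := fun u w => rfl
    have : IsScalarTower k (U k n q) (WW k n) := ⟨fun c u w => by
      rw [← hs, ← hs, map_smul, LinearMap.smul_apply]⟩
    rw [hs]
    apply H.e_smul hj
    constructor
    · rw [← hs, gg, Kinv, map_mul, map_pow, r1, r2, Dop_pow, Dop_mul, Dop_mm, pow_zero, pow_zero,
        mul_one, mul_one]
      congr 1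
      rw [mul_left_comm, ← pow_succ, Nat.sub_add_cancel H.pos, f1, mul_one]
    · rw [← hs, hh, map_mul, map_pow, r1, r2, Dop_pow, Dop_mul, Dop_mm, pow_zero, pow_zero,
        mul_one, mul_one, f3]

end PBW
end QFL


set_option linter.unusedSectionVars false
namespace QFL

section Gam

variable {k : Type} [Field k] [CharZero k] {n : ℕ} {q : k}

variable (k n) in
/-- rows `a ≤ N - 2` -/
def Rlow : Submodule k (WW k n) := Submodule.span k {w | ∃ a b, a ≤ n ^ 2 - 2 ∧ w = mm n a b}

variable (k n) in
/-- rows `a ≥ r` -/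
def Rup (r : ℕ) : Submodule k (WW k n) := Submodule.span k {w | ∃ a b, r ≤ a ∧ w = mm n a b}

theorem mm_mem_Rlow {a : ℕ} (h : a ≤ n ^ 2 - 2) (b : ℕ) : mm n a b ∈ Rlow k n :=
  Submodule.subset_span ⟨a, b, h, rfl⟩

theorem mm_mem_Rup {a r : ℕ} (h : r ≤ a) (b : ℕ) : mm n a b ∈ Rup k n r :=
  Submodule.subset_span ⟨a, b, h, rfl⟩

theorem Fop_inj (H : Good k n q) {w : WW k n} (hw : w ∈ Rlow k n) (h : Fop n w = 0) : w = 0 := by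
  have hN := H.sixteen_le
  let L : WW k n →ₗ[k] WW k n := op (fun a b => mm n (a - 1) b)
  have : Set.EqOn (L ∘ₗ Fop n) (LinearMap.id : WW k n →ₗ[k] WW k n) (Rlow k n) := by
    apply LinearMap.eqOn_span
    rintro _ ⟨a, b, ha, rfl⟩
    rw [LinearMap.comp_apply, Fop_mm, LinearMap.id_apply]
    by_cases hb : b < n ^ 2
    · exact op_mm _ (by omega) hb
    · rw [mm_zero_right n (by omega), mm_zero_right n (by omega), map_zero]
  have h2 := this hw
  rw [LinearMap.comp_apply, h, map_zero] at h2
  exact h2.symm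

theorem rep_mem_Rlow {ρ : U k n q →ₐ[k] Module.End k (WW k n)} {x y z x' y' z' lam : k}
    (H : Good k n q) (r1 : ρ (K k n q) = Dop n x y z) (r2 : ρ (Kh k n q) = Dop n x' y' z')
    (r3 : ρ (E k n q) = Eop n q lam) (r4 : ρ (F k n q) = Fop n) {u : U k n q}
    (hu : u ∈ pbw k n q) : ρ u (mm n 0 0) ∈ Rlow k n := by
  have h0 : ∀ s, (Eop n q lam ^ s) (mm n 0 0) = mm n 0 s := by
    intro s
    induction s with
    | zero => simp
    | succ s ih =>
      rw [pow_succ' (Eop n q lam), Module.End.mul_apply, ih, Eop_mm H, ec_zero]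
      simp
  refine pbw_induction (p := (Rlow k n).comap ((LinearMap.applyₗ (mm n 0 0)) ∘ₗ ρ.toLinearMap)) ?_ hu
  intro a b c d ha
  rw [Submodule.mem_comap]
  change ρ _ (mm n 0 0) ∈ _
  rw [map_mul, map_mul, map_mul, map_pow, map_pow, map_pow, map_pow, r1, r2, r3, r4, Module.End.mul_apply,
    Module.End.mul_apply, Module.End.mul_apply, h0, Dop_pow, Dop_pow, Dop_mm, map_smul, Dop_mm, map_smul, map_smul,
    Fop_pow_mm, zero_add]
  exact Submodule.smul_mem _ _ (Submodule.smul_mem _ _ (mm_mem_Rlow ha _))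

theorem F_inj_pbw (H : Good k n q) {x : U k n q} (hx : x ∈ pbw k n q) (h : F k n q * x = 0) : x = 0 := by
  apply eq_zero_of_mul_e H
  intro i j _ _ hj
  obtain ⟨ρ, _, _, _, _, _, _, r1, r2, r3, r4, r5, r6⟩ := exists_rep_ij H i hj
  have h1 : ρ x (mm n 0 0) = 0 := by
    apply Fop_inj H (rep_mem_Rlow H r1 r2 r3 r4 hx)
    rw [← r4, ← Module.End.mul_apply, ← map_mul, h, map_zero, LinearMap.zero_apply]
  have h2 := r5 x (mm n 0 0)
  rw [h1, map_zero, theta_mm, pow_zero, pow_zero, one_mul, one_mul] at h2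
  exact h2.symm

theorem Eop_Rup (H : Good k n q) (lam : k) {r : ℕ} {w : WW k n} (hw : w ∈ Rup k n (r + 1)) :
    Eop n q lam w ∈ Rup k n r := by
  have : Rup k n (r + 1) ≤ (Rup k n r).comap (Eop n q lam) := by
    apply Submodule.span_le.mpr
    rintro _ ⟨a, b, ha, rfl⟩
    rw [SetLike.mem_coe, Submodule.mem_comap, Eop_mm H]
    exact Submodule.add_mem _ (Submodule.smul_mem _ _ (mm_mem_Rup (by omega) _))
      (Submodule.smul_mem _ _ (mm_mem_Rup (by omega) _))
  exact this hw

theorem Eop_Rlow (H : Good k n q) (lam : k) {w : WW k n} (hw : w ∈ Rlow k n) :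
    Eop n q lam w ∈ Rlow k n := by
  have : Rlow k n ≤ (Rlow k n).comap (Eop n q lam) := by
    apply Submodule.span_le.mpr
    rintro _ ⟨a, b, ha, rfl⟩
    rw [SetLike.mem_coe, Submodule.mem_comap, Eop_mm H]
    exact Submodule.add_mem _ (Submodule.smul_mem _ _ (mm_mem_Rlow (by omega) _))
      (Submodule.smul_mem _ _ (mm_mem_Rlow (by omega) _))
  exact this hw

theorem Eop_pow_Rup (H : Good k n q) (lam : k) (s r : ℕ) {w : WW k n} (hw : w ∈ Rup k n (r + s)) :
    (Eop n q lam ^ s) w ∈ Rup k n r := by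
  induction s generalizing r with
  | zero => simpa using hw
  | succ s ih =>
    rw [pow_succ' (Eop n q lam), Module.End.mul_apply]
    apply Eop_Rup H
    apply ih
    rwa [show r + 1 + s = r + (s + 1) by ring]

theorem Rup_one_le (H : Good k n q) : Rup k n 1 ≤ (Rlow k n).map (Fop n) := by
  have hN := H.sixteen_le
  apply Submodule.span_le.mpr
  rintro _ ⟨a, b, ha, rfl⟩
  by_cases h : a < n ^ 2
  · refine ⟨mm n (a - 1) b, mm_mem_Rlow (by omega) b, ?_⟩
    rw [Fop_mm, Nat.sub_add_cancel ha]
  · rw [mm_zero_left n (by omega)]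
    exact Submodule.zero_mem _

theorem theta_Rlow (H : Good k n q) (i j : ℕ) {w : WW k n} (hw : w ∈ Rlow k n) :
    theta n q i j w ∈ pbw k n q := by
  have : Rlow k n ≤ (pbw k n q).comap (theta n q i j) := by
    apply Submodule.span_le.mpr
    rintro _ ⟨a, b, ha, rfl⟩
    rw [SetLike.mem_coe, Submodule.mem_comap, theta_mm, ← mul_assoc]
    apply pbw_mul_e H
    have := mem_pbw H ha 0 0 b
    simpa using this
  exact this hw

theorem gam_spec (H : Good k n q) {i j : ℕ} (hi : 1 ≤ i) (hi' : i ≤ n ^ 2 / 2) (hj : j ≤ 1) :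
    gam k n q i j ∈ pbw k n q ∧ F k n q * gam k n q i j = beta k n q i j := by
  have hN := H.sixteen_le
  have hN2 := Nat.div_mul_cancel H.two_dvd
  have hex : ∃ x, x ∈ pbw k n q ∧ F k n q * x = beta k n q i j := by
    obtain ⟨ρ, _, _, _, _, _, _, r1, r2, r3, r4, r5, r6⟩ := exists_rep_ij H i hj
    have h1 : (Eop n q (q ^ (2 * i)) ^ (2 * i - 2)) (mm n (n ^ 2 - 1) 0) ∈ Rup k n 1 := by
      apply Eop_pow_Rup H
      apply mm_mem_Rup
      omega
    obtain ⟨w, hw, hw2⟩ := Rup_one_le H h1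
    refine ⟨theta n q i j w, theta_Rlow H i j hw, ?_⟩
    rw [← r5, r4, hw2, ← r3, ← map_pow, r5, theta_mm, beta, alpha, pow_zero, one_mul]
  have hu : ∃! x, x ∈ pbw k n q ∧ F k n q * x = beta k n q i j := by
    obtain ⟨x, hx⟩ := hex
    refine ⟨x, hx, ?_⟩
    rintro y ⟨hy, hy2⟩
    rw [← sub_eq_zero]
    apply F_inj_pbw H (Submodule.sub_mem _ hy hx.1)
    rw [mul_sub, hy2, hx.2, sub_self]
  unfold gam
  rw [dif_pos hu]
  exact hu.choose_spec.1

theorem E_pow_alpha_ne (H : Good k n q) (i : ℕ) {j : ℕ} (hj : j ≤ 1) :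
    E k n q ^ (n ^ 2 - 1) * alpha k n q i j ≠ 0 := by
  have hN := H.sixteen_le
  have hq := H.q_ne
  intro h0
  obtain ⟨ρ, _, _, _, _, _, _, r1, r2, r3, r4, r5, r6⟩ := exists_rep_ij H i hj
  have h1 : ρ (E k n q ^ (n ^ 2 - 1) * alpha k n q i j) (mm n 0 0)
      = (Eop n q (q ^ (2 * i)) ^ (n ^ 2 - 1)) (mm n (n ^ 2 - 1) 0) := by
    rw [alpha, map_mul, map_mul, map_pow, map_pow, r3, r4, Module.End.mul_apply, Module.End.mul_apply, r6,
      Fop_pow_mm, zero_add]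
  rw [h0, map_zero, LinearMap.zero_apply] at h1
  have h2 : ∀ s, (Eop n q (q ^ (2 * i)) ^ s) (mm n (n ^ 2 - 1) 0)
      - (q ^ (n ^ 2 - 1)) ^ s • mm n (n ^ 2 - 1) s ∈ Rlow k n := by
    intro s
    induction s with
    | zero => simp
    | succ s ih =>
      have h3 := Eop_Rlow H (q ^ (2 * i)) ih
      rw [map_sub, map_smul, Eop_mm H, ← Module.End.mul_apply, ← pow_succ' (Eop n q (q ^ (2 * i)))] at h3
      have h4 := Submodule.add_mem _ h3 (Submodule.smul_mem _ ((q ^ (n ^ 2 - 1)) ^ s)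
        (Submodule.smul_mem _ (ec q (q ^ (2 * i)) (n ^ 2 - 1) s)
          (mm_mem_Rlow (k := k) (n := n) (a := n ^ 2 - 1 - 1) (by omega) s)))
      convert h4 using 1
      rw [smul_add, smul_smul, pow_succ (q ^ (n ^ 2 - 1))]
      abel
  have h3 := h2 (n ^ 2 - 1)
  rw [← h1, zero_sub, Submodule.neg_mem_iff, Submodule.smul_mem_iff _ (by positivity)] at h3
  let p : Fin (n ^ 2) × Fin (n ^ 2) := (⟨n ^ 2 - 1, by omega⟩, ⟨n ^ 2 - 1, by omega⟩)
  have h4 : Rlow k n ≤ LinearMap.ker (Finsupp.lapply p : WW k n →ₗ[k] k) := by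
    apply Submodule.span_le.mpr
    rintro _ ⟨a, b, ha, rfl⟩
    rw [SetLike.mem_coe, LinearMap.mem_ker, mm]
    split_ifs with h
    · rw [Finsupp.lapply_apply, Finsupp.single_eq_of_ne]
      simp only [p, ne_eq, Prod.mk.injEq, Fin.mk.injEq]
      omega
    · simp
  have h5 := h4 h3
  rw [LinearMap.mem_ker, mm, dif_pos (by omega), Finsupp.lapply_apply, Finsupp.single_eq_same] at h5
  exact one_ne_zero h5

theorem Good.pow_mod (H : Good k n q) {a b : ℕ} (h : a ≡ b [MOD n ^ 2]) : q ^ a = q ^ b :=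
  pow_eq_pow_of_modEq h H.q_pow_N

/-- weights of `α`, `γ`, and the basic relations -/
theorem alpha_wt (H : Good k n q) {i j : ℕ} (hi : 1 ≤ i) (hj : j ≤ 1) :
    IsWt n q (q ^ (2 * i - 2)) ((-1) ^ (j + 1)) (alpha k n q i j) := by
  have hN := H.sixteen_le
  have := H.wtFpow (H.wt_e i hj) (n ^ 2 - 1)
  rw [smul_eq_mul, ← alpha] at this
  convert this using 1
  · rw [← pow_add]
    apply H.pow_mod
    have : 2 * i + 2 * (n ^ 2 - 1) = (2 * i - 2) + n ^ 2 * 2 := by omega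
    rw [this]
    simp [Nat.ModEq]
  · have h2 : (-1 : k) ^ (n ^ 2 - 1) = -1 := by
      apply Odd.neg_one_pow
      have := H.two_dvd
      rw [Nat.odd_iff]
      omega
    rw [h2, pow_succ, mul_comm]

theorem F_alpha (H : Good k n q) (i j : ℕ) : F k n q * alpha k n q i j = 0 := by
  have hN := H.sixteen_le
  rw [alpha, ← mul_assoc, ← pow_succ', Nat.sub_add_cancel (by omega), rel_Fn, zero_mul]

theorem gam_wt (H : Good k n q) {i j : ℕ} (hi : 1 ≤ i) (hi' : i ≤ n ^ 2 / 2) (hj : j ≤ 1) :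
    IsWt n q (q⁻¹ ^ (2 * i)) ((-1) ^ j) (gam k n q i j) := by
  have hq := H.q_ne
  obtain ⟨h1, h2⟩ := gam_spec H hi hi' hj
  have hb := H.wtEpow (alpha_wt H hi hj) (2 * i - 2)
  rw [smul_eq_mul, ← beta] at hb
  constructor
  · rw [smul_eq_mul, ← sub_eq_zero]
    apply F_inj_pbw H (Submodule.sub_mem _ (g_mul_pbw H h1) (Submodule.smul_mem _ _ h1))
    have := hb.1
    rw [smul_eq_mul] at this
    rw [mul_sub, mul_smul_comm, ← mul_assoc, qcomm_symm (pow_ne_zero _ hq) H.gF, smul_mul_assoc, mul_assoc, h2,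
      this, smul_smul, sub_eq_zero]
    congr 1
    obtain ⟨i, rfl⟩ : ∃ i', i = i' + 1 := ⟨i - 1, by omega⟩
    rw [show 2 * (i + 1) - 2 = 2 * i by omega]
    rw [show 2 * (2 * i) = 2 * i + 2 * i by ring, show 2 * (i + 1) = 2 * i + 2 by ring, pow_add, pow_add,
      inv_pow, inv_pow]
    field_simp
  · rw [smul_eq_mul, ← sub_eq_zero]
    apply F_inj_pbw H (Submodule.sub_mem _ (h_mul_pbw H h1) (Submodule.smul_mem _ _ h1))
    have := hb.2
    rw [smul_eq_mul] at this
    rw [mul_sub, mul_smul_comm, ← mul_assoc, qcomm_symm (by norm_num) H.hF, smul_mul_assoc, mul_assoc, h2,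
      this, smul_smul, sub_eq_zero]
    congr 1
    obtain ⟨i, rfl⟩ : ∃ i', i = i' + 1 := ⟨i - 1, by omega⟩
    rw [show 2 * (i + 1) - 2 = 2 * i by omega, pow_mul]
    norm_num [pow_succ]

end Gam
end QFL


set_option linter.unusedSectionVars false
namespace QFL

section Chain

variable {k : Type} [Field k] {n : ℕ} {q : k}
variable {M : Type} [AddCommGroup M] [Module k M] [Module (U k n q) M]
  [IsScalarTower k (U k n q) M]

variable (k n q) in
/-- The span of the `E`-string of `v`. -/
def Ech (v : M) : Submodule k M := Submodule.span k (Set.range fun s : ℕ => E k n q ^ s • v)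

theorem mem_Ech (v : M) (s : ℕ) : E k n q ^ s • v ∈ Ech k n q v := Submodule.subset_span ⟨s, rfl⟩

theorem self_mem_Ech (v : M) : v ∈ Ech k n q v := by simpa using mem_Ech (k := k) (n := n) (q := q) v 0

theorem span_stable {S : Set M} {A : Submodule k M} {u : U k n q} (h : ∀ x ∈ S, u • x ∈ A) :
    ∀ x ∈ Submodule.span k S, u • x ∈ A := by
  intro x hx
  have : Submodule.span k S ≤ A.comap (Algebra.lsmul k k M u) := Submodule.span_le.mpr h
  exact this hx

theorem Ech_E (v : M) : ∀ x ∈ Ech k n q v, E k n q • x ∈ Ech k n q v := by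
  apply span_stable
  rintro _ ⟨s, rfl⟩
  have := mem_Ech (k := k) (n := n) (q := q) v (s + 1)
  rwa [pow_succ', mul_smul] at this

theorem Epow_stable {A : Submodule k M} (hA : ∀ x ∈ A, E k n q • x ∈ A) (s : ℕ) :
    ∀ x ∈ A, E k n q ^ s • x ∈ A := by
  induction s with
  | zero => intro x hx; simpa using hx
  | succ s ih =>
    intro x hx
    rw [pow_succ', mul_smul]
    exact hA _ (ih x hx)

theorem Epow_vanish {v : M} {m : ℕ} (hm : E k n q ^ m • v = 0) {s : ℕ} (hs : m ≤ s) : E k n q ^ s • v = 0 := by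
  rw [← Nat.sub_add_cancel hs, pow_add, mul_smul, hm, smul_zero]

theorem Epow_add (s t : ℕ) (v : M) : E k n q ^ s • E k n q ^ t • v = E k n q ^ (s + t) • v := by
  rw [pow_add, mul_smul]

/-- Elements of a finite string. -/
theorem Ech_repr {v : M} {m : ℕ} (hm : E k n q ^ m • v = 0) {x : M} (hx : x ∈ Ech k n q v) :
    ∃ c : ℕ → k, x = ∑ s ∈ Finset.range m, c s • E k n q ^ s • v := by
  refine Submodule.span_induction (p := fun x _ => ∃ c : ℕ → k, x = ∑ s ∈ Finset.range m, c s • E k n q ^ s • v)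
    ?_ ?_ ?_ ?_ hx
  · rintro _ ⟨t, rfl⟩
    by_cases ht : t < m
    · refine ⟨fun s => if s = t then 1 else 0, ?_⟩
      simp [ht]
    · refine ⟨0, ?_⟩
      simp only [Pi.zero_apply, zero_smul, Finset.sum_const_zero]
      exact Epow_vanish hm (by omega)
  · exact ⟨0, by simp⟩
  · rintro _ _ _ _ ⟨c, rfl⟩ ⟨c', rfl⟩
    refine ⟨c + c', ?_⟩
    simp only [Pi.add_apply, add_smul, Finset.sum_add_distrib]
  · rintro r _ _ ⟨c, rfl⟩
    refine ⟨r • c, ?_⟩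
    simp only [Pi.smul_apply, smul_eq_mul, mul_smul, Finset.smul_sum]

/-- Independence of a string modulo an `E`-stable subspace. -/
theorem chain_indep {A : Submodule k M} (hA : ∀ x ∈ A, E k n q • x ∈ A) {m : ℕ} {v : M}
    (h0 : E k n q ^ m • v ∈ A) (h1 : E k n q ^ (m - 1) • v ∉ A) (a : ℕ → k)
    (h : ∑ s ∈ Finset.range m, a s • E k n q ^ s • v ∈ A) : ∀ s < m, a s = 0 := by
  intro s
  induction s using Nat.strong_induction_on with
  | _ s ih =>
    intro hs
    have h2 := Epow_stable hA (m - 1 - s) _ h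
    rw [Finset.smul_sum] at h2
    have h3 : ∑ t ∈ Finset.range m, E k n q ^ (m - 1 - s) • a t • E k n q ^ t • v - a s • E k n q ^ (m - 1) • v
        ∈ A := by
      rw [← Finset.add_sum_erase _ _ (Finset.mem_range.mpr hs), smul_comm _ (a s), Epow_add,
        Nat.sub_add_cancel (by omega), add_sub_cancel_left]
      apply Submodule.sum_mem
      intro t ht
      rw [Finset.mem_erase, Finset.mem_range] at ht
      rcases lt_or_gt_of_ne ht.1 with hlt | hgt
      · rw [ih t hlt ht.2, zero_smul, smul_zero]
        exact Submodule.zero_mem _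
      · rw [smul_comm _ (a t), Epow_add]
        apply Submodule.smul_mem
        have := Epow_stable hA (m - 1 - s + t - m) _ h0
        rwa [Epow_add, Nat.sub_add_cancel (by omega)] at this
    have h4 := Submodule.sub_mem _ h2 h3
    rw [sub_sub_cancel] at h4
    by_contra hne
    exact h1 ((Submodule.smul_mem_iff _ hne).mp h4)

theorem chain_indep_zero {m : ℕ} {v : M}
    (h0 : E k n q ^ m • v = 0) (h1 : E k n q ^ (m - 1) • v ≠ 0) (a : ℕ → k)
    (h : ∑ s ∈ Finset.range m, a s • E k n q ^ s • v = 0) : ∀ s < m, a s = 0 := by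
  apply chain_indep (A := (⊥ : Submodule k M)) (m := m) (v := v) (n := n) (q := q)
  · intro x hx
    rw [Submodule.mem_bot] at *
    rw [hx, smul_zero]
  · rwa [Submodule.mem_bot]
  · rwa [Submodule.mem_bot]
  · rwa [Submodule.mem_bot]

theorem Good.inv_ne (H : Good k n q) : q⁻¹ ≠ 0 := inv_ne_zero H.q_ne

theorem wt_ne_zero (H : Good k n q) {a : k} (ha : a ≠ 0) (s : ℕ) : a * q⁻¹ ^ (2 * s) ≠ 0 :=
  mul_ne_zero ha (pow_ne_zero _ H.inv_ne)

theorem Ech_K (H : Good k n q) {a b : k} (ha : a ≠ 0) {v : M} (hv : IsWt n q a b v) :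
    ∀ x ∈ Ech k n q v, K k n q • x ∈ Ech k n q v := by
  apply span_stable
  rintro _ ⟨s, rfl⟩
  simp only
  rw [H.K_smul (wt_ne_zero H ha s) (H.wtEpow hv s)]
  exact Submodule.smul_mem _ _ (mem_Ech v s)

theorem Ech_Kh (H : Good k n q) {a b : k} (ha : a ≠ 0) {v : M} (hv : IsWt n q a b v) :
    ∀ x ∈ Ech k n q v, Kh k n q • x ∈ Ech k n q v := by
  apply span_stable
  rintro _ ⟨s, rfl⟩
  simp only
  rw [H.Kh_smul (wt_ne_zero H ha s) (H.wtEpow hv s)]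
  exact Submodule.smul_mem _ _ (mem_Ech v s)

theorem FE_pow0 (H : Good k n q) {a b : k} {v : M} (hv : IsWt n q a b v) (hF : F k n q • v = 0) (s : ℕ) :
    F k n q • E k n q ^ s • v = cc q s a • E k n q ^ (s - 1) • v := by
  rw [H.FE_pow hv, hF, smul_zero, smul_zero, zero_add]

theorem Ech_F (H : Good k n q) {a b : k} {v : M} (hv : IsWt n q a b v) (hF : F k n q • v = 0) :
    ∀ x ∈ Ech k n q v, F k n q • x ∈ Ech k n q v := by
  apply span_stable
  rintro _ ⟨s, rfl⟩
  simp only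
  rw [FE_pow0 H hv hF]
  exact Submodule.smul_mem _ _ (mem_Ech v _)

/-- The submodule generated by a highest weight type vector. -/
theorem smul_mem_Ech (H : Good k n q) {a b : k} (ha : a ≠ 0) {v : M} (hv : IsWt n q a b v)
    (hF : F k n q • v = 0) (u : U k n q) : ∀ x ∈ Ech k n q v, u • x ∈ Ech k n q v :=
  stable_of_gens _ (Ech_K H ha hv) (Ech_Kh H ha hv) (Ech_E v) (Ech_F H hv hF) u

theorem Ech_le_span (v : M) {W : Submodule (U k n q) M} (hv : v ∈ W) {x : M} (hx : x ∈ Ech k n q v) : x ∈ W := by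
  have : Ech k n q v ≤ W.restrictScalars k := by
    apply Submodule.span_le.mpr
    rintro _ ⟨s, rfl⟩
    exact W.smul_mem _ hv
  exact this hx

theorem mem_span_iff_Ech (H : Good k n q) {a b : k} (ha : a ≠ 0) {v : M} (hv : IsWt n q a b v)
    (hF : F k n q • v = 0) (x : M) : x ∈ Submodule.span (U k n q) {v} ↔ x ∈ Ech k n q v := by
  constructor
  · intro hx
    obtain ⟨u, rfl⟩ := Submodule.mem_span_singleton.mp hx
    exact smul_mem_Ech H ha hv hF u _ (self_mem_Ech v)
  · exact Ech_le_span v (Submodule.mem_span_singleton_self v)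

/-- The data of vectors generating a quotient of `P`. -/
structure PD (n : ℕ) (q : k) [Module (U k n q) M] (i j : ℕ) (al ga : M) : Prop where
  hi : 1 ≤ i
  hi' : 2 * i ≤ n ^ 2
  wa : IsWt n q (q ^ (2 * i - 2)) ((-1) ^ (j + 1)) al
  wg : IsWt n q (q⁻¹ ^ (2 * i)) ((-1) ^ j) ga
  Fa : F k n q • al = 0
  Fg : F k n q • ga = E k n q ^ (2 * i - 2) • al

namespace PD

variable {i j : ℕ} {al ga : M}

theorem Fg_pow (H : Good k n q) (h : PD n q i j al ga) (s : ℕ) : F k n q • E k n q ^ s • ga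
    = q⁻¹ ^ s • E k n q ^ (s + (2 * i - 2)) • al + cc q s (q⁻¹ ^ (2 * i)) • E k n q ^ (s - 1) • ga := by
  rw [H.FE_pow h.wg, h.Fg, Epow_add]

theorem smul_mem (H : Good k n q) (h : PD n q i j al ga) (u : U k n q) :
    ∀ x ∈ Ech k n q al ⊔ Ech k n q ga, u • x ∈ Ech k n q al ⊔ Ech k n q ga := by
  have key : ∀ v : U k n q, (∀ x ∈ Ech k n q al, v • x ∈ Ech k n q al ⊔ Ech k n q ga) →
      (∀ x ∈ Ech k n q ga, v • x ∈ Ech k n q al ⊔ Ech k n q ga) →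
      ∀ x ∈ Ech k n q al ⊔ Ech k n q ga, v • x ∈ Ech k n q al ⊔ Ech k n q ga := by
    intro v h1 h2 x hx
    obtain ⟨y, hy, z, hz, rfl⟩ := Submodule.mem_sup.mp hx
    rw [smul_add]
    exact Submodule.add_mem _ (h1 y hy) (h2 z hz)
  have l : ∀ x ∈ Ech k n q al, x ∈ Ech k n q al ⊔ Ech k n q ga :=
    fun x hx => (le_sup_left : Ech k n q al ≤ Ech k n q al ⊔ Ech k n q ga) hx
  have r : ∀ x ∈ Ech k n q ga, x ∈ Ech k n q al ⊔ Ech k n q ga :=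
    fun x hx => (le_sup_right : Ech k n q ga ≤ Ech k n q al ⊔ Ech k n q ga) hx
  have n1 : q ^ (2 * i - 2) ≠ 0 := pow_ne_zero _ H.q_ne
  have n2 : q⁻¹ ^ (2 * i) ≠ 0 := pow_ne_zero _ H.inv_ne
  refine stable_of_gens _ (key _ ?_ ?_) (key _ ?_ ?_) (key _ ?_ ?_) (key _ ?_ ?_) u
  · exact fun x hx => l _ (Ech_K H n1 h.wa x hx)
  · exact fun x hx => r _ (Ech_K H n2 h.wg x hx)
  · exact fun x hx => l _ (Ech_Kh H n1 h.wa x hx)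
  · exact fun x hx => r _ (Ech_Kh H n2 h.wg x hx)
  · exact fun x hx => l _ (Ech_E al x hx)
  · exact fun x hx => r _ (Ech_E ga x hx)
  · exact fun x hx => l _ (Ech_F H h.wa h.Fa x hx)
  · apply span_stable
    rintro _ ⟨s, rfl⟩
    simp only
    rw [h.Fg_pow H]
    exact Submodule.add_mem _ (Submodule.smul_mem _ _ (l _ (mem_Ech _ _)))
      (Submodule.smul_mem _ _ (r _ (mem_Ech _ _)))

theorem cc_al_ne (H : Good k n q) (h : PD n q i j al ga) {s : ℕ} (h0 : 0 < s) (h1 : s < n ^ 2) (h2 : s ≠ 2 * i - 1) :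
    cc q s (q ^ (2 * i - 2)) ≠ 0 := by
  have := h.hi
  have := h.hi'
  rw [ne_eq, H.cc_eq_zero, not_or]
  refine ⟨fun hd => ?_, fun he => ?_⟩
  · have := Nat.le_of_dvd h0 hd; omega
  · rw [show 2 * i - 2 + 1 = 2 * i - 1 by omega] at he
    exact h2 (H.prim.pow_inj h1 (by omega) he)

theorem cc_al_zero (H : Good k n q) (h : PD n q i j al ga) : cc q (2 * i - 1) (q ^ (2 * i - 2)) = 0 := by
  have := h.hi
  rw [H.cc_eq_zero, show 2 * i - 2 + 1 = 2 * i - 1 by omega]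
  exact Or.inr rfl

theorem inv_eq (H : Good k n q) (h : PD n q i j al ga) : q⁻¹ ^ (2 * i) = q ^ (n ^ 2 - 2 * i) := by
  rw [inv_pow]
  apply inv_eq_of_mul_eq_one_left
  rw [← pow_add, Nat.sub_add_cancel h.hi', H.q_pow_N]

theorem cc_ga_ne (H : Good k n q) (h : PD n q i j al ga) {s : ℕ} (h0 : 0 < s) (h1 : s < n ^ 2)
    (h2 : s ≠ n ^ 2 - 2 * i + 1) : cc q s (q⁻¹ ^ (2 * i)) ≠ 0 := by
  have := h.hi
  have := h.hi'
  rw [ne_eq, h.inv_eq H, H.cc_eq_zero, not_or]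
  refine ⟨fun hd => ?_, fun he => ?_⟩
  · have := Nat.le_of_dvd h0 hd; omega
  · exact h2 (H.prim.pow_inj h1 (by omega) he)

theorem cc_ga_zero (H : Good k n q) (h : PD n q i j al ga) : cc q (n ^ 2 - 2 * i + 1) (q⁻¹ ^ (2 * i)) = 0 := by
  rw [h.inv_eq H, H.cc_eq_zero]
  exact Or.inr rfl

theorem E_N (x : M) : E k n q ^ (n ^ 2) • x = 0 := by rw [rel_En, zero_smul]

theorem sum_N (H : Good k n q) {X : Type} [AddCommGroup X] (f : ℕ → X) :
    ∑ s ∈ Finset.range (n ^ 2), f s = ∑ s ∈ Finset.range (n ^ 2 - 1), f (s + 1) + f 0 := by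
  have := H.sixteen_le
  have e : n ^ 2 = n ^ 2 - 1 + 1 := by omega
  rw [e, Finset.sum_range_succ', ← e]

theorem sum_N' (H : Good k n q) {X : Type} [AddCommGroup X] (f : ℕ → X) :
    ∑ s ∈ Finset.range (n ^ 2), f s = ∑ s ∈ Finset.range (n ^ 2 - 1), f s + f (n ^ 2 - 1) := by
  have := H.sixteen_le
  have e : n ^ 2 = n ^ 2 - 1 + 1 := by omega
  rw [e, Finset.sum_range_succ, ← e]

/-- `F` applied to a combination of the `α`-string. -/
theorem F_sum_al (H : Good k n q) (h : PD n q i j al ga) (b : ℕ → k) :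
    F k n q • ∑ s ∈ Finset.range (n ^ 2), b s • E k n q ^ s • al
      = ∑ s ∈ Finset.range (n ^ 2), (if s < n ^ 2 - 1 then b (s + 1) * cc q (s + 1) (q ^ (2 * i - 2)) else 0) •
        E k n q ^ s • al := by
  rw [Finset.smul_sum, sum_N H, sum_N' H, if_neg (lt_irrefl _), zero_smul, add_zero, pow_zero, one_smul,
    smul_comm, h.Fa, smul_zero, add_zero]
  apply Finset.sum_congr rfl
  intro s hs
  rw [if_pos (Finset.mem_range.mp hs), smul_comm, FE_pow0 H h.wa h.Fa, smul_smul, Nat.add_sub_cancel]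

theorem ga_not_mem (H : Good k n q) (h : PD n q i j al ga) (hne : E k n q ^ (n ^ 2 - 1) • al ≠ 0) :
    E k n q ^ (n ^ 2 - 1) • ga ∉ Ech k n q al := by
  have hN := H.sixteen_le
  have := h.hi
  have := h.hi'
  intro hmem
  have down : ∀ r, r ≤ 2 * i - 2 → E k n q ^ (n ^ 2 - 1 - r) • ga ∈ Ech k n q al := by
    intro r
    induction r with
    | zero => intro _; simpa using hmem
    | succ r ih =>
      intro hr
      have h1 := Ech_F H h.wa h.Fa _ (ih (by omega))
      rw [h.Fg_pow H] at h1
      have h2 := (Submodule.add_mem_iff_right _ (Submodule.smul_mem _ _ (mem_Ech al _))).mp h1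
      rw [Submodule.smul_mem_iff _ (h.cc_ga_ne H (by omega) (by omega) (by omega))] at h2
      exact h2
  have hd := down (2 * i - 2) le_rfl
  rw [show n ^ 2 - 1 - (2 * i - 2) = n ^ 2 - 2 * i + 1 by omega] at hd
  obtain ⟨b, hb⟩ := Ech_repr (E_N al) hd
  have h3 := congrArg (fun x => F k n q • x) hb
  rw [h.F_sum_al H, h.Fg_pow H, h.cc_ga_zero H, zero_smul, add_zero,
    show n ^ 2 - 2 * i + 1 + (2 * i - 2) = n ^ 2 - 1 by omega] at h3
  have h4 := chain_indep_zero (E_N al) hne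
    (fun s => (if s < n ^ 2 - 1 then b (s + 1) * cc q (s + 1) (q ^ (2 * i - 2)) else 0)
      - (if s = n ^ 2 - 1 then q⁻¹ ^ (n ^ 2 - 2 * i + 1) else 0)) (by
      simp only [sub_smul, Finset.sum_sub_distrib]
      rw [← h3]
      simp [ite_smul]
      rw [if_pos (by omega), sub_self]) (n ^ 2 - 1) (by omega)
  simp only [lt_irrefl, if_false, if_true, zero_sub, neg_eq_zero] at h4
  exact pow_ne_zero _ H.inv_ne h4

theorem indep (H : Good k n q) (h : PD n q i j al ga) (hne : E k n q ^ (n ^ 2 - 1) • al ≠ 0) (a b : ℕ → k)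
    (h0 : ∑ s ∈ Finset.range (n ^ 2), b s • E k n q ^ s • al
      + ∑ s ∈ Finset.range (n ^ 2), a s • E k n q ^ s • ga = 0) :
    (∀ s < n ^ 2, b s = 0) ∧ ∀ s < n ^ 2, a s = 0 := by
  have hal : ∑ s ∈ Finset.range (n ^ 2), b s • E k n q ^ s • al ∈ Ech k n q al :=
    Submodule.sum_mem _ fun s _ => Submodule.smul_mem _ _ (mem_Ech al s)
  have ha : ∀ s < n ^ 2, a s = 0 := by
    apply chain_indep (n := n) (q := q) (Ech_E al) (v := ga) (m := n ^ 2)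
    · rw [E_N]; exact Submodule.zero_mem _
    · exact h.ga_not_mem H hne
    · rw [← eq_neg_iff_add_eq_zero] at h0
      rw [← Submodule.neg_mem_iff, ← h0]
      exact hal
  refine ⟨?_, ha⟩
  apply chain_indep_zero (E_N al) hne
  rw [← h0, Finset.sum_congr rfl (g := fun _ => (0 : M)) (s₁ := Finset.range (n ^ 2)) (f := fun s => a s • E k n q ^ s • ga),
    Finset.sum_const_zero, add_zero]
  intro s hs
  rw [ha s (Finset.mem_range.mp hs), zero_smul]

/-- The kernel of `F`. -/
theorem kerF (H : Good k n q) (h : PD n q i j al ga) (hne : E k n q ^ (n ^ 2 - 1) • al ≠ 0) {y : M}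
    (hy : y ∈ Ech k n q al ⊔ Ech k n q ga) (hF : F k n q • y = 0) :
    ∃ b₀ b₁ : k, y = b₀ • al + b₁ • E k n q ^ (2 * i - 1) • al := by
  have hN := H.sixteen_le
  have hi := h.hi
  have hi' := h.hi'
  obtain ⟨y₁, hy₁, y₂, hy₂, rfl⟩ := Submodule.mem_sup.mp hy
  obtain ⟨b, rfl⟩ := Ech_repr (E_N al) hy₁
  obtain ⟨a, rfl⟩ := Ech_repr (E_N ga) hy₂
  set d := n ^ 2 - 2 * i + 1 with hd
  have hFg : F k n q • ∑ s ∈ Finset.range (n ^ 2), a s • E k n q ^ s • ga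
      = ∑ s ∈ Finset.range (n ^ 2), (a s * q⁻¹ ^ s) • E k n q ^ (s + (2 * i - 2)) • al
      + ∑ s ∈ Finset.range (n ^ 2), (if s < n ^ 2 - 1 then a (s + 1) * cc q (s + 1) (q⁻¹ ^ (2 * i)) else 0) •
        E k n q ^ s • ga := by
    rw [sum_N' H (fun s => (if s < n ^ 2 - 1 then a (s + 1) * cc q (s + 1) (q⁻¹ ^ (2 * i)) else 0) •
        E k n q ^ s • ga), if_neg (lt_irrefl _), zero_smul, add_zero]
    have : ∑ s ∈ Finset.range (n ^ 2 - 1), (if s < n ^ 2 - 1 then a (s + 1) * cc q (s + 1) (q⁻¹ ^ (2 * i)) else 0) •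
        E k n q ^ s • ga = ∑ s ∈ Finset.range (n ^ 2), (a s * cc q s (q⁻¹ ^ (2 * i))) • E k n q ^ (s - 1) • ga := by
      rw [sum_N H, cc_zero, mul_zero, zero_smul, add_zero]
      apply Finset.sum_congr rfl
      intro s hs
      rw [if_pos (Finset.mem_range.mp hs), Nat.add_sub_cancel]
    rw [this, ← Finset.sum_add_distrib, Finset.smul_sum]
    apply Finset.sum_congr rfl
    intro s _
    rw [smul_comm, h.Fg_pow H, smul_add, smul_smul, smul_smul]
  rw [smul_add, hFg, h.F_sum_al H] at hF
  have ha : ∀ s < n ^ 2, (if s < n ^ 2 - 1 then a (s + 1) * cc q (s + 1) (q⁻¹ ^ (2 * i)) else 0) = 0 := by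
    apply chain_indep (n := n) (q := q) (Ech_E al) (v := ga) (m := n ^ 2)
    · rw [E_N]; exact Submodule.zero_mem _
    · exact h.ga_not_mem H hne
    · rw [← add_assoc, add_eq_zero_iff_neg_eq'] at hF
      rw [← Submodule.neg_mem_iff, hF]
      exact Submodule.add_mem _ (Submodule.sum_mem _ fun s _ => Submodule.smul_mem _ _ (mem_Ech al s))
        (Submodule.sum_mem _ fun s _ => Submodule.smul_mem _ _ (mem_Ech al _))
  have ha' : ∀ s < n ^ 2, s ≠ 0 → s ≠ d → a s = 0 := by
    intro s hs h0 h1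
    have := ha (s - 1) (by omega)
    rw [if_pos (by omega), Nat.sub_add_cancel (by omega), mul_eq_zero] at this
    exact this.resolve_right (h.cc_ga_ne H (by omega) hs h1)
  have two : ∀ f : ℕ → M, (∀ s < n ^ 2, s ≠ 0 → s ≠ d → f s = 0) →
      ∑ s ∈ Finset.range (n ^ 2), f s = f 0 + f d := by
    intro f hf
    rw [Finset.sum_eq_add_of_mem 0 d (Finset.mem_range.mpr (by omega)) (Finset.mem_range.mpr (by omega)) (by omega)]
    intro s hs h2
    exact hf s (Finset.mem_range.mp hs) h2.1 h2.2
  have hz : ∑ s ∈ Finset.range (n ^ 2), (if s < n ^ 2 - 1 then a (s + 1) * cc q (s + 1) (q⁻¹ ^ (2 * i)) else 0) •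
        E k n q ^ s • ga = 0 := by
    apply Finset.sum_eq_zero
    intro s hs
    rw [ha s (Finset.mem_range.mp hs), zero_smul]
  rw [hz, add_zero, two (fun s => (a s * q⁻¹ ^ s) • E k n q ^ (s + (2 * i - 2)) • al) (fun s hs h0 h1 => by rw [ha' s hs h0 h1, zero_mul, zero_smul]), pow_zero, mul_one,
    zero_add, show d + (2 * i - 2) = n ^ 2 - 1 by omega] at hF
  have h4 := chain_indep_zero (E_N al) hne
    (fun s => (if s < n ^ 2 - 1 then b (s + 1) * cc q (s + 1) (q ^ (2 * i - 2)) else 0)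
      + ((if s = 2 * i - 2 then a 0 else 0) + (if s = n ^ 2 - 1 then a d * q⁻¹ ^ d else 0))) (by
      rw [← hF]
      simp only [add_smul, Finset.sum_add_distrib]
      congr 1
      congr 1
      · simp only [ite_smul, zero_smul]
        rw [Finset.sum_ite_eq', if_pos (Finset.mem_range.mpr (by omega))]
      · simp only [ite_smul, zero_smul]
        rw [Finset.sum_ite_eq', if_pos (Finset.mem_range.mpr (by omega))])
  have hadz : a d = 0 := by
    have := h4 (n ^ 2 - 1) (by omega)
    simp only [lt_irrefl, if_false, if_true] at this
    rw [if_neg (by omega), zero_add, zero_add, mul_eq_zero] at this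
    exact this.resolve_right (pow_ne_zero _ H.inv_ne)
  have ha0 : a 0 = 0 := by
    have := h4 (2 * i - 2) (by omega)
    simp only [if_true] at this
    rw [if_pos (by omega), if_neg (by omega), show 2 * i - 2 + 1 = 2 * i - 1 by omega, h.cc_al_zero H] at this
    simpa using this
  have hb : ∀ s < n ^ 2, s ≠ 0 → s ≠ 2 * i - 1 → b s = 0 := by
    intro s hs h0 h1
    have := h4 (s - 1) (by omega)
    simp only [hadz, ha0, zero_mul, ite_self, add_zero] at this
    rw [if_pos (by omega), Nat.sub_add_cancel (by omega), mul_eq_zero] at this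
    exact this.resolve_right (h.cc_al_ne H (by omega) hs h1)
  refine ⟨b 0, b (2 * i - 1), ?_⟩
  rw [two (fun s => a s • E k n q ^ s • ga) (fun s hs h0 h1 => by rw [ha' s hs h0 h1, zero_smul]), ha0, hadz, zero_smul, zero_smul, add_zero,
    add_zero, Finset.sum_eq_add_of_mem 0 (2 * i - 1) (Finset.mem_range.mpr (by omega)) (Finset.mem_range.mpr (by omega)) (by omega),
    pow_zero, one_smul]
  intro s hs h2
  rw [hb s (Finset.mem_range.mp hs) h2.1 h2.2, zero_smul]

end PD

end Chain
end QFL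


set_option linter.unusedSectionVars false
namespace QFL

section ModelA

variable {k : Type} [Field k] {n : ℕ} {q : k}
variable {M : Type} [AddCommGroup M] [Module k M] [Module (U k n q) M]
  [IsScalarTower k (U k n q) M]

/-- The data of a vector generating a quotient of `S`. -/
structure SD (n : ℕ) (q : k) [Module (U k n q) M] (i j : ℕ) (v : M) : Prop where
  hi : 1 ≤ i
  hi' : 2 * i ≤ n ^ 2
  wt : IsWt n q (q⁻¹ ^ (2 * i)) ((-1) ^ j) v
  Fv : F k n q • v = 0
  Ev : E k n q ^ (n ^ 2 - 2 * i + 1) • v = 0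

/-- a nonzero vector can be pushed into the kernel of `F`. -/
theorem exists_kerF {W : Submodule (U k n q) M} {y : M} (hy : y ∈ W) (hne : y ≠ 0) :
    ∃ y' ∈ W, y' ≠ 0 ∧ F k n q • y' = 0 := by
  classical
  have hex : ∃ s, F k n q ^ s • y = 0 := ⟨n ^ 2, by rw [rel_Fn, zero_smul]⟩
  have h0 : Nat.find hex ≠ 0 := by
    intro h
    have := Nat.find_spec hex
    rw [h, pow_zero, one_smul] at this
    exact hne this
  refine ⟨F k n q ^ (Nat.find hex - 1) • y, W.smul_mem _ hy, Nat.find_min hex (by omega), ?_⟩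
  rw [← mul_smul, ← pow_succ', Nat.sub_add_cancel (by omega)]
  exact Nat.find_spec hex

namespace SD

variable {i j : ℕ} {v : M}

theorem cc_ne (H : Good k n q) (h : SD n q i j v) {s : ℕ} (h0 : 0 < s)
    (h2 : s < n ^ 2 - 2 * i + 1) : cc q s (q⁻¹ ^ (2 * i)) ≠ 0 := by
  have := h.hi
  have := h.hi'
  have e : q⁻¹ ^ (2 * i) = q ^ (n ^ 2 - 2 * i) := by
    rw [inv_pow]
    apply inv_eq_of_mul_eq_one_left
    rw [← pow_add, Nat.sub_add_cancel h.hi', H.q_pow_N]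
  rw [ne_eq, e, H.cc_eq_zero, not_or]
  refine ⟨fun hd => ?_, fun he => ?_⟩
  · have := Nat.le_of_dvd h0 hd; omega
  · have := H.prim.pow_inj (by omega) (by omega) he
    omega

theorem wt_ne (H : Good k n q) : q⁻¹ ^ (2 * i) ≠ 0 := pow_ne_zero _ H.inv_ne

theorem repr (H : Good k n q) (h : SD n q i j v) {x : M} (hx : x ∈ Submodule.span (U k n q) {v}) :
    ∃ c : ℕ → k, x = ∑ s ∈ Finset.range (n ^ 2 - 2 * i + 1), c s • E k n q ^ s • v :=
  Ech_repr h.Ev ((mem_span_iff_Ech H (wt_ne H) h.wt h.Fv x).mp hx)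

theorem linInd (h : SD n q i j v) (hne : E k n q ^ (n ^ 2 - 2 * i) • v ≠ 0) :
    LinearIndependent k (fun a : Fin (n ^ 2 - 2 * i + 1) => E k n q ^ (a : ℕ) • v) := by
  rw [Fintype.linearIndependent_iff]
  intro g hg a
  have := chain_indep_zero h.Ev (by simpa using hne)
    (fun s => if hs : s < n ^ 2 - 2 * i + 1 then g ⟨s, hs⟩ else 0) (by
      rw [Finset.sum_range, ← hg]
      apply Finset.sum_congr rfl
      intro s _
      rw [dif_pos s.2]) a a.2
  rwa [dif_pos a.2] at this

/-- The basis of `S` given by the string. -/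
def basis (H : Good k n q) (h : SD n q i j v) (hne : E k n q ^ (n ^ 2 - 2 * i) • v ≠ 0)
    (gen : ∀ x, x ∈ Submodule.span (U k n q) {v}) : Module.Basis (Fin (n ^ 2 - 2 * i + 1)) k M :=
  Module.Basis.mk (h.linInd hne) (by
    intro x _
    obtain ⟨c, rfl⟩ := h.repr H (gen x)
    rw [Finset.sum_range]
    exact Submodule.sum_mem _ fun s _ => Submodule.smul_mem _ _ (Submodule.subset_span ⟨s, rfl⟩))

theorem basis_apply (H : Good k n q) (h : SD n q i j v) (hne : E k n q ^ (n ^ 2 - 2 * i) • v ≠ 0)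
    (gen : ∀ x, x ∈ Submodule.span (U k n q) {v}) (a : Fin (n ^ 2 - 2 * i + 1)) :
    h.basis H hne gen a = E k n q ^ (a : ℕ) • v := by
  rw [basis, Module.Basis.mk_apply]

theorem kerF (H : Good k n q) (h : SD n q i j v) (hne : E k n q ^ (n ^ 2 - 2 * i) • v ≠ 0)
    (gen : ∀ x, x ∈ Submodule.span (U k n q) {v}) {x : M} (hF : F k n q • x = 0) : ∃ c : k, x = c • v := by
  obtain ⟨c, rfl⟩ := h.repr H (gen x)
  rw [Finset.sum_range_succ'] at hF ⊢
  rw [smul_add, pow_zero, one_smul, smul_comm _ (c 0) v, h.Fv, smul_zero, add_zero, Finset.smul_sum] at hF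
  have h2 : ∀ s < n ^ 2 - 2 * i + 1, (if s < n ^ 2 - 2 * i then c (s + 1) * cc q (s + 1) (q⁻¹ ^ (2 * i)) else 0) = 0 := by
    apply chain_indep_zero h.Ev (by simpa using hne)
    rw [Finset.sum_range_succ, if_neg (lt_irrefl _), zero_smul, add_zero, ← hF]
    apply Finset.sum_congr rfl
    intro s hs
    rw [if_pos (Finset.mem_range.mp hs), smul_comm (F k n q), FE_pow0 H h.wt h.Fv, smul_smul, Nat.add_sub_cancel]
  refine ⟨c 0, ?_⟩
  rw [pow_zero, one_smul, Finset.sum_eq_zero, zero_add]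
  intro s hs
  rw [Finset.mem_range] at hs
  have := h2 s (by omega)
  rw [if_pos hs, mul_eq_zero] at this
  rw [this.resolve_right (h.cc_ne H (by omega) (by omega)), zero_smul]

end SD

theorem IsWt.prod {V : Type} [AddCommGroup V] [Module k V] [Module (U k n q) V]
    {a b : k} {x : M} {y : V} (hx : IsWt n q a b x) (hy : IsWt n q a b y) :
    IsWt n q a b ((x, y) : M × V) :=
  ⟨Prod.ext hx.1 hy.1, Prod.ext hx.2 hy.2⟩

/-- Graph construction of homomorphisms. -/
theorem exists_hom_of_graph {R A V : Type} [Ring R] [AddCommGroup A] [Module R A] [AddCommGroup V] [Module R V]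
    (G : Submodule R (A × V)) (h1 : ∀ a, ∃ v, (a, v) ∈ G) (h2 : ∀ v, ((0 : A), v) ∈ G → v = 0) :
    ∃ f : A →ₗ[R] V, ∀ a v, (a, v) ∈ G → f a = v := by
  obtain ⟨f, hf⟩ := Submodule.exists_eq_graph (G := G) (by
    constructor
    · rintro ⟨⟨a, v⟩, hx⟩ ⟨⟨a', v'⟩, hx'⟩ e
      simp only [Function.comp_apply, Submodule.subtype_apply] at e
      subst e
      have := h2 (v - v') (by simpa using G.sub_mem hx hx')
      rw [sub_eq_zero] at this
      subst this
      rfl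
    · intro a
      obtain ⟨v, hv⟩ := h1 a
      exact ⟨⟨(a, v), hv⟩, rfl⟩)
  refine ⟨f, fun a v hav => ?_⟩
  rw [hf, LinearMap.mem_graph_iff] at hav
  exact hav.symm

theorem exists_mem_graph {R A V : Type} [Ring R] [AddCommGroup A] [Module R A] [AddCommGroup V] [Module R V]
    {x : A} (y : V) (gen : ∀ a, a ∈ Submodule.span R {x}) (a : A) :
    ∃ v, (a, v) ∈ Submodule.span R {((x, y) : A × V)} := by
  obtain ⟨r, rfl⟩ := Submodule.mem_span_singleton.mp (gen a)
  exact ⟨r • y, Submodule.mem_span_singleton.mpr ⟨r, rfl⟩⟩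

theorem SD.exists_hom (H : Good k n q) {i j : ℕ} {v : M} (h : SD n q i j v)
    (hne : E k n q ^ (n ^ 2 - 2 * i) • v ≠ 0)
    (gen : ∀ x, x ∈ Submodule.span (U k n q) {v})
    {V : Type} [AddCommGroup V] [Module k V] [Module (U k n q) V] [IsScalarTower k (U k n q) V]
    {y : V} (hy : SD n q i j y) : ∃ f : M →ₗ[U k n q] V, f v = y := by
  have hp : SD n q i j ((v, y) : M × V) :=
    ⟨h.hi, h.hi', h.wt.prod hy.wt, Prod.ext h.Fv hy.Fv, Prod.ext h.Ev hy.Ev⟩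
  obtain ⟨f, hf⟩ := exists_hom_of_graph (Submodule.span (U k n q) {((v, y) : M × V)})
    (exists_mem_graph y gen) (by
      intro w hw
      obtain ⟨c, hc⟩ := hp.repr H hw
      have h1 := congrArg Prod.fst hc
      have h2 := congrArg Prod.snd hc
      simp only [Prod.fst_sum, Prod.snd_sum, Prod.smul_fst, Prod.smul_snd] at h1 h2
      have h3 := chain_indep_zero h.Ev (by simpa using hne) c h1.symm
      rw [h2]
      apply Finset.sum_eq_zero
      intro s hs
      rw [h3 s (Finset.mem_range.mp hs), zero_smul])
  exact ⟨f, hf _ _ (Submodule.mem_span_singleton_self _)⟩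

namespace PD
variable {i j : ℕ} {al ga : M}

theorem al_mem (H : Good k n q) (h : PD n q i j al ga) {W : Submodule (U k n q) M} (hg : ga ∈ W) : al ∈ W := by
  have hi := h.hi
  have hi' := h.hi'
  have hN := H.sixteen_le
  have down : ∀ r, r ≤ 2 * i - 2 → E k n q ^ (2 * i - 2 - r) • al ∈ W := by
    intro r
    induction r with
    | zero => intro _; rw [Nat.sub_zero, ← h.Fg]; exact W.smul_mem _ hg
    | succ r ih =>
      intro hr
      have h1 := W.smul_mem (F k n q) (ih (by omega))
      rw [FE_pow0 H h.wa h.Fa] at h1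
      exact ((W.restrictScalars k).smul_mem_iff (h.cc_al_ne H (by omega) (by omega) (by omega))).mp h1
  have := down (2 * i - 2) le_rfl
  rwa [Nat.sub_self, pow_zero, one_smul] at this

theorem mem_span_iff (H : Good k n q) (h : PD n q i j al ga) (x : M) :
    x ∈ Submodule.span (U k n q) {ga} ↔ x ∈ Ech k n q al ⊔ Ech k n q ga := by
  constructor
  · intro hx
    obtain ⟨u, rfl⟩ := Submodule.mem_span_singleton.mp hx
    exact h.smul_mem H u _ ((le_sup_right : Ech k n q ga ≤ Ech k n q al ⊔ Ech k n q ga) (self_mem_Ech ga))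
  · intro hx
    obtain ⟨y, hy, z, hz, rfl⟩ := Submodule.mem_sup.mp hx
    have hg := Submodule.mem_span_singleton_self (R := U k n q) ga
    exact Submodule.add_mem _ (Ech_le_span al (h.al_mem H hg) hy) (Ech_le_span ga hg hz)

/-- every nonzero submodule contains the bottom vector -/
theorem om_mem (H : Good k n q) (h : PD n q i j al ga) (hne : E k n q ^ (n ^ 2 - 1) • al ≠ 0)
    {W : Submodule (U k n q) M} (hW : W ≤ Submodule.span (U k n q) {ga}) (h0 : W ≠ ⊥) :
    E k n q ^ (n ^ 2 - 1) • al ∈ W := by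
  have hi := h.hi
  have hi' := h.hi'
  have hN := H.sixteen_le
  obtain ⟨y, hy, hy0⟩ := Submodule.exists_mem_ne_zero_of_ne_bot h0
  obtain ⟨y', hy', hne', hF⟩ := exists_kerF hy hy0
  obtain ⟨b₀, b₁, hb⟩ := h.kerF H hne ((h.mem_span_iff H _).mp (hW hy')) hF
  by_cases hb0 : b₀ = 0
  · rw [hb0, zero_smul, zero_add] at hb
    have hb1 : b₁ ≠ 0 := by
      rintro rfl
      rw [zero_smul] at hb
      exact hne' hb
    have h1 := W.smul_mem (E k n q ^ (n ^ 2 - 2 * i)) hy'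
    rw [hb, smul_comm, Epow_add, show n ^ 2 - 2 * i + (2 * i - 1) = n ^ 2 - 1 by omega] at h1
    exact ((W.restrictScalars k).smul_mem_iff hb1).mp h1
  · have h1 := W.smul_mem (E k n q ^ (n ^ 2 - 1)) hy'
    rw [hb, smul_add, smul_comm, smul_comm _ b₁, Epow_add, pow_E_eq_zero (s := n ^ 2 - 1 + (2 * i - 1)) (by omega),
      zero_smul, smul_zero, add_zero] at h1
    exact ((W.restrictScalars k).smul_mem_iff hb0).mp h1

theorem sig_mem (H : Good k n q) (h : PD n q i j al ga)
    {W : Submodule (U k n q) M} (hW : E k n q ^ (n ^ 2 - 1) • al ∈ W) : E k n q ^ (2 * i - 1) • al ∈ W := by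
  have hi := h.hi
  have hi' := h.hi'
  have hN := H.sixteen_le
  have down : ∀ r, r ≤ n ^ 2 - 2 * i → E k n q ^ (n ^ 2 - 1 - r) • al ∈ W := by
    intro r
    induction r with
    | zero => intro _; exact hW
    | succ r ih =>
      intro hr
      have h1 := W.smul_mem (F k n q) (ih (by omega))
      rw [FE_pow0 H h.wa h.Fa] at h1
      exact ((W.restrictScalars k).smul_mem_iff (h.cc_al_ne H (by omega) (by omega) (by omega))).mp h1
  have := down (n ^ 2 - 2 * i) le_rfl
  rwa [show n ^ 2 - 1 - (n ^ 2 - 2 * i) = 2 * i - 1 by omega] at this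

theorem sig_SD (H : Good k n q) (h : PD n q i j al ga) : SD n q i j (E k n q ^ (2 * i - 1) • al) := by
  have hi := h.hi
  have hi' := h.hi'
  have hN := H.sixteen_le
  refine ⟨hi, hi', ?_, ?_, ?_⟩
  · have := H.wtEpow h.wa (2 * i - 1)
    have e1 : q ^ (2 * i - 2) * q⁻¹ ^ (2 * (2 * i - 1)) = q⁻¹ ^ (2 * i) := by
      rw [show 2 * (2 * i - 1) = (2 * i - 2) + 2 * i by omega, pow_add, ← mul_assoc, ← mul_pow,
        mul_inv_cancel₀ H.q_ne, one_pow, one_mul]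
    have e2 : (-1 : k) ^ (2 * i - 1) * (-1) ^ (j + 1) = (-1) ^ j := by
      rw [← pow_add, show 2 * i - 1 + (j + 1) = 2 * i + j by omega, pow_add, pow_mul]
      simp
    rwa [e1, e2] at this
  · rw [FE_pow0 H h.wa h.Fa, h.cc_al_zero H, zero_smul]
  · rw [Epow_add, pow_E_eq_zero (by omega), zero_smul]

theorem sig_ne (h : PD n q i j al ga) (hne : E k n q ^ (n ^ 2 - 1) • al ≠ 0) :
    E k n q ^ (n ^ 2 - 2 * i) • E k n q ^ (2 * i - 1) • al ≠ 0 := by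
  have hi := h.hi
  have hi' := h.hi'
  rwa [Epow_add, show n ^ 2 - 2 * i + (2 * i - 1) = n ^ 2 - 1 by omega]

theorem repr (H : Good k n q) (h : PD n q i j al ga) {x : M} (hx : x ∈ Submodule.span (U k n q) {ga}) :
    ∃ b a : ℕ → k, x = ∑ s ∈ Finset.range (n ^ 2), b s • E k n q ^ s • al
      + ∑ s ∈ Finset.range (n ^ 2), a s • E k n q ^ s • ga := by
  obtain ⟨y, hy, z, hz, rfl⟩ := Submodule.mem_sup.mp ((h.mem_span_iff H x).mp hx)
  obtain ⟨b, rfl⟩ := Ech_repr (E_N al) hy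
  obtain ⟨a, rfl⟩ := Ech_repr (E_N ga) hz
  exact ⟨b, a, rfl⟩

theorem exists_hom (H : Good k n q) (h : PD n q i j al ga)
    (hne : E k n q ^ (n ^ 2 - 1) • al ≠ 0)
    (gen : ∀ x, x ∈ Submodule.span (U k n q) {ga})
    {V : Type} [AddCommGroup V] [Module k V] [Module (U k n q) V] [IsScalarTower k (U k n q) V]
    {y z : V} (hy : PD n q i j y z) : ∃ f : M →ₗ[U k n q] V, f al = y := by
  have hp : PD n q i j ((al, y) : M × V) ((ga, z) : M × V) :=
    ⟨h.hi, h.hi', h.wa.prod hy.wa, h.wg.prod hy.wg, Prod.ext h.Fa hy.Fa, Prod.ext h.Fg hy.Fg⟩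
  obtain ⟨f, hf⟩ := exists_hom_of_graph (Submodule.span (U k n q) {((ga, z) : M × V)})
    (exists_mem_graph z gen) (by
      intro w hw
      obtain ⟨b, a, hc⟩ := hp.repr H hw
      have h1 := congrArg Prod.fst hc
      have h2 := congrArg Prod.snd hc
      simp only [Prod.fst_sum, Prod.snd_sum, Prod.smul_fst, Prod.smul_snd, Prod.fst_add, Prod.snd_add] at h1 h2
      obtain ⟨h3, h4⟩ := h.indep H hne a b h1.symm
      rw [h2, Finset.sum_eq_zero, Finset.sum_eq_zero, add_zero]
      · intro s hs
        rw [h4 s (Finset.mem_range.mp hs), zero_smul]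
      · intro s hs
        rw [h3 s (Finset.mem_range.mp hs), zero_smul])
  exact ⟨f, hf _ _ (hp.al_mem H (Submodule.mem_span_singleton_self _))⟩

theorem linInd (H : Good k n q) (h : PD n q i j al ga) (hne : E k n q ^ (n ^ 2 - 1) • al ≠ 0) :
    LinearIndependent k (Sum.elim (fun a : Fin (n ^ 2) => E k n q ^ (a : ℕ) • al)
      (fun a : Fin (n ^ 2) => E k n q ^ (a : ℕ) • ga)) := by
  rw [Fintype.linearIndependent_iff]
  intro g hg
  rw [Fintype.sum_sum_type] at hg
  have := h.indep H hne (fun s => if hs : s < n ^ 2 then g (Sum.inr ⟨s, hs⟩) else 0)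
    (fun s => if hs : s < n ^ 2 then g (Sum.inl ⟨s, hs⟩) else 0) (by
      rw [Finset.sum_range, Finset.sum_range, ← hg]
      congr 1
      · apply Finset.sum_congr rfl
        intro s _
        rw [dif_pos s.2]
        rfl
      · apply Finset.sum_congr rfl
        intro s _
        rw [dif_pos s.2]
        rfl)
  rintro (a | a)
  · simpa using this.1 a a.2
  · simpa using this.2 a a.2

/-- The basis of `P` given by two strings. -/
def basis (H : Good k n q) (h : PD n q i j al ga) (hne : E k n q ^ (n ^ 2 - 1) • al ≠ 0)
    (gen : ∀ x, x ∈ Submodule.span (U k n q) {ga}) : Module.Basis (Fin (n ^ 2) ⊕ Fin (n ^ 2)) k M :=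
  Module.Basis.mk (h.linInd H hne) (by
    intro x _
    obtain ⟨c, c', rfl⟩ := h.repr H (gen x)
    rw [Finset.sum_range, Finset.sum_range]
    exact Submodule.add_mem _
      (Submodule.sum_mem _ fun s _ => Submodule.smul_mem _ _ (Submodule.subset_span ⟨Sum.inl s, rfl⟩))
      (Submodule.sum_mem _ fun s _ => Submodule.smul_mem _ _ (Submodule.subset_span ⟨Sum.inr s, rfl⟩)))

theorem finrank_eq (H : Good k n q) (h : PD n q i j al ga) (hne : E k n q ^ (n ^ 2 - 1) • al ≠ 0)
    (gen : ∀ x, x ∈ Submodule.span (U k n q) {ga}) : Module.finrank k M = 2 * n ^ 2 := by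
  rw [Module.finrank_eq_card_basis (h.basis H hne gen), Fintype.card_sum, Fintype.card_fin]
  ring

end PD

theorem IsWt.sub {W : Submodule (U k n q) M} {a b : k} {x : W} (hx : IsWt n q a b (x : M)) :
    IsWt n q a b x := ⟨Subtype.ext hx.1, Subtype.ext hx.2⟩

theorem gen_sub {R A : Type} [Ring R] [AddCommGroup A] [Module R A] {W : Submodule R A} {x : A}
    (hW : W = Submodule.span R {x}) (hx : x ∈ W) (y : W) : y ∈ Submodule.span R {(⟨x, hx⟩ : W)} := by
  have : (y : A) ∈ Submodule.span R {x} := hW.le y.2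
  obtain ⟨r, hr⟩ := Submodule.mem_span_singleton.mp this
  exact Submodule.mem_span_singleton.mpr ⟨r, Subtype.ext hr⟩

theorem PD.sub {i j : ℕ} {al ga : M} (h : PD n q i j al ga) {W : Submodule (U k n q) M} (h1 : al ∈ W)
    (h2 : ga ∈ W) : PD n q i j (⟨al, h1⟩ : W) (⟨ga, h2⟩ : W) :=
  ⟨h.hi, h.hi', h.wa.sub, h.wg.sub, Subtype.ext h.Fa, Subtype.ext h.Fg⟩

theorem SD.sub {i j : ℕ} {v : M} (h : SD n q i j v) {W : Submodule (U k n q) M} (h1 : v ∈ W) :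
    SD n q i j (⟨v, h1⟩ : W) :=
  ⟨h.hi, h.hi', h.wt.sub, Subtype.ext h.Fv, Subtype.ext h.Ev⟩

/-- the socle -/
theorem PD.socle (H : Good k n q) {i j : ℕ} {al ga : M} (h : PD n q i j al ga)
    (hne : E k n q ^ (n ^ 2 - 1) • al ≠ 0) :
    sSup {N : Submodule (U k n q) M | N ≤ Submodule.span (U k n q) {ga} ∧ IsSimpleModule (U k n q) N}
      = Submodule.span (U k n q) {E k n q ^ (2 * i - 1) • al} := by
  have hT : Submodule.span (U k n q) {E k n q ^ (2 * i - 1) • al} ≤ Submodule.span (U k n q) {ga} := by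
    rw [Submodule.span_singleton_le_iff_mem]
    exact Submodule.smul_mem _ _ (h.al_mem H (Submodule.mem_span_singleton_self _))
  have key : ∀ W : Submodule (U k n q) M, W ≤ Submodule.span (U k n q) {ga} → W ≠ ⊥ →
      Submodule.span (U k n q) {E k n q ^ (2 * i - 1) • al} ≤ W := by
    intro W hW h0
    rw [Submodule.span_singleton_le_iff_mem]
    exact h.sig_mem H (h.om_mem H hne hW h0)
  have hT0 : Submodule.span (U k n q) {E k n q ^ (2 * i - 1) • al} ≠ ⊥ := by
    rw [ne_eq, Submodule.span_singleton_eq_bot]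
    intro h0
    have := h.sig_ne hne
    rw [h0, smul_zero] at this
    exact this rfl
  apply le_antisymm
  · apply sSup_le
    rintro W ⟨hW, hs⟩
    rw [isSimpleModule_iff_isAtom] at hs
    rcases hs.le_iff.mp (key W hW hs.1) with h1 | h1
    · exact absurd h1 hT0
    · rw [h1]
  · apply le_sSup
    refine ⟨hT, ?_⟩
    rw [isSimpleModule_iff_isAtom]
    refine ⟨hT0, fun B hB => ?_⟩
    by_contra h0
    exact absurd (key B (hB.le.trans hT) h0) (not_le_of_gt hB)

end ModelA

section ModelB

variable {k : Type} [Field k] [CharZero k] {n : ℕ} {q : k}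

theorem alpha_gam_PD (H : Good k n q) {i j : ℕ} (hi : 1 ≤ i) (hi' : i ≤ n ^ 2 / 2) (hj : j ≤ 1) :
    PD n q i j (alpha k n q i j) (gam k n q i j) :=
  ⟨hi, by omega, alpha_wt H hi hj, gam_wt H hi hi' hj, F_alpha H i j, (gam_spec H hi hi' hj).2⟩

theorem P_model (H : Good k n q) {i j : ℕ} (hi : 1 ≤ i) (hi' : i ≤ n ^ 2 / 2) (hj : j ≤ 1) :
    ∃ al ga : P k n q i j, PD n q i j al ga ∧ E k n q ^ (n ^ 2 - 1) • al ≠ 0 ∧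
      ∀ x, x ∈ Submodule.span (U k n q) {ga} := by
  have h := alpha_gam_PD H hi hi' hj
  have hg : gam k n q i j ∈ P k n q i j := Submodule.mem_span_singleton_self _
  refine ⟨⟨_, h.al_mem H hg⟩, ⟨_, hg⟩, h.sub _ _, ?_, gen_sub rfl hg⟩
  intro h0
  exact E_pow_alpha_ne H i hj (congrArg Subtype.val h0)

theorem S_model (H : Good k n q) {i j : ℕ} (hi : 1 ≤ i) (hi' : i ≤ n ^ 2 / 2) (hj : j ≤ 1) :
    ∃ v : S k n q i j, SD n q i j v ∧ E k n q ^ (n ^ 2 - 2 * i) • v ≠ 0 ∧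
      ∀ x, x ∈ Submodule.span (U k n q) {v} := by
  have h := alpha_gam_PD H hi hi' hj
  have hne : E k n q ^ (n ^ 2 - 1) • alpha k n q i j ≠ 0 := E_pow_alpha_ne H i hj
  have hS : S k n q i j = _ := h.socle H hne
  have hm : E k n q ^ (2 * i - 1) • alpha k n q i j ∈ S k n q i j := by
    rw [hS]; exact Submodule.mem_span_singleton_self _
  refine ⟨⟨_, hm⟩, (h.sig_SD H).sub _, ?_, gen_sub hS hm⟩
  intro h0
  exact h.sig_ne hne (congrArg Subtype.val h0)

end ModelB
end QFL


set_option linter.unusedSectionVars false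
namespace QFL

section Graded

variable {k : Type} [Field k] {n : ℕ} {q : k}
variable {V : Type} [AddCommGroup V] [Module k V] [Module (U k n q) V]
  [IsScalarTower k (U k n q) V]

/-- Bigraded module data (the tensor product of two strings of lengths `s`, `t`). -/
structure TD (n : ℕ) (q : k) (V : Type) [AddCommGroup V] [Module k V] [Module (U k n q) V]
    (s t : ℕ) (A B : k) where
  bas : Module.Basis (Fin s × Fin t) k V
  w : ℕ → ℕ → V
  hw : ∀ p : Fin s × Fin t, bas p = w p.1 p.2
  hw0 : ∀ a b, s ≤ a ∨ t ≤ b → w a b = 0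
  X : ℕ → ℕ → k
  Y : ℕ → ℕ → k
  X' : ℕ → ℕ → k
  Y' : ℕ → ℕ → k
  hE : ∀ a b, a < s → b < t → E k n q • w a b = X a b • w (a + 1) b + Y a b • w a (b + 1)
  hF : ∀ a b, a < s → b < t → F k n q • w a b = X' a b • w (a - 1) b + Y' a b • w a (b - 1)
  hX : ∀ a b, a < s → b < t → X a b ≠ 0
  hY : ∀ a b, a < s → b < t → Y a b ≠ 0
  hX' : ∀ a b, 0 < a → a < s → b < t → X' a b ≠ 0
  hY' : ∀ a b, 0 < b → a < s → b < t → Y' a b ≠ 0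
  hX0 : ∀ b, X' 0 b = 0
  hY0 : ∀ a, Y' a 0 = 0
  hwt : ∀ a b, a < s → b < t → IsWt n q (A * q⁻¹ ^ (2 * (a + b))) ((-1) ^ (a + b) * B) (w a b)

namespace TD

variable {s t : ℕ} {A B : k} (D : TD n q V s t A B)

/-- Coordinates. -/
def co (a b : ℕ) : V →ₗ[k] k :=
  if h : a < s ∧ b < t then D.bas.coord (⟨a, h.1⟩, ⟨b, h.2⟩) else 0

theorem co_out {a b : ℕ} (h : ¬ (a < s ∧ b < t)) (x : V) : D.co a b x = 0 := by
  rw [co, dif_neg h]; rfl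

theorem co_w (a b a' b' : ℕ) : D.co a b (D.w a' b') = if a < s ∧ b < t ∧ a = a' ∧ b = b' then 1 else 0 := by
  by_cases h' : a' < s ∧ b' < t
  · by_cases h : a < s ∧ b < t
    · have : D.w a' b' = D.bas (⟨a', h'.1⟩, ⟨b', h'.2⟩) :=
        (D.hw (⟨a', h'.1⟩, ⟨b', h'.2⟩)).symm
      rw [this, co, dif_pos h, Module.Basis.coord_apply, Module.Basis.repr_self, Finsupp.single_apply]
      simp only [Prod.mk.injEq, Fin.mk.injEq]
      by_cases e : a = a' ∧ b = b'
      · rw [if_pos ⟨e.1.symm, e.2.symm⟩, if_pos ⟨h.1, h.2, e.1, e.2⟩]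
      · rw [if_neg (fun hh => e ⟨hh.1.symm, hh.2.symm⟩), if_neg (fun hh => e hh.2.2)]
    · rw [D.co_out h, if_neg (by tauto)]
  · rw [D.hw0 a' b' (by omega), map_zero, if_neg (by omega)]

theorem eq_zero {x : V} (h : ∀ a b, D.co a b x = 0) : x = 0 := by
  apply D.bas.forall_coord_eq_zero_iff.mp
  rintro ⟨a, b⟩
  have := h a b
  rwa [co, dif_pos ⟨a.2, b.2⟩] at this

theorem sum_eq (x : V) : x = ∑ p : Fin s × Fin t, D.co p.1 p.2 x • D.w p.1 p.2 := by
  conv_lhs => rw [← D.bas.sum_repr x]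
  apply Finset.sum_congr rfl
  rintro ⟨a, b⟩ _
  rw [D.hw, co, dif_pos ⟨a.2, b.2⟩, Module.Basis.coord_apply]

theorem co_E (x : V) {a b : ℕ} (ha : a < s) (hb : b < t) : D.co a b (E k n q • x)
    = (if a = 0 then 0 else D.X (a - 1) b * D.co (a - 1) b x)
      + (if b = 0 then 0 else D.Y a (b - 1) * D.co a (b - 1) x) := by
  let f : V →ₗ[k] k := D.co a b ∘ₗ (Algebra.lsmul k k V (E k n q))
  let g : V →ₗ[k] k := (if a = 0 then 0 else D.X (a - 1) b • D.co (a - 1) b)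
      + (if b = 0 then 0 else D.Y a (b - 1) • D.co a (b - 1))
  have : f = g := by
    apply D.bas.ext
    rintro ⟨a', b'⟩
    have ha' := a'.2
    have hb' := b'.2
    rw [D.hw]
    change D.co a b (E k n q • D.w a' b') = g (D.w a' b')
    rw [D.hE a' b' a'.2 b'.2, map_add, map_smul, map_smul, D.co_w, D.co_w]
    simp only [g, LinearMap.add_apply]
    congr 1
    · by_cases h0 : a = 0
      · rw [if_neg (by omega), if_pos h0]; simp
      · rw [if_neg h0, LinearMap.smul_apply, D.co_w]
        by_cases h1 : a - 1 = a' ∧ b = b'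
        · rw [if_pos (by omega), if_pos (by omega), h1.1, h1.2]
        · rw [if_neg (by omega), if_neg (by omega)]; simp
    · by_cases h0 : b = 0
      · rw [if_neg (by omega), if_pos h0]; simp
      · rw [if_neg h0, LinearMap.smul_apply, D.co_w]
        by_cases h1 : a = a' ∧ b - 1 = b'
        · rw [if_pos (by omega), if_pos (by omega), h1.1, h1.2]
        · rw [if_neg (by omega), if_neg (by omega)]; simp
  have h2 := LinearMap.congr_fun this x
  change D.co a b (E k n q • x) = g x at h2
  rw [h2]
  simp only [g, LinearMap.add_apply]
  split_ifs <;> simp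

theorem co_F (x : V) {a b : ℕ} (ha : a < s) (_hb : b < t) : D.co a b (F k n q • x)
    = D.X' (a + 1) b * D.co (a + 1) b x + D.Y' a (b + 1) * D.co a (b + 1) x := by
  let f : V →ₗ[k] k := D.co a b ∘ₗ (Algebra.lsmul k k V (F k n q))
  let g : V →ₗ[k] k := D.X' (a + 1) b • D.co (a + 1) b + D.Y' a (b + 1) • D.co a (b + 1)
  have : f = g := by
    apply D.bas.ext
    rintro ⟨a', b'⟩
    have ha' := a'.2
    have hb' := b'.2
    rw [D.hw]
    change D.co a b (F k n q • D.w a' b') = g (D.w a' b')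
    rw [D.hF a' b' a'.2 b'.2, map_add, map_smul, map_smul, D.co_w, D.co_w]
    simp only [g, LinearMap.add_apply]
    congr 1
    · rw [LinearMap.smul_apply, D.co_w]
      by_cases h0 : (a' : ℕ) = 0
      · rw [h0, D.hX0, zero_smul, if_neg (by omega), smul_zero]
      · by_cases h1 : a + 1 = a' ∧ b = b'
        · rw [if_pos (by omega), if_pos (by omega), h1.1, h1.2]
        · rw [if_neg (by omega), if_neg (by omega)]; simp
    · rw [LinearMap.smul_apply, D.co_w]
      by_cases h0 : (b' : ℕ) = 0
      · rw [h0, D.hY0, zero_smul, if_neg (by omega), smul_zero]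
      · by_cases h1 : a = a' ∧ b + 1 = b'
        · rw [if_pos (by omega), if_pos (by omega), h1.1, h1.2]
        · rw [if_neg (by omega), if_neg (by omega)]; simp
  exact LinearMap.congr_fun this x

/-- Homogeneous vectors of degree `m`. -/
def Vm (m : ℕ) : Submodule k V where
  carrier := {x | ∀ a b, a + b ≠ m → D.co a b x = 0}
  add_mem' := by
    intro x y hx hy a b h
    rw [map_add, hx a b h, hy a b h, add_zero]
  zero_mem' := by intro a b _; rw [map_zero]
  smul_mem' := by
    intro c x hx a b h
    rw [map_smul, hx a b h, smul_zero]

theorem w_mem (a b : ℕ) : D.w a b ∈ D.Vm (a + b) := by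
  intro a' b' h
  rw [D.co_w, if_neg (by omega)]

theorem E_mem {m : ℕ} {x : V} (hx : x ∈ D.Vm m) : E k n q • x ∈ D.Vm (m + 1) := by
  intro a b h
  by_cases hr : a < s ∧ b < t
  · rw [D.co_E x hr.1 hr.2]
    have h1 : (if a = 0 then 0 else D.X (a - 1) b * D.co (a - 1) b x) = 0 := by
      split_ifs
      · rfl
      · rw [hx _ _ (by omega), mul_zero]
    have h2 : (if b = 0 then 0 else D.Y a (b - 1) * D.co a (b - 1) x) = 0 := by
      split_ifs
      · rfl
      · rw [hx _ _ (by omega), mul_zero]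
    rw [h1, h2, add_zero]
  · exact D.co_out hr _

theorem E_pow_mem {m : ℕ} {x : V} (hx : x ∈ D.Vm m) (r : ℕ) : E k n q ^ r • x ∈ D.Vm (m + r) := by
  induction r with
  | zero => simpa using hx
  | succ r ih =>
    rw [pow_succ', mul_smul, ← add_assoc]
    exact D.E_mem ih

theorem F_mem {m : ℕ} {x : V} (hx : x ∈ D.Vm (m + 1)) : F k n q • x ∈ D.Vm m := by
  intro a b h
  by_cases hr : a < s ∧ b < t
  · rw [D.co_F x hr.1 hr.2, hx _ _ (by omega), hx _ _ (by omega), mul_zero, mul_zero, add_zero]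
  · exact D.co_out hr _

theorem F_zero {x : V} (hx : x ∈ D.Vm 0) : F k n q • x = 0 := by
  apply D.eq_zero
  intro a b
  by_cases hr : a < s ∧ b < t
  · rw [D.co_F x hr.1 hr.2, hx _ _ (by omega), hx _ _ (by omega), mul_zero, mul_zero, add_zero]
  · exact D.co_out hr _

/-- `F` is injective in high degrees -/
theorem F_inj {m : ℕ} (hm : t ≤ m) {x : V} (hx : x ∈ D.Vm m) (hF : F k n q • x = 0) : x = 0 := by
  apply D.eq_zero
  intro a
  induction a with
  | zero =>
    intro b
    by_cases hb : 0 + b = m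
    · exact D.co_out (by omega) _
    · exact hx _ _ hb
  | succ a ih =>
    intro b
    by_cases hr : a + 1 < s ∧ b < t
    · have h1 := D.co_F x (a := a) (b := b) (by omega) hr.2
      rw [hF, map_zero, ih, mul_zero, add_zero, zero_eq_mul] at h1
      exact h1.resolve_left (D.hX' _ _ (by omega) hr.1 hr.2)
    · exact D.co_out hr _

/-- `E` is injective in low degrees -/
theorem E_inj {m : ℕ} (hm : m + 1 < s) {x : V} (hx : x ∈ D.Vm m) (hE : E k n q • x = 0) : x = 0 := by
  have key : ∀ b a, D.co a b x = 0 := by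
    intro b
    induction b with
    | zero =>
      intro a
      by_cases ha : a + 0 = m
      · by_cases ht : 0 < t
        · have h1 := D.co_E x (a := a + 1) (b := 0) (by omega) ht
          rw [hE, map_zero, if_neg (by omega), if_pos rfl, add_zero, zero_eq_mul, Nat.add_sub_cancel] at h1
          exact h1.resolve_left (D.hX _ _ (by omega) ht)
        · exact D.co_out (by omega) _
      · exact hx _ _ ha
    | succ b ih =>
      intro a
      by_cases ha : a + (b + 1) = m
      · by_cases ht : b + 1 < t
        · have h1 := D.co_E x (a := a + 1) (b := b + 1) (by omega) ht
          rw [hE, map_zero, if_neg (by omega), if_neg (by omega), Nat.add_sub_cancel, Nat.add_sub_cancel, ih, mul_zero,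
            add_zero, zero_eq_mul] at h1
          exact h1.resolve_left (D.hX _ _ (by omega) ht)
        · exact D.co_out (by omega) _
      · exact hx _ _ ha
  exact D.eq_zero fun a b => key b a

theorem E_pow_ne {m r : ℕ} (hm : m + r < s) {x : V} (hx : x ∈ D.Vm m) (h0 : x ≠ 0) : E k n q ^ r • x ≠ 0 := by
  induction r with
  | zero => simpa using h0
  | succ r ih =>
    intro h1
    rw [pow_succ', mul_smul] at h1
    exact ih (by omega) (D.E_inj (m := m + r) (by omega) (D.E_pow_mem hx r) h1)

theorem mem_of_w {m : ℕ} {W : Submodule k V} (hW : ∀ a b, a + b = m → a < s → b < t → D.w a b ∈ W) {x : V}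
    (hx : x ∈ D.Vm m) : x ∈ W := by
  rw [D.sum_eq x]
  apply Submodule.sum_mem
  rintro ⟨a, b⟩ _
  by_cases h : (a : ℕ) + b = m
  · exact W.smul_mem _ (hW a b h a.2 b.2)
  · simp only
    rw [hx _ _ h, zero_smul]
    exact W.zero_mem

/-- `F` is surjective in low degrees -/
theorem F_surj {m : ℕ} (hm : m + 1 < t) {y : V} (hy : y ∈ D.Vm m) :
    ∃ x ∈ D.Vm (m + 1), D.co (m + 1) 0 x = 0 ∧ F k n q • x = y := by
  let W : Submodule k V := (D.Vm (m + 1) ⊓ LinearMap.ker (D.co (m + 1) 0)).map (Algebra.lsmul k k V (F k n q))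
  have hW : ∀ a b, a + b = m → a < s → b < t → D.w a b ∈ W := by
    intro a
    induction a with
    | zero =>
      intro b hb ha hb'
      have h1 := D.hF 0 (b + 1) ha (by omega)
      rw [D.hX0, zero_smul, zero_add, Nat.add_sub_cancel] at h1
      have h2 : F k n q • D.w 0 (b + 1) ∈ W := by
        refine ⟨_, ⟨?_, ?_⟩, rfl⟩
        · have := D.w_mem 0 (b + 1)
          rwa [show 0 + (b + 1) = m + 1 by omega] at this
        · rw [SetLike.mem_coe, LinearMap.mem_ker, D.co_w, if_neg (by omega)]
      rw [h1] at h2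
      exact (W.smul_mem_iff (D.hY' _ _ (by omega) ha (by omega))).mp h2
    | succ a ih =>
      intro b hb ha hb'
      have h1 := D.hF (a + 1) (b + 1) ha (by omega)
      rw [Nat.add_sub_cancel, Nat.add_sub_cancel] at h1
      have h2 : F k n q • D.w (a + 1) (b + 1) ∈ W := by
        refine ⟨_, ⟨?_, ?_⟩, rfl⟩
        · have := D.w_mem (a + 1) (b + 1)
          rwa [show a + 1 + (b + 1) = m + 1 by omega] at this
        · rw [SetLike.mem_coe, LinearMap.mem_ker, D.co_w, if_neg (by omega)]
      rw [h1, Submodule.add_mem_iff_right _ (W.smul_mem _ (ih (b + 1) (by omega) (by omega) (by omega)))] at h2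
      exact (W.smul_mem_iff (D.hY' _ _ (by omega) ha (by omega))).mp h2
  obtain ⟨x, ⟨h1, h2⟩, h3⟩ := D.mem_of_w hW hy
  exact ⟨x, h1, h2, h3⟩

theorem exists_v (hst : t ≤ s) {m : ℕ} (hm : m < t) : ∃ v ∈ D.Vm m, v ≠ 0 ∧ F k n q • v = 0 := by
  have h1 : D.co m 0 (D.w m 0) = 1 := by rw [D.co_w, if_pos (by omega)]
  cases m with
  | zero =>
    have hw := D.w_mem 0 0
    refine ⟨D.w 0 0, hw, ?_, D.F_zero hw⟩
    intro h0
    rw [h0, map_zero] at h1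
    exact zero_ne_one h1
  | succ m =>
    have hw : D.w (m + 1) 0 ∈ D.Vm (m + 1) := D.w_mem (m + 1) 0
    obtain ⟨x, hx, hx0, hxF⟩ := D.F_surj hm (D.F_mem hw)
    refine ⟨D.w (m + 1) 0 - x, Submodule.sub_mem _ hw hx, ?_, by rw [smul_sub, hxF, sub_self]⟩
    intro h0
    rw [← sub_zero (D.co (m + 1) 0 (D.w (m + 1) 0)), ← hx0, ← map_sub, h0, map_zero] at h1
    exact zero_ne_one h1

theorem wt_mem {m : ℕ} {x : V} (hx : x ∈ D.Vm m) : IsWt n q (A * q⁻¹ ^ (2 * m)) ((-1) ^ m * B) x := by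
  let W : Submodule k V := LinearMap.ker (Algebra.lsmul k k V (gg k n q) - (A * q⁻¹ ^ (2 * m)) • LinearMap.id)
    ⊓ LinearMap.ker (Algebra.lsmul k k V (hh k n q) - ((-1) ^ m * B) • LinearMap.id)
  have h1 : ∀ y, y ∈ W ↔ IsWt n q (A * q⁻¹ ^ (2 * m)) ((-1) ^ m * B) y := by
    intro y
    rw [Submodule.mem_inf, LinearMap.mem_ker, LinearMap.mem_ker, LinearMap.sub_apply, LinearMap.sub_apply,
      sub_eq_zero, sub_eq_zero]
    rfl
  rw [← h1]
  refine D.mem_of_w ?_ hx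
  intro a b e ha hb
  rw [h1, ← e]
  exact D.hwt a b ha hb

theorem deg_indep {ι : Type} [Fintype ι] (y : ι → V) (d : ι → ℕ) (hd : Function.Injective d)
    (hy : ∀ i, y i ∈ D.Vm (d i)) (h : ∑ i, y i = 0) (i : ι) : y i = 0 := by
  apply D.eq_zero
  intro a b
  by_cases hab : a + b = d i
  · have h1 := congrArg (D.co a b) h
    rw [map_sum, map_zero, Finset.sum_eq_single i] at h1
    · exact h1
    · intro i' _ hne
      apply hy i' a b
      rw [hab]
      exact fun e => hne (hd e.symm)
    · intro h2; exact absurd (Finset.mem_univ _) h2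
  · exact hy i a b hab

end TD

end Graded
end QFL


set_option linter.unusedSectionVars false
namespace QFL

section Decomp

variable {k : Type} [Field k] [CharZero k] {n : ℕ} {q : k}
variable {V : Type} [AddCommGroup V] [Module k V] [Module (U k n q) V]
  [IsScalarTower k (U k n q) V]

theorem Good.inv_pow_N (H : Good k n q) : q⁻¹ ^ (n ^ 2) = 1 := by rw [inv_pow, H.q_pow_N, inv_one]

theorem Good.inv_pow_mod (H : Good k n q) {a b : ℕ} (h : a ≡ b [MOD n ^ 2]) : q⁻¹ ^ a = q⁻¹ ^ b :=
  pow_eq_pow_of_modEq h H.inv_pow_N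

theorem neg_one_pow_mod {a b : ℕ} (h : a % 2 = b % 2) : (-1 : k) ^ a = (-1) ^ b := by
  rw [neg_one_pow_eq_pow_mod_two, h, ← neg_one_pow_eq_pow_mod_two]

/-- existence of the simple summand vectors -/
theorem TD.exists_S (H : Good k n q) {p r J N : ℕ} (hN : n ^ 2 = 2 * N) (hp : 1 ≤ p) (hpr : p ≤ r) (hr : p + r ≤ N)
    (D : TD n q V (n ^ 2 - 2 * p + 1) (n ^ 2 - 2 * r + 1) (q⁻¹ ^ (2 * (p + r))) ((-1) ^ J))
    {l : ℕ} (hl : l < 2 * p - 1) :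
    ∃ v ∈ D.Vm (n ^ 2 - 2 * r - l), v ≠ 0 ∧ SD n q (N + p - r - l) ((J + l) % 2) v := by
  obtain ⟨v, hv, hv0, hvF⟩ := D.exists_v (m := n ^ 2 - 2 * r - l) (by omega) (by omega)
  have hw := D.wt_mem hv
  have e1 : q⁻¹ ^ (2 * (p + r)) * q⁻¹ ^ (2 * (n ^ 2 - 2 * r - l)) = q⁻¹ ^ (2 * (N + p - r - l)) := by
    rw [← pow_add]
    apply H.inv_pow_mod
    rw [show 2 * (p + r) + 2 * (n ^ 2 - 2 * r - l) = n ^ 2 + 2 * (N + p - r - l) by omega]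
    exact Nat.add_modEq_left
  have e2 : (-1 : k) ^ (n ^ 2 - 2 * r - l) * (-1) ^ J = (-1) ^ ((J + l) % 2) := by
    rw [← pow_add]
    apply neg_one_pow_mod
    omega
  rw [e1, e2] at hw
  refine ⟨v, hv, hv0, by omega, by omega, hw, hvF, ?_⟩
  apply D.F_inj (m := n ^ 2 - 2 * r - l + (n ^ 2 - 2 * (N + p - r - l) + 1)) (by omega) (D.E_pow_mem hv _)
  rw [FE_pow0 H hw hvF]
  have : cc q (n ^ 2 - 2 * (N + p - r - l) + 1) (q⁻¹ ^ (2 * (N + p - r - l))) = 0 := by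
    have e : q⁻¹ ^ (2 * (N + p - r - l)) = q ^ (n ^ 2 - 2 * (N + p - r - l)) := by
      rw [inv_pow]
      apply inv_eq_of_mul_eq_one_left
      rw [← pow_add, Nat.sub_add_cancel (by omega), H.q_pow_N]
    rw [e, H.cc_eq_zero]
    exact Or.inr rfl
  rw [this, zero_smul]

/-- existence of the projective summand vectors -/
theorem TD.exists_P (H : Good k n q) {p r J N : ℕ} (hN : n ^ 2 = 2 * N) (hp : 1 ≤ p) (hpr : p ≤ r) (hr : p + r ≤ N)
    (D : TD n q V (n ^ 2 - 2 * p + 1) (n ^ 2 - 2 * r + 1) (q⁻¹ ^ (2 * (p + r))) ((-1) ^ J))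
    {l : ℕ} (hl : l < N - p - r + 1) :
    ∃ z x : V, z ∈ D.Vm l ∧ z ≠ 0 ∧ PD n q (N - p - r + 1 - l) ((J + l + 1) % 2) z x ∧
      E k n q ^ (2 * (N - p - r + 1 - l) - 1) • z ∈ D.Vm (2 * (N - p - r) + 1 - l) ∧
      E k n q ^ (2 * (N - p - r + 1 - l) - 1) • z ≠ 0 := by
  obtain ⟨z, hz, hz0, hzF⟩ := D.exists_v (m := l) (by omega) (by omega)
  have hw := D.wt_mem hz
  have e1 : q⁻¹ ^ (2 * (p + r)) * q⁻¹ ^ (2 * l) = q ^ (2 * (N - p - r + 1 - l) - 2) := by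
    rw [← pow_add, inv_pow]
    apply inv_eq_of_mul_eq_one_left
    rw [← pow_add, show 2 * (N - p - r + 1 - l) - 2 + (2 * (p + r) + 2 * l) = n ^ 2 by omega, H.q_pow_N]
  have e2 : (-1 : k) ^ l * (-1) ^ J = (-1) ^ ((J + l + 1) % 2 + 1) := by
    rw [← pow_add]
    apply neg_one_pow_mod
    omega
  rw [e1, e2] at hw
  have hy := D.E_pow_mem hz (2 * (N - p - r + 1 - l) - 2)
  obtain ⟨x, hx, _, hxF⟩ := D.F_surj (by omega) hy
  have hwx := D.wt_mem hx
  have e3 : q⁻¹ ^ (2 * (p + r)) * q⁻¹ ^ (2 * (l + (2 * (N - p - r + 1 - l) - 2) + 1))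
      = q⁻¹ ^ (2 * (N - p - r + 1 - l)) := by
    rw [← pow_add]
    apply H.inv_pow_mod
    rw [show 2 * (p + r) + 2 * (l + (2 * (N - p - r + 1 - l) - 2) + 1) = n ^ 2 + 2 * (N - p - r + 1 - l) by omega]
    exact Nat.add_modEq_left
  have e4 : (-1 : k) ^ (l + (2 * (N - p - r + 1 - l) - 2) + 1) * (-1) ^ J = (-1) ^ ((J + l + 1) % 2) := by
    rw [← pow_add]
    apply neg_one_pow_mod
    omega
  rw [e3, e4] at hwx
  refine ⟨z, x, hz, hz0, ⟨by omega, by omega, hw, hwx, hzF, hxF⟩, ?_, ?_⟩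
  · have := D.E_pow_mem hz (2 * (N - p - r + 1 - l) - 1)
    rwa [show l + (2 * (N - p - r + 1 - l) - 1) = 2 * (N - p - r) + 1 - l by omega] at this
  · exact D.E_pow_ne (by omega) hz hz0

theorem inj_of_kerF {M : Type} [AddCommGroup M] [Module k M] [Module (U k n q) M] [IsScalarTower k (U k n q) M] (f : M →ₗ[U k n q] V)
    (h : ∀ x, F k n q • x = 0 → f x = 0 → x = 0) : Function.Injective f := by
  rw [← LinearMap.ker_eq_bot]
  by_contra h0
  obtain ⟨y, hy, hy0⟩ := Submodule.exists_mem_ne_zero_of_ne_bot h0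
  obtain ⟨y', hy', hne', hF⟩ := exists_kerF hy hy0
  exact hne' (h y' hF hy')

theorem dim_aux (N p r : ℕ) (hp : 1 ≤ p) (hpr : p ≤ r) (hr : p + r ≤ N) :
    ∑ l : Fin (2 * p - 1), (2 * N - 2 * (N + p - r - l) + 1) + (N - p - r + 1) * (2 * (2 * N))
      = (2 * N - 2 * p + 1) * (2 * N - 2 * r + 1) := by
  have h1 : ∑ l : Fin (2 * p - 1), (2 * N - 2 * (N + p - r - l) + 1)
      = ∑ l ∈ Finset.range (2 * p - 1), (2 * (r - p) + 1 + 2 * l) := by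
    rw [Finset.sum_range]
    apply Finset.sum_congr rfl
    intro l _
    have := l.2
    omega
  have h2 : ∀ m c : ℕ, ∑ l ∈ Finset.range (m + 1), (c + 2 * l) = (m + 1) * (c + m) := by
    intro m c
    induction m with
    | zero => simp
    | succ m ih => rw [Finset.sum_range_succ, ih]; ring
  rw [h1]
  obtain ⟨p, rfl⟩ := Nat.exists_eq_add_of_le hp
  obtain ⟨r, rfl⟩ := Nat.exists_eq_add_of_le hpr
  obtain ⟨N, rfl⟩ := Nat.exists_eq_add_of_le hr
  rw [show 2 * (1 + p) - 1 = 2 * p + 1 by omega, h2]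
  have e1 : 1 + p + r - (1 + p) = r := by omega
  have e2 : 1 + p + (1 + p + r) + N - (1 + p) - (1 + p + r) + 1 = N + 1 := by omega
  have e3 : 2 * (1 + p + (1 + p + r) + N) - 2 * (1 + p) + 1 = 2 * (1 + p + r + N) + 1 := by omega
  have e4 : 2 * (1 + p + (1 + p + r) + N) - 2 * (1 + p + r) + 1 = 2 * (1 + p + N) + 1 := by omega
  rw [e1, e2, e3, e4]
  ring

/-- The decomposition, with abstract models. -/
theorem TD.decomp_aux (H : Good k n q) {p r J N : ℕ} (hN : n ^ 2 = 2 * N) (hp : 1 ≤ p) (hpr : p ≤ r) (hr : p + r ≤ N)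
    (D : TD n q V (n ^ 2 - 2 * p + 1) (n ^ 2 - 2 * r + 1) (q⁻¹ ^ (2 * (p + r))) ((-1) ^ J))
    (A : Fin (2 * p - 1) → Type) [∀ l, AddCommGroup (A l)] [∀ l, Module k (A l)] [∀ l, Module (U k n q) (A l)]
    [∀ l, IsScalarTower k (U k n q) (A l)]
    (C : Fin (N - p - r + 1) → Type) [∀ l, AddCommGroup (C l)] [∀ l, Module k (C l)] [∀ l, Module (U k n q) (C l)]
    [∀ l, IsScalarTower k (U k n q) (C l)]
    (sg : ∀ l, A l) (sg1 : ∀ l : Fin (2 * p - 1), SD n q (N + p - r - l) ((J + l) % 2) (sg l))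
    (sg2 : ∀ l : Fin (2 * p - 1), E k n q ^ (n ^ 2 - 2 * (N + p - r - l)) • sg l ≠ 0)
    (sg3 : ∀ l x, x ∈ Submodule.span (U k n q) {sg l})
    (al ga : ∀ l, C l) (al1 : ∀ l : Fin (N - p - r + 1), PD n q (N - p - r + 1 - l) ((J + l + 1) % 2) (al l) (ga l))
    (al2 : ∀ l, E k n q ^ (n ^ 2 - 1) • al l ≠ 0) (al3 : ∀ l x, x ∈ Submodule.span (U k n q) {ga l}) :
    Nonempty (V ≃ₗ[U k n q] ((∀ l, A l) × (∀ l, C l))) := by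
  choose v v1 v2 v3 using fun l : Fin (2 * p - 1) => D.exists_S H hN hp hpr hr l.2
  choose z x z1 z2 z3 z4 z5 using fun l : Fin (N - p - r + 1) => D.exists_P H hN hp hpr hr l.2
  choose f hf using fun l => (sg1 l).exists_hom H (sg2 l) (sg3 l) (v3 l)
  choose g hg using fun l => (al1 l).exists_hom H (al2 l) (al3 l) (z3 l)
  let Φ : ((∀ l, A l) × (∀ l, C l)) →ₗ[U k n q] V :=
    LinearMap.coprod (∑ l, f l ∘ₗ LinearMap.proj l) (∑ l, g l ∘ₗ LinearMap.proj l)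
  have hΦ : ∀ y, Φ y = ∑ l, f l (y.1 l) + ∑ l, g l (y.2 l) := by
    intro y
    simp [Φ, LinearMap.coprod_apply, LinearMap.sum_apply]
  have inj : Function.Injective Φ := by
    apply inj_of_kerF
    rintro ⟨y1, y2⟩ hF h0
    have hF1 : ∀ l, F k n q • y1 l = 0 := fun l => congrFun (congrArg Prod.fst hF) l
    have hF2 : ∀ l, F k n q • y2 l = 0 := fun l => congrFun (congrArg Prod.snd hF) l
    choose c hc using fun l => (sg1 l).kerF H (sg2 l) (sg3 l) (hF1 l)
    choose b₀ b₁ hb using fun l => (al1 l).kerF H (al2 l) (((al1 l).mem_span_iff H _).mp (al3 l (y2 l))) (hF2 l)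
    rw [hΦ] at h0
    have hf' : ∀ l, f l (y1 l) = c l • v l := by
      intro l
      rw [hc l, LinearMap.map_smul_of_tower, hf]
    have hg' : ∀ l, g l (y2 l) = b₀ l • z l + b₁ l • E k n q ^ (2 * (N - p - r + 1 - l) - 1) • z l := by
      intro l
      rw [hb l, map_add, LinearMap.map_smul_of_tower, LinearMap.map_smul_of_tower, map_smul, hg]
    simp only [hf', hg', Finset.sum_add_distrib] at h0
    have key := D.deg_indep (ι := Fin (2 * p - 1) ⊕ (Fin (N - p - r + 1) ⊕ Fin (N - p - r + 1)))
      (Sum.elim (fun l => c l • v l) (Sum.elim (fun l => b₀ l • z l)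
        (fun l => b₁ l • E k n q ^ (2 * (N - p - r + 1 - l) - 1) • z l)))
      (Sum.elim (fun l => n ^ 2 - 2 * r - l) (Sum.elim (fun l => (l : ℕ)) (fun l => 2 * (N - p - r) + 1 - l)))
      (by
        rintro (⟨a, ha⟩ | ⟨a, ha⟩ | ⟨a, ha⟩) (⟨b, hb⟩ | ⟨b, hb⟩ | ⟨b, hb⟩) e <;>
          simp only [Sum.elim_inl, Sum.elim_inr] at e <;> first | (exfalso; omega) | (congr <;> omega) )
      (by
        rintro (l | l | l)
        · exact Submodule.smul_mem _ _ (v1 l)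
        · exact Submodule.smul_mem _ _ (z1 l)
        · exact Submodule.smul_mem _ _ (z4 l))
      (by
        rw [Fintype.sum_sum_type, Fintype.sum_sum_type]
        exact h0)
    have k1 : ∀ l, c l = 0 := fun l => (smul_eq_zero.mp (key (Sum.inl l))).resolve_right (v2 l)
    have k2 : ∀ l, b₀ l = 0 := fun l => (smul_eq_zero.mp (key (Sum.inr (Sum.inl l)))).resolve_right (z2 l)
    have k3 : ∀ l, b₁ l = 0 := fun l => (smul_eq_zero.mp (key (Sum.inr (Sum.inr l)))).resolve_right (z5 l)
    apply Prod.ext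
    · funext l
      show y1 l = 0
      rw [hc l, k1, zero_smul]
    · funext l
      show y2 l = 0
      rw [hb l, k2, k3, zero_smul, zero_smul, add_zero]
  have fS : ∀ l : Fin (2 * p - 1), Module.Finite k (A l) := fun l =>
    Module.Finite.of_basis ((sg1 l).basis H (sg2 l) (sg3 l))
  have rS : ∀ l : Fin (2 * p - 1), Module.finrank k (A l)
      = n ^ 2 - 2 * (N + p - r - l) + 1 := by
    intro l
    rw [Module.finrank_eq_card_basis ((sg1 l).basis H (sg2 l) (sg3 l)), Fintype.card_fin]
  have rP : ∀ l : Fin (N - p - r + 1), Module.finrank k (C l)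
      = 2 * n ^ 2 := fun l => (al1 l).finrank_eq H (al2 l) (al3 l)
  have hN0 := H.sixteen_le
  have fP : ∀ l : Fin (N - p - r + 1), Module.Finite k (C l) := fun l =>
    Module.Finite.of_basis ((al1 l).basis H (al2 l) (al3 l))
  have frS : ∀ l : Fin (2 * p - 1), Module.Free k (A l) := fun l =>
    Module.Free.of_basis ((sg1 l).basis H (sg2 l) (sg3 l))
  have frP : ∀ l : Fin (N - p - r + 1), Module.Free k (C l) := fun l =>
    Module.Free.of_basis ((al1 l).basis H (al2 l) (al3 l))
  have fV : Module.Finite k V := Module.Finite.of_basis D.bas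
  have rV : Module.finrank k V = (n ^ 2 - 2 * p + 1) * (n ^ 2 - 2 * r + 1) := by
    rw [Module.finrank_eq_card_basis D.bas, Fintype.card_prod, Fintype.card_fin, Fintype.card_fin]
  have surj : Function.Surjective Φ := by
    let Φk : ((∀ l, A l) × (∀ l, C l)) →ₗ[k] V := Φ.restrictScalars k
    have := LinearMap.injective_iff_surjective_of_finrank_eq_finrank (f := Φk) (by
      rw [Module.finrank_prod, Module.finrank_pi_fintype, Module.finrank_pi_fintype, rV, hN]
      simp only [rS, rP, Finset.sum_const, Finset.card_univ, Fintype.card_fin, smul_eq_mul, hN]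
      exact dim_aux N p r hp hpr hr)
    exact this.mp inj
  exact ⟨(LinearEquiv.ofBijective Φ ⟨inj, surj⟩).symm⟩

/-- The decomposition. -/
theorem TD.decomp (H : Good k n q) {p r J N : ℕ} (hN : n ^ 2 = 2 * N) (hp : 1 ≤ p) (hpr : p ≤ r) (hr : p + r ≤ N)
    (D : TD n q V (n ^ 2 - 2 * p + 1) (n ^ 2 - 2 * r + 1) (q⁻¹ ^ (2 * (p + r))) ((-1) ^ J)) :
    Nonempty (V ≃ₗ[U k n q] ((∀ l : Fin (2 * p - 1), S k n q (N + p - r - l) ((J + l) % 2)) ×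
      (∀ l : Fin (N - p - r + 1), P k n q (N - p - r + 1 - l) ((J + l + 1) % 2)))) := by
  have hN2 : n ^ 2 / 2 = N := by omega
  have hSm : ∀ l : Fin (2 * p - 1), ∃ v : S k n q (N + p - r - l) ((J + l) % 2), SD n q (N + p - r - l) ((J + l) % 2) v ∧
      E k n q ^ (n ^ 2 - 2 * (N + p - r - l)) • v ≠ 0 ∧ ∀ x, x ∈ Submodule.span (U k n q) {v} := by
    intro l
    have := l.2
    exact S_model H (by omega) (by omega) (by omega)
  choose sg sg1 sg2 sg3 using hSm
  have hPm : ∀ l : Fin (N - p - r + 1), ∃ al ga : P k n q (N - p - r + 1 - l) ((J + l + 1) % 2),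
      PD n q (N - p - r + 1 - l) ((J + l + 1) % 2) al ga ∧ E k n q ^ (n ^ 2 - 1) • al ≠ 0 ∧
      ∀ x, x ∈ Submodule.span (U k n q) {ga} := by
    intro l
    have := l.2
    exact P_model H (by omega) (by omega) (by omega)
  choose al ga al1 al2 al3 using hPm
  exact TD.decomp_aux H hN hp hpr hr D (fun l => S k n q (N + p - r - l) ((J + l) % 2))
    (fun l => P k n q (N - p - r + 1 - l) ((J + l + 1) % 2)) sg sg1 sg2 sg3 al ga al1 al2 al3

end Decomp
end QFL


set_option linter.unusedSectionVars false
namespace QFL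

section GenIdem

variable {k : Type} [Field k] [CharZero k] {A : Type} [Ring A] [Algebra k A]

/-- Spectral idempotent of `x` with `x ^ n = 1`. -/
def idem (n : ℕ) (z : k) (x : A) (r : ℕ) : A :=
  (n : k)⁻¹ • ∑ t ∈ Finset.range n, (z ^ ((n - r) * t)) • x ^ t

theorem geom_zero {n : ℕ} {y : k} (h : y ^ n = 1) (h1 : y ≠ 1) : ∑ t ∈ Finset.range n, y ^ t = 0 := by
  have := geom_sum_mul y n
  rw [h, sub_self] at this
  exact (mul_eq_zero.mp this).resolve_right (sub_ne_zero.mpr h1)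

theorem idem_smul {n : ℕ} (hn : 0 < n) {z : k} (hz : IsPrimitiveRoot z n) {x : A} {M : Type} [AddCommGroup M]
    [Module k M] [Module A M] [IsScalarTower k A M] [SMulCommClass A k M] {v : M} {m : ℕ} (hm : m < n) (hv : x • v = z ^ m • v)
    {r : ℕ} (hr : r < n) : idem n z x r • v = (if r = m then (1 : k) else 0) • v := by
  have hp : ∀ t : ℕ, x ^ t • v = (z ^ m) ^ t • v := by
    intro t
    induction t with
    | zero => simp
    | succ t ih => rw [pow_succ x, mul_smul, hv, smul_comm, ih, smul_smul, pow_succ, mul_comm]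
  have h1 : idem n z x r • v = ((n : k)⁻¹ * ∑ t ∈ Finset.range n, (z ^ (n - r + m)) ^ t) • v := by
    rw [idem, smul_assoc, Finset.sum_smul, mul_smul, Finset.sum_smul]
    congr 1
    apply Finset.sum_congr rfl
    intro t _
    rw [smul_assoc, hp, smul_smul]
    congr 1
    rw [← pow_mul, ← pow_mul, ← pow_add, add_mul]
  rw [h1]
  congr 1
  have hn0 : (n : k) ≠ 0 := Nat.cast_ne_zero.mpr hn.ne'
  by_cases h : r = m
  · rw [if_pos h, h, Nat.sub_add_cancel hm.le, hz.pow_eq_one]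
    simp [hn0]
  · rw [if_neg h, geom_zero, mul_zero]
    · rw [← pow_mul, mul_comm, pow_mul, hz.pow_eq_one, one_pow]
    · intro h2
      have h3 := (hz.pow_eq_one_iff_dvd _).mp h2
      obtain ⟨c, hc⟩ := h3
      have : c < 2 := by
        by_contra hc2
        have : n * 2 ≤ n * c := Nat.mul_le_mul_left _ (by omega)
        omega
      interval_cases c <;> omega

theorem idem_eig {n : ℕ} (hn : 0 < n) {z : k} (hz : IsPrimitiveRoot z n) {x : A} (hx : x ^ n = 1) {r : ℕ} (hr : r < n) :
    x * idem n z x r = z ^ r • idem n z x r := by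
  have h1 : x * ∑ t ∈ Finset.range n, (z ^ ((n - r) * t)) • x ^ t
      = z ^ r • ∑ t ∈ Finset.range n, (z ^ ((n - r) * (t + 1))) • x ^ (t + 1) := by
    rw [Finset.mul_sum, Finset.smul_sum]
    apply Finset.sum_congr rfl
    intro t _
    rw [mul_smul_comm, ← pow_succ', smul_smul, ← pow_add]
    congr 1
    rw [show r + (n - r) * (t + 1) = n + (n - r) * t by
      rw [mul_add, mul_one]; omega, pow_add, hz.pow_eq_one, one_mul]
  have h2 : ∑ t ∈ Finset.range n, (z ^ ((n - r) * (t + 1))) • x ^ (t + 1)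
      = ∑ t ∈ Finset.range n, (z ^ ((n - r) * t)) • x ^ t := by
    have e1 := Finset.sum_range_succ (fun t => (z ^ ((n - r) * t)) • x ^ t) n
    have e2 := Finset.sum_range_succ' (fun t => (z ^ ((n - r) * t)) • x ^ t) n
    rw [e1] at e2
    rw [hx, mul_comm (n - r) n, pow_mul, hz.pow_eq_one, one_pow, mul_zero, pow_zero, pow_zero] at e2
    exact (add_right_cancel e2).symm
  rw [idem, mul_smul_comm, h1, h2, smul_comm]

theorem idem_sum {n : ℕ} (hn : 0 < n) {z : k} (hz : IsPrimitiveRoot z n) (x : A) :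
    ∑ r ∈ Finset.range n, idem n z x r = 1 := by
  have hz0 : z ≠ 0 := hz.ne_zero hn.ne'
  have hn0 : (n : k) ≠ 0 := Nat.cast_ne_zero.mpr hn.ne'
  have h1 : ∀ t ∈ Finset.range n, ∑ r ∈ Finset.range n, z ^ ((n - r) * t) = if t = 0 then (n : k) else 0 := by
    intro t ht
    have ht := Finset.mem_range.mp ht
    have e : ∑ r ∈ Finset.range n, z ^ ((n - r) * t) = ∑ r ∈ Finset.range n, ((z ^ t)⁻¹) ^ r := by
      apply Finset.sum_congr rfl
      intro r hr
      have hr := Finset.mem_range.mp hr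
      rw [inv_pow]
      apply eq_inv_of_mul_eq_one_left
      rw [← pow_mul, ← pow_add, mul_comm t r, ← add_mul, Nat.sub_add_cancel hr.le, pow_mul, hz.pow_eq_one, one_pow]
    rw [e]
    split_ifs with h
    · simp [h]
    · apply geom_zero
      · rw [inv_pow, ← pow_mul, mul_comm, pow_mul, hz.pow_eq_one, one_pow, inv_one]
      · intro h2
        rw [inv_eq_one] at h2
        exact hz.pow_ne_one_of_pos_of_lt h ht h2
  simp only [idem]
  rw [← Finset.smul_sum, Finset.sum_comm]
  simp only [← Finset.sum_smul]
  rw [Finset.sum_congr rfl (fun t ht => by rw [h1 t ht]), Finset.sum_eq_single 0]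
  · simp [smul_smul, hn0]
  · intro b _ hb
    rw [if_neg hb, zero_smul]
  · intro h
    exact absurd (Finset.mem_range.mpr hn) h

theorem idem_isUnit {n : ℕ} (hn : 0 < n) {z : k} (hz : IsPrimitiveRoot z n) {x : A} (hx : x ^ n = 1)
    {c : ℕ → k} (hc : ∀ r, c r ≠ 0) : IsUnit (∑ r ∈ Finset.range n, c r • idem n z x r) := by
  have key : ∀ c d : ℕ → k, (∀ r, c r * d r = 1) →
      (∑ r ∈ Finset.range n, c r • idem n z x r) * (∑ r ∈ Finset.range n, d r • idem n z x r) = 1 := by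
    intro c d h
    rw [Finset.mul_sum, ← idem_sum hn hz x]
    apply Finset.sum_congr rfl
    intro r hr
    have hr' := Finset.mem_range.mp hr
    rw [mul_smul_comm, Finset.sum_mul, Finset.sum_eq_single r]
    · have := idem_smul (A := A) (x := x) hn hz (v := idem n z x r) hr' (idem_eig hn hz hx hr') hr'
      rw [if_pos rfl, smul_eq_mul, one_smul] at this
      rw [smul_mul_assoc, this, smul_smul, mul_comm, h, one_smul]
    · intro s hs hsr
      have := idem_smul (A := A) (x := x) hn hz (v := idem n z x r) hr' (idem_eig hn hz hx hr') (Finset.mem_range.mp hs)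
      rw [if_neg hsr, smul_eq_mul, zero_smul] at this
      rw [smul_mul_assoc, this, smul_zero]
    · intro h
      exact absurd hr h
  exact ⟨⟨_, ∑ r ∈ Finset.range n, (c r)⁻¹ • idem n z x r, key _ _ (fun r => mul_inv_cancel₀ (hc r)),
    key _ _ (fun r => inv_mul_cancel₀ (hc r))⟩, rfl⟩

end GenIdem

section FlatAct

variable {k : Type} [Field k] [CharZero k] {n : ℕ} {q : k}
variable {M : Type} [AddCommGroup M] [Module k M] [Module (U k n q) M]
  [IsScalarTower k (U k n q) M]

theorem Good.qn_prim (H : Good k n q) : IsPrimitiveRoot (q ^ n) n :=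
  H.prim.pow (by have := H.pos; positivity) (sq n)

theorem Good.flat_unit (H : Good k n q) : IsUnit (flat k n q) :=
  idem_isUnit H.pos H.qn_prim (rel_K (k := k) (n := n) (q := q)) (c := fun r => q⁻¹ ^ r)
    (fun r => pow_ne_zero _ H.inv_ne)

theorem Good.flat_act (H : Good k n q) {x : M} {κ : k} (hκ : κ ^ n = 1) (hx : K k n q • x = κ • x) :
    ∃ fl d : k, fl ≠ 0 ∧ (d = 0 ∨ d = 1) ∧ flat k n q • x = fl • x ∧ Ring.inverse (flat k n q) • x = fl⁻¹ • x ∧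
      oneIdem k n q 0 • x = d • x ∧ (∑ r ∈ Finset.Icc 1 (n - 1), oneIdem k n q r) • x = (1 - d) • x := by
  have : NeZero n := ⟨H.pos.ne'⟩
  obtain ⟨m, hm, rfl⟩ := H.qn_prim.eq_pow_of_pow_eq_one hκ
  have h1 : ∀ r, r < n → oneIdem k n q r • x = (if r = m then (1 : k) else 0) • x := fun r hr =>
    idem_smul H.pos H.qn_prim hm hx hr
  have hfl : flat k n q • x = (q⁻¹ ^ m) • x := by
    rw [flat, Finset.sum_smul, Finset.sum_eq_single m]
    · rw [smul_assoc, h1 m hm, if_pos rfl, one_smul]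
    · intro b hb hbm
      rw [smul_assoc, h1 b (Finset.mem_range.mp hb), if_neg hbm, zero_smul, smul_zero]
    · intro h
      exact absurd (Finset.mem_range.mpr hm) h
  have hne : q⁻¹ ^ m ≠ 0 := pow_ne_zero _ H.inv_ne
  refine ⟨q⁻¹ ^ m, if 0 = m then 1 else 0, hne, ?_, hfl, ?_, h1 0 H.pos, ?_⟩
  · split_ifs <;> simp
  · have := congrArg (fun y => Ring.inverse (flat k n q) • y) hfl
    simp only [← mul_smul, Ring.inverse_mul_cancel _ H.flat_unit, one_smul] at this
    rw [smul_comm] at this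
    rw [eq_inv_smul_iff₀ hne]
    exact this.symm
  · rw [Finset.sum_smul, Finset.sum_congr rfl (fun r hr => h1 r (by have := Finset.mem_Icc.mp hr; have := H.pos; omega)),
      ← Finset.sum_smul]
    congr 1
    rw [Finset.sum_ite_eq']
    simp only [Finset.mem_Icc]
    split_ifs <;> first | omega | simp

end FlatAct

end QFL


set_option linter.unusedSectionVars false
namespace QFL

section Tens

variable {k : Type} [Field k] [CharZero k] {n : ℕ} {q : k}
variable {M : Type} [AddCommGroup M] [Module k M] [Module (U k n q) M] [IsScalarTower k (U k n q) M]
variable {M' : Type} [AddCommGroup M'] [Module k M'] [Module (U k n q) M'] [IsScalarTower k (U k n q) M']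
variable {V : Type} [AddCommGroup V] [Module k V] [Module (U k n q) V] [IsScalarTower k (U k n q) V]

theorem SD.string (H : Good k n q) {i j : ℕ} {v : M} (h : SD n q i j v) (s : ℕ) :
    ∃ κ : k, κ ≠ 0 ∧ κ ^ n = 1 ∧ K k n q • E k n q ^ s • v = κ • E k n q ^ s • v ∧
      Kinv k n q • E k n q ^ s • v = κ⁻¹ • E k n q ^ s • v ∧
      Kh k n q • E k n q ^ s • v = (q⁻¹ ^ (2 * i) * q⁻¹ ^ (2 * s) * κ) • E k n q ^ s • v := by
  have ha : q⁻¹ ^ (2 * i) * q⁻¹ ^ (2 * s) ≠ 0 := wt_ne_zero H (pow_ne_zero _ H.inv_ne) s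
  have hw := H.wtEpow h.wt s
  have hN : n ^ 2 = 2 * (n ^ 2 / 2) := by have := H.sixteen; omega
  obtain ⟨f1, -, -⟩ := kap_facts H ha
    (by
      rw [← pow_add, ← mul_add, ← pow_mul, mul_right_comm, ← hN, pow_mul, H.inv_pow_N, one_pow])
    (b := (-1) ^ s * (-1) ^ j) (by rw [← pow_add, ← pow_mul, mul_comm, pow_mul]; simp)
  have h0 : kap n (q⁻¹ ^ (2 * i) * q⁻¹ ^ (2 * s)) ((-1) ^ s * (-1) ^ j) ≠ 0 := by
    intro e
    rw [e, zero_pow H.pos.ne'] at f1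
    exact zero_ne_one f1
  have hK := H.K_smul ha hw
  refine ⟨_, h0, f1, hK, ?_, H.Kh_smul ha hw⟩
  set y := E k n q ^ s • v with hy
  have h2 : Kinv k n q • K k n q • y = y := by rw [← mul_smul, H.KinvK, one_smul]
  rw [hK, smul_comm] at h2
  rw [eq_inv_smul_iff₀ h0]
  exact h2

theorem exists_TD (H : Good k n q) {i j i' j' : ℕ} {v : M} {v' : M'} (h : SD n q i j v) (h' : SD n q i' j' v')
    (T : M →ₗ[k] M' →ₗ[k] V)
    (bas : Module.Basis (Fin (n ^ 2 - 2 * i + 1) × Fin (n ^ 2 - 2 * i' + 1)) k V)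
    (hbas : ∀ p, bas p = T (E k n q ^ (p.1 : ℕ) • v) (E k n q ^ (p.2 : ℕ) • v'))
    (hg : ∀ x y, gg k n q • T x y = T (gg k n q • x) (gg k n q • y))
    (hh' : ∀ x y, hh k n q • T x y = T (hh k n q • x) (hh k n q • y))
    (hE : ∀ x y, E k n q • T x y = T (E k n q • x) (Ring.inverse (flat k n q) • y)
      + T (Kinv k n q • x) (oneIdem k n q 0 • E k n q • y)
      + T x ((∑ r ∈ Finset.Icc 1 (n - 1), oneIdem k n q r) • E k n q • y))
    (hF : ∀ x y, F k n q • T x y = T (F k n q • x) (flat k n q • y)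
      + T (gg k n q • x) (F k n q • (∑ r ∈ Finset.Icc 1 (n - 1), oneIdem k n q r) • y)
      + T (Kh k n q • x) (F k n q • oneIdem k n q 0 • y)) :
    Nonempty (TD n q V (n ^ 2 - 2 * i + 1) (n ^ 2 - 2 * i' + 1) (q⁻¹ ^ (2 * (i + i'))) ((-1) ^ (j + j'))) := by
  choose κ κ0 κ1 κ2 κ3 κ4 using h.string H
  choose l l0 l1 l2 l3 l4 using h'.string H
  choose fl d fl0 d0 fl1 fl2 d1 d2 using fun s => H.flat_act (l1 s) (l2 s)
  refine ⟨{ bas := bas, w := fun a b => T (E k n q ^ a • v) (E k n q ^ b • v'), hw := hbas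
            X := fun a b => (fl b)⁻¹
            Y := fun a b => (κ a)⁻¹ * d (b + 1) + (1 - d (b + 1))
            X' := fun a b => cc q a (q⁻¹ ^ (2 * i)) * fl b
            Y' := fun a b => cc q b (q⁻¹ ^ (2 * i')) * (q⁻¹ ^ (2 * i) * q⁻¹ ^ (2 * a) * (1 - d b)
              + q⁻¹ ^ (2 * i) * q⁻¹ ^ (2 * a) * κ a * d b)
            hw0 := ?_, hE := ?_, hF := ?_, hX := ?_, hY := ?_, hX' := ?_, hY' := ?_, hX0 := ?_, hY0 := ?_, hwt := ?_ }⟩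
  · have z : ∀ s, n ^ 2 - 2 * i + 1 ≤ s → E k n q ^ s • v = 0 := by
      intro s hs
      rw [← Nat.sub_add_cancel hs, pow_add, mul_smul, h.Ev, smul_zero]
    have z' : ∀ s, n ^ 2 - 2 * i' + 1 ≤ s → E k n q ^ s • v' = 0 := by
      intro s hs
      rw [← Nat.sub_add_cancel hs, pow_add, mul_smul, h'.Ev, smul_zero]
    rintro a b (hab | hab)
    · simp only [z a hab, map_zero, LinearMap.zero_apply]
    · simp only [z' b hab, map_zero]
  · intro a b _ _
    have e : E k n q • E k n q ^ b • v' = E k n q ^ (b + 1) • v' := by rw [← mul_smul, ← pow_succ']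
    have e' : E k n q • E k n q ^ a • v = E k n q ^ (a + 1) • v := by rw [← mul_smul, ← pow_succ']
    rw [hE, e, e', fl2, κ3, d1, d2]
    simp only [map_smul, LinearMap.smul_apply, smul_smul]
    rw [add_smul, add_assoc, mul_comm (d (b + 1))]
  · intro a b _ _
    have hwt := (H.wtEpow h.wt a).1
    rw [hF, FE_pow0 H h.wt h.Fv, hwt, κ4, fl1, d1, d2, smul_comm (F k n q) (1 - d b), smul_comm (F k n q) (d b), FE_pow0 H h'.wt h'.Fv]
    simp only [map_smul, LinearMap.smul_apply, smul_smul]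
    rw [mul_add, add_smul, add_assoc]
    congr 2
    · rw [mul_comm]
    · congr 1
      ring
    · congr 1
      ring
  · intro a b _ _
    exact inv_ne_zero (fl0 b)
  · intro a b _ _
    rcases d0 (b + 1) with e | e <;> simp [e, κ0]
  · intro a b ha ha' _
    exact mul_ne_zero (h.cc_ne H ha ha') (fl0 b)
  · intro a b hb _ hb'
    refine mul_ne_zero (h'.cc_ne H hb hb') ?_
    have := wt_ne_zero H (pow_ne_zero (2 * i) H.inv_ne) a
    rcases d0 b with e | e
    · rw [e, sub_zero, mul_one, mul_zero, add_zero]; exact this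
    · rw [e, sub_self, mul_zero, mul_one, zero_add]; exact mul_ne_zero this (κ0 a)
  · intro b
    rw [cc_zero, zero_mul]
  · intro b
    rw [cc_zero, zero_mul]
  · intro a b _ _
    have w1 := H.wtEpow h.wt a
    have w2 := H.wtEpow h'.wt b
    constructor
    · rw [hg, w1.1, w2.1]
      simp only [map_smul, LinearMap.smul_apply, smul_smul]
      congr 1
      simp only [mul_add, pow_add]
      ring
    · rw [hh', w1.2, w2.2]
      simp only [map_smul, LinearMap.smul_apply, smul_smul]
      congr 1
      simp only [pow_add]
      ring

/-- Swapping the two gradings. -/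
def TD.swap {s t : ℕ} {A B : k} (D : TD n q V s t A B) : TD n q V t s A B where
  bas := D.bas.reindex (Equiv.prodComm _ _)
  w a b := D.w b a
  hw p := by
    rw [Module.Basis.reindex_apply, D.hw]
    rfl
  hw0 a b h := D.hw0 b a h.symm
  X a b := D.Y b a
  Y a b := D.X b a
  X' a b := D.Y' b a
  Y' a b := D.X' b a
  hE a b ha hb := by rw [D.hE b a hb ha, add_comm]
  hF a b ha hb := by rw [D.hF b a hb ha, add_comm]
  hX a b ha hb := D.hY b a hb ha
  hY a b ha hb := D.hX b a hb ha
  hX' a b h0 ha hb := D.hY' b a h0 hb ha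
  hY' a b h0 ha hb := D.hX' b a h0 hb ha
  hX0 b := D.hY0 b
  hY0 b := D.hX0 b
  hwt a b ha hb := by rw [add_comm a b]; exact D.hwt b a hb ha

end Tens

end QFL


set_option linter.unusedSectionVars false
namespace QFL

section Final

variable {k : Type} [Field k] [CharZero k] {n : ℕ} {q : k}

/-- The action map of `U` on a tensor product. -/
def tact (Δ : U k n q →ₐ[k] (U k n q ⊗[k] U k n q))
    (M N : Type) [AddCommGroup M] [Module k M] [Module (U k n q) M]
    [IsScalarTower k (U k n q) M] [SMulCommClass (U k n q) k M]
    [AddCommGroup N] [Module k N] [Module (U k n q) N]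
    [IsScalarTower k (U k n q) N] [SMulCommClass (U k n q) k N] :
    U k n q →ₐ[k] Module.End k (M ⊗[k] N) :=
  (Module.endTensorEndAlgHom (R := k) (S := k) (A := k) (M := M) (N := N)).comp
      ((Algebra.TensorProduct.map (Algebra.lsmul k k M) (Algebra.lsmul k k N)).comp Δ)

/-- The tensor product as a type of its own, with the action through `Δ`. -/
def TT (_ : U k n q →ₐ[k] (U k n q ⊗[k] U k n q)) (M N : Type) [AddCommGroup M] [Module k M]
    [AddCommGroup N] [Module k N] : Type := M ⊗[k] N

instance (Δ : U k n q →ₐ[k] (U k n q ⊗[k] U k n q)) (M N : Type) [AddCommGroup M] [Module k M]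
    [AddCommGroup N] [Module k N] : AddCommGroup (TT Δ M N) := inferInstanceAs (AddCommGroup (M ⊗[k] N))

instance (Δ : U k n q →ₐ[k] (U k n q ⊗[k] U k n q)) (M N : Type) [AddCommGroup M] [Module k M]
    [AddCommGroup N] [Module k N] : Module k (TT Δ M N) := inferInstanceAs (Module k (M ⊗[k] N))

instance (Δ : U k n q →ₐ[k] (U k n q ⊗[k] U k n q))
    (M N : Type) [AddCommGroup M] [Module k M] [Module (U k n q) M]
    [IsScalarTower k (U k n q) M] [SMulCommClass (U k n q) k M]
    [AddCommGroup N] [Module k N] [Module (U k n q) N]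
    [IsScalarTower k (U k n q) N] [SMulCommClass (U k n q) k N] : Module (U k n q) (TT Δ M N) :=
  tensorModule k n q Δ M N

/-- The universal bilinear map into `TT`. -/
def TT.mk (Δ : U k n q →ₐ[k] (U k n q ⊗[k] U k n q)) (M N : Type) [AddCommGroup M] [Module k M]
    [AddCommGroup N] [Module k N] : M →ₗ[k] N →ₗ[k] TT Δ M N := TensorProduct.mk k M N

theorem exists_TD_tensor (H : Good k n q) {Δ : U k n q →ₐ[k] (U k n q ⊗[k] U k n q)} (hΔ : IsComul k n q Δ)
    (M N : Type) [AddCommGroup M] [Module k M] [Module (U k n q) M]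
    [IsScalarTower k (U k n q) M] [SMulCommClass (U k n q) k M]
    [AddCommGroup N] [Module k N] [Module (U k n q) N]
    [IsScalarTower k (U k n q) N] [SMulCommClass (U k n q) k N]
    {i j i' j' : ℕ} {v : M} {v' : N} (h : SD n q i j v) (h' : SD n q i' j' v')
    (hne : E k n q ^ (n ^ 2 - 2 * i) • v ≠ 0) (gen : ∀ x, x ∈ Submodule.span (U k n q) {v})
    (hne' : E k n q ^ (n ^ 2 - 2 * i') • v' ≠ 0) (gen' : ∀ x, x ∈ Submodule.span (U k n q) {v'}) :
    IsScalarTower k (U k n q) (TT Δ M N) ∧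
    Nonempty (TD n q (TT Δ M N) (n ^ 2 - 2 * i + 1) (n ^ 2 - 2 * i' + 1) (q⁻¹ ^ (2 * (i + i'))) ((-1) ^ (j + j'))) := by
  have hs : ∀ (u : U k n q) (z : TT Δ M N), u • z = (tact Δ M N u z : M ⊗[k] N) := fun u z => rfl
  have tower : IsScalarTower k (U k n q) (TT Δ M N) := by
    constructor
    intro c u z
    rw [hs, hs, map_smul]
    rfl
  have hten : ∀ (a b : U k n q) (x : M) (y : N), Module.endTensorEndAlgHom (R := k) (S := k) (A := k)
      ((Algebra.TensorProduct.map (Algebra.lsmul k k M) (Algebra.lsmul k k N)) (a ⊗ₜ b)) (x ⊗ₜ[k] y)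
      = (a • x) ⊗ₜ[k] (b • y) := by
    intro a b x y
    rw [Algebra.TensorProduct.map_tmul]
    rfl
  have act : ∀ (u a b : U k n q) (x : M) (y : N), Δ u = a ⊗ₜ b →
      u • TT.mk Δ M N x y = TT.mk Δ M N (a • x) (b • y) := by
    intro u a b x y hu
    rw [hs]
    refine Eq.trans ?_ (hten a b x y)
    simp only [tact, AlgHom.comp_apply, hu]
    rfl
  have act3 : ∀ (u a b a' b' a'' b'' : U k n q) (x : M) (y : N), Δ u = a ⊗ₜ b + a' ⊗ₜ b' + a'' ⊗ₜ b'' →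
      u • TT.mk Δ M N x y = TT.mk Δ M N (a • x) (b • y) + TT.mk Δ M N (a' • x) (b' • y)
        + TT.mk Δ M N (a'' • x) (b'' • y) := by
    intro u a b a' b' a'' b'' x y hu
    rw [hs]
    have e : TT.mk Δ M N (a • x) (b • y) + TT.mk Δ M N (a' • x) (b' • y)
        + TT.mk Δ M N (a'' • x) (b'' • y) = (((a • x) ⊗ₜ[k] (b • y) + (a' • x) ⊗ₜ[k] (b' • y)
        + (a'' • x) ⊗ₜ[k] (b'' • y) : M ⊗[k] N)) := rfl
    rw [e, ← hten, ← hten, ← hten]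
    simp only [tact, AlgHom.comp_apply, hu, map_add, LinearMap.add_apply]
    rfl
  obtain ⟨hK, hKh, hE, hF⟩ := hΔ
  have hKinv : Δ (Kinv k n q) = Kinv k n q ⊗ₜ Kinv k n q := by
    rw [Kinv, map_pow, hK, Algebra.TensorProduct.tmul_pow]
  refine ⟨tower, exists_TD H h h' (TT.mk Δ M N)
    ((h.basis H hne gen).tensorProduct (h'.basis H hne' gen')) ?_ ?_ ?_ ?_ ?_⟩
  · intro p
    refine (Module.Basis.tensorProduct_apply' _ _ p).trans ?_
    rw [SD.basis_apply, SD.basis_apply]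
    rfl
  · intro x y
    refine act _ _ _ x y ?_
    rw [gg, map_mul, hKinv, hKh, Algebra.TensorProduct.tmul_mul_tmul]
  · intro x y
    refine act _ _ _ x y ?_
    rw [hh, map_mul, map_pow, hK, hKh, Algebra.TensorProduct.tmul_pow, Algebra.TensorProduct.tmul_mul_tmul]
  · intro x y
    have := act3 _ _ _ _ _ _ _ x y hE
    rw [mul_smul, mul_smul, one_smul] at this
    exact this
  · intro x y
    have := act3 _ _ _ _ _ _ _ x y hF
    rw [mul_smul (F k n q), mul_smul (F k n q)] at this
    exact this

theorem tensor_decomp (H : Good k n q) {Δ : U k n q →ₐ[k] (U k n q ⊗[k] U k n q)} (hΔ : IsComul k n q Δ)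
    (M M' : Type) [AddCommGroup M] [Module k M] [Module (U k n q) M]
    [IsScalarTower k (U k n q) M] [SMulCommClass (U k n q) k M]
    [AddCommGroup M'] [Module k M'] [Module (U k n q) M']
    [IsScalarTower k (U k n q) M'] [SMulCommClass (U k n q) k M']
    {i₁ j₁ i₂ j₂ N : ℕ} {v : M} {v' : M'} (hv : SD n q i₁ j₁ v) (hv' : SD n q i₂ j₂ v')
    (hne : E k n q ^ (n ^ 2 - 2 * i₁) • v ≠ 0) (gen : ∀ x, x ∈ Submodule.span (U k n q) {v})
    (hne' : E k n q ^ (n ^ 2 - 2 * i₂) • v' ≠ 0) (gen' : ∀ x, x ∈ Submodule.span (U k n q) {v'})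
    (hN : n ^ 2 = 2 * N) (h1 : 1 ≤ i₁) (h3 : 1 ≤ i₂) (h7 : i₁ + i₂ ≤ N) :
    (i₁ ≤ i₂ → Nonempty ((TT Δ M M') ≃ₗ[U k n q]
      ((∀ l : Fin (2 * i₁ - 1), S k n q (N + i₁ - i₂ - l) ((j₁ + j₂ + l) % 2)) ×
      (∀ l : Fin (N - i₁ - i₂ + 1), P k n q (N - i₁ - i₂ + 1 - l) ((j₁ + j₂ + l + 1) % 2))))) ∧
    (i₂ ≤ i₁ → Nonempty ((TT Δ M M') ≃ₗ[U k n q]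
      ((∀ l : Fin (2 * i₂ - 1), S k n q (N + i₂ - i₁ - l) ((j₁ + j₂ + l) % 2)) ×
      (∀ l : Fin (N - i₂ - i₁ + 1), P k n q (N - i₂ - i₁ + 1 - l) ((j₁ + j₂ + l + 1) % 2))))) := by
  obtain ⟨tw, ⟨D⟩⟩ := exists_TD_tensor H hΔ _ _ hv hv' hne gen hne' gen'
  constructor
  · intro h
    exact D.decomp H hN h1 h h7
  · intro h
    have D' := D.swap
    rw [add_comm i₁ i₂] at D'
    exact D'.decomp H hN h3 h (by omega)

theorem final_c (H : Good k n q) {Δ : U k n q →ₐ[k] (U k n q ⊗[k] U k n q)} (hΔ : IsComul k n q Δ)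
    {i₁ i₂ j₁ j₂ N : ℕ} (hN : n ^ 2 = 2 * N) (h1 : 1 ≤ i₁) (h2 : i₁ ≤ n ^ 2 / 2) (h3 : 1 ≤ i₂) (h4 : i₂ ≤ n ^ 2 / 2)
    (h5 : j₁ ≤ 1) (h6 : j₂ ≤ 1) (h7 : i₁ + i₂ ≤ N) :
    letI := tensorModule k n q Δ (S k n q i₁ j₁) (S k n q i₂ j₂)
    (i₁ ≤ i₂ → Nonempty (((S k n q i₁ j₁) ⊗[k] (S k n q i₂ j₂)) ≃ₗ[U k n q]
      ((∀ l : Fin (2 * i₁ - 1), S k n q (N + i₁ - i₂ - l) ((j₁ + j₂ + l) % 2)) ×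
      (∀ l : Fin (N - i₁ - i₂ + 1), P k n q (N - i₁ - i₂ + 1 - l) ((j₁ + j₂ + l + 1) % 2))))) ∧
    (i₂ ≤ i₁ → Nonempty (((S k n q i₁ j₁) ⊗[k] (S k n q i₂ j₂)) ≃ₗ[U k n q]
      ((∀ l : Fin (2 * i₂ - 1), S k n q (N + i₂ - i₁ - l) ((j₁ + j₂ + l) % 2)) ×
      (∀ l : Fin (N - i₂ - i₁ + 1), P k n q (N - i₂ - i₁ + 1 - l) ((j₁ + j₂ + l + 1) % 2))))) := by
  obtain ⟨v, hv, hne, gen⟩ := S_model H h1 h2 h5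
  obtain ⟨v', hv', hne', gen'⟩ := S_model H h3 h4 h6
  exact tensor_decomp H hΔ _ _ hv hv' hne gen hne' gen' hN h1 h3 h7

end Final

end QFL



open QFL DirectSum in
/-- Theorem 4.8 (c), (d): decomposition of `S_{2i₁,j₁} ⊗ S_{2i₂,j₂}` into simples and
projectives when `2i₁-1 < n²-2i₂+1`.  (`\overline{j₁+j₂+l-1}` is encoded as
`(j₁+j₂+l+1) % 2`.) -/
theorem statement19 (k : Type) [Field k] [IsAlgClosed k] [CharZero k]
    (n : ℕ) (hn : 0 < n) (h4 : 4 ∣ n) (q : k) (hq : IsPrimitiveRoot q (n ^ 2))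
    (Δ : U k n q →ₐ[k] (U k n q ⊗[k] U k n q)) (hΔ : IsComul k n q Δ) :
    ∀ i₁ i₂ j₁ j₂ : ℕ, 1 ≤ i₁ → i₁ ≤ n ^ 2 / 2 → 1 ≤ i₂ → i₂ ≤ n ^ 2 / 2 →
      j₁ ≤ 1 → j₂ ≤ 1 → 2 * i₁ - 1 < n ^ 2 - 2 * i₂ + 1 →
      letI := tensorModule k n q Δ (S k n q i₁ j₁) (S k n q i₂ j₂)
      -- (c)
      (i₁ ≤ i₂ →
        Nonempty (((S k n q i₁ j₁) ⊗[k] (S k n q i₂ j₂)) ≃ₗ[U k n q]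
          ((⨁ l : Fin (2 * i₁ - 1),
            (S k n q (n ^ 2 / 2 + i₁ - i₂ - l) ((j₁ + j₂ + l) % 2))) ×
          (⨁ l : Fin (n ^ 2 / 2 - i₁ - i₂ + 1),
            (P k n q (n ^ 2 / 2 - i₁ - i₂ + 1 - l) ((j₁ + j₂ + l + 1) % 2)))))) ∧
      -- (d)
      (i₂ < i₁ →
        Nonempty (((S k n q i₁ j₁) ⊗[k] (S k n q i₂ j₂)) ≃ₗ[U k n q]
          ((⨁ l : Fin (2 * i₂ - 1),
            (S k n q (n ^ 2 / 2 - i₁ + i₂ - l) ((j₁ + j₂ + l) % 2))) ×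
          (⨁ l : Fin (n ^ 2 / 2 - i₁ - i₂ + 1),
            (P k n q (n ^ 2 / 2 - i₁ - i₂ + 1 - l) ((j₁ + j₂ + l + 1) % 2)))))) := by
  intro i₁ i₂ j₁ j₂ h1 h2 h3 h4' h5 h6 h7
  have H : Good k n q := ⟨hn, h4, hq⟩
  have hN : n ^ 2 = 2 * (n ^ 2 / 2) := by have := H.sixteen; omega
  have key := final_c H hΔ (j₁ := j₁) (j₂ := j₂) hN h1 h2 h3 h4' h5 h6 (by omega)
  let inst := tensorModule k n q Δ (S k n q i₁ j₁) (S k n q i₂ j₂)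
  obtain ⟨kc, kd⟩ := key
  constructor
  · intro h
    obtain ⟨e⟩ := kc h
    exact ⟨e.trans (LinearEquiv.prodCongr (DirectSum.linearEquivFunOnFintype (U k n q) _ _).symm
      (DirectSum.linearEquivFunOnFintype (U k n q) _ _).symm)⟩
  · intro h
    rw [show n ^ 2 / 2 - i₁ + i₂ = n ^ 2 / 2 + i₂ - i₁ by omega, Nat.sub_right_comm (n ^ 2 / 2) i₁ i₂]
    obtain ⟨e⟩ := kd h.le
    exact ⟨e.trans (LinearEquiv.prodCongr (DirectSum.linearEquivFunOnFintype (U k n q) _ _).symm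
      (DirectSum.linearEquivFunOnFintype (U k n q) _ _).symm)⟩
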